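/- Let n ≥ 2, k ∈ {2,…,n}, and let Ω_ℓ ⊆ ℝ^{n+1} be a compactly supported, asymptotically (k−1)-mean convex sequence of bounded open sets with C² boundary having finite total curvature, converging in volume and perimeter to a set Ω with L^{n+1}(Ω) > 0, and suppose there is M > 0 with H^n({x ∈ ∂Ω_ℓ : H_{Ω_ℓ,1}(x) ≥ M}) → 0. Then the varifold V_Ω associated with ∂*Ω has bounded mean curvature; more precisely, |δV_Ω(g)| ≤ M ∫_{∂*Ω} |g| dH^n for every g ∈ C_c^∞(ℝ^{n+1}, ℝ^{n+1}), so |h(V_Ω,x)| ≤ M for H^n-a.e. x ∈ ∂*Ω. -/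

import Mathlib

open MeasureTheory Metric Set Filter
open scoped ENNReal RealInnerProductSpace Topology

noncomputable section

/-- Ambient Euclidean space `ℝ^{n+1}`. -/
abbrev Euc (n : ℕ) : Type := EuclideanSpace ℝ (Fin (n + 1))

/-- A bounded open set in `ℝ^{n+1}` with `C²` boundary, bundled with its exterior unit
normal `nu`, an orthonormal frame `tau` of principal directions and the principal
curvatures `kappa` (in increasing order), linked to the local `C²` defining functions
through the Weingarten map (the derivative of the normalized gradient). -/
structure C2Domain (n : ℕ) where
  carrier : Set (Euc n)
  isOpen : IsOpen carrier
  bounded : Bornology.IsBounded carrier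
  nu : Euc n → Euc n
  tau : Fin n → Euc n → Euc n
  kappa : Fin n → Euc n → ℝ
  boundaryC2 : ∀ x ∈ frontier carrier, ∃ (U : Set (Euc n)) (f : Euc n → ℝ),
      IsOpen U ∧ x ∈ U ∧ ContDiff ℝ 2 f ∧ (∀ y ∈ U, gradient f y ≠ 0) ∧
      carrier ∩ U = {y ∈ U | f y < 0} ∧ frontier carrier ∩ U = {y ∈ U | f y = 0}
  frame_orthonormal : ∀ x ∈ frontier carrier,
      Orthonormal ℝ (Fin.snoc (fun j : Fin n => tau j x) (nu x) : Fin (n + 1) → Euc n)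
  frame_oriented : ∀ x ∈ frontier carrier,
      0 < (Matrix.of fun i j : Fin (n + 1) =>
        (Fin.snoc (fun l : Fin n => tau l x) (nu x) : Fin (n + 1) → Euc n) i j).det
  kappa_mono : ∀ x ∈ frontier carrier, ∀ i j : Fin n, i ≤ j → kappa i x ≤ kappa j x
  weingarten : ∀ x ∈ frontier carrier, ∀ (U : Set (Euc n)) (f : Euc n → ℝ),
      IsOpen U → x ∈ U → ContDiff ℝ 2 f → (∀ y ∈ U, gradient f y ≠ 0) →
      carrier ∩ U = {y ∈ U | f y < 0} → frontier carrier ∩ U = {y ∈ U | f y = 0} →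
      gradient f x = ‖gradient f x‖ • nu x ∧
      ∀ i : Fin n, fderiv ℝ (fun y => ‖gradient f y‖⁻¹ • gradient f y) x (tau i x)
        = kappa i x • tau i x

/-- The `k`-th mean curvature function `H_{Ω,k}`: the `k`-th elementary symmetric
polynomial of the principal curvatures (sum over increasing multi-indices, i.e. over
`k`-element subsets of `{1,…,n}`). -/
def C2Domain.H {n : ℕ} (Ω : C2Domain n) (k : ℕ) (x : Euc n) : ℝ :=
  ∑ S ∈ (Finset.univ : Finset (Fin n)).powersetCard k, ∏ i ∈ S, Ω.kappa i x

/-- The norm `A_Ω` of the second fundamental form. -/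
def C2Domain.A {n : ℕ} (Ω : C2Domain n) (x : Euc n) : ℝ :=
  Real.sqrt (∑ i : Fin n, (Ω.kappa i x) ^ 2)

/-- The negative part `f⁻ = -min{f,0}` of a real number. -/
def negp (t : ℝ) : ℝ := -(min t 0)

/-- A compactly supported sequence of domains: all contained in a fixed ball. -/
def CompactlySupportedSeq {n : ℕ} (Ω : ℕ → C2Domain n) : Prop :=
  ∃ R : ℝ, ∀ ℓ : ℕ, (Ω ℓ).carrier ⊆ ball (0 : Euc n) R

/-- A sequence of finite total curvature: `sup_ℓ ∫_{∂Ω_ℓ} A_{Ω_ℓ}^n dH^n < ∞`. -/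
def FiniteTotalCurvature {n : ℕ} (Ω : ℕ → C2Domain n) : Prop :=
  ∃ c : ℝ≥0∞, c < ⊤ ∧ ∀ ℓ : ℕ,
    (∫⁻ x in frontier (Ω ℓ).carrier, ENNReal.ofReal ((Ω ℓ).A x ^ n) ∂μH[(n : ℝ)]) ≤ c

/-- An asymptotically `k`-mean convex sequence:
`∫_{∂Ω_ℓ} (H_{Ω_ℓ,i})⁻ dH^n → 0` for `i = 1, …, k`. -/
def AsympMeanConvex {n : ℕ} (Ω : ℕ → C2Domain n) (k : ℕ) : Prop :=
  ∀ i ∈ Finset.Icc 1 k,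
    Tendsto (fun ℓ : ℕ =>
        ∫⁻ x in frontier (Ω ℓ).carrier, ENNReal.ofReal (negp ((Ω ℓ).H i x)) ∂μH[(n : ℝ)])
      atTop (nhds 0)

/-- The De Giorgi blow-up condition: the rescalings of `A` at `x` converge in measure to
the half space with exterior normal `v`. -/
def HalfSpaceBlowup {n : ℕ} (A : Set (Euc n)) (x v : Euc n) : Prop :=
  Tendsto (fun r : ℝ =>
      volume {y ∈ ball (0 : Euc n) 1 | ¬ ((x + r • y ∈ A) ↔ ⟪y, v⟫ < 0)})
    (nhdsWithin 0 (Ioi 0)) (nhds 0)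

/-- The reduced boundary `∂*A` of a set (the points admitting a measure-theoretic
exterior unit normal in the sense of De Giorgi). -/
def redBdry {n : ℕ} (A : Set (Euc n)) : Set (Euc n) :=
  {x | ∃ v : Euc n, ‖v‖ = 1 ∧ HalfSpaceBlowup A x v}

open scoped Classical in
/-- The measure-theoretic exterior unit normal `ν_A` on the reduced boundary. -/
def nuStar {n : ℕ} (A : Set (Euc n)) (x : Euc n) : Euc n :=
  if h : ∃ v : Euc n, ‖v‖ = 1 ∧ HalfSpaceBlowup A x v then h.choose else 0

/-- Convergence in volume: `1_{Ω_ℓ} → 1_A` in `L¹`. -/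
def ConvInVolume {n : ℕ} (Ω : ℕ → C2Domain n) (A : Set (Euc n)) : Prop :=
  Tendsto (fun ℓ : ℕ => volume (symmDiff (Ω ℓ).carrier A)) atTop (nhds 0)

/-- Convergence in perimeter: `H^n(∂Ω_ℓ) → H^n(∂*A)`. -/
def ConvInPerimeter {n : ℕ} (Ω : ℕ → C2Domain n) (A : Set (Euc n)) : Prop :=
  Tendsto (fun ℓ : ℕ => μH[(n : ℝ)] (frontier (Ω ℓ).carrier)) atTop
    (nhds (μH[(n : ℝ)] (redBdry A)))

/-- The divergence of a vector field on `ℝ^{n+1}`. -/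
def divg {n : ℕ} (X : Euc n → Euc n) (x : Euc n) : ℝ :=
  ∑ i : Fin (n + 1),
    ⟪fderiv ℝ X x (EuclideanSpace.single i (1 : ℝ)), EuclideanSpace.single i (1 : ℝ)⟫

/-- A set of finite perimeter in `ℝ^{n+1}` (via the Federer–De Giorgi characterization:
the measure-theoretic reduced boundary has finite `H^n`-measure and the Gauss–Green
formula holds on it). -/
def HasFinitePerimeter {n : ℕ} (A : Set (Euc n)) : Prop :=
  MeasurableSet A ∧ μH[(n : ℝ)] (redBdry A) < ⊤ ∧
  ∀ X : Euc n → Euc n, ContDiff ℝ (⊤ : ℕ∞) X → HasCompactSupport X →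
    (∫ x in A, divg X x) = ∫ x in redBdry A, ⟪X x, nuStar A x⟫ ∂μH[(n : ℝ)]

/-- The first variation `δV_A` of the integral `n`-varifold `V_A` associated with the
reduced boundary of `A`:
`δV_A(X) = ∫_{∂*A} (div_{ℝ^{n+1}} X − ⟨DX(ν_A), ν_A⟩) dH^n`. -/
def firstVar {n : ℕ} (A : Set (Euc n)) (X : Euc n → Euc n) : ℝ :=
  ∫ x in redBdry A,
    (divg X x - ⟪fderiv ℝ X x (nuStar A x), nuStar A x⟫) ∂μH[(n : ℝ)]

/-- `h` is a (bounded) generalized mean curvature vector for the varifold `V_A`: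
`h ∈ L^∞` and `δV_A(X) = ∫_{∂*A} h • X dH^n` for every smooth compactly supported
vector field `X`; i.e. `V_A` is a varifold of bounded mean curvature with
`h = h(V_A, ·)`. -/
def IsBoundedMeanCurvature {n : ℕ} (A : Set (Euc n)) (h : Euc n → Euc n) : Prop :=
  (∃ M : ℝ, ∀ᵐ x ∂(μH[(n : ℝ)].restrict (redBdry A)), ‖h x‖ ≤ M) ∧
  ∀ X : Euc n → Euc n, ContDiff ℝ (⊤ : ℕ∞) X → HasCompactSupport X →
    firstVar A X = ∫ x in redBdry A, ⟪h x, X x⟫ ∂μH[(n : ℝ)]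


/-- One-dimensional Brunn-Minkowski inequality for midpoints. -/
lemma bm_one_dim {A B C : Set ℝ} (hA : MeasurableSet A) (hB : MeasurableSet B)
    (hAn : A.Nonempty) (hBn : B.Nonempty)
    (hC : ∀ x ∈ A, ∀ y ∈ B, (x + y) / 2 ∈ C) :
    volume A + volume B ≤ 2 * volume C := by
  have key : ∀ K ⊆ A, IsCompact K → K.Nonempty → ∀ L ⊆ B, IsCompact L → L.Nonempty →
      volume K + volume L ≤ 2 * volume C := by
    intro K hKA hK hKn L hLB hL hLn
    obtain ⟨a, haK, ha⟩ := hK.exists_isGreatest hKn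
    obtain ⟨b, hbL, hb⟩ := hL.exists_isLeast hLn
    set K' : Set ℝ := (fun x => x + b) '' K with hK'
    set L' : Set ℝ := (fun x => a + x) '' L with hL'
    have vK : volume K' = volume K := by
      rw [hK']; simp [image_add_right, measure_preimage_add_right]
    have vL : volume L' = volume L := by
      rw [hL']; simp [image_add_left, measure_preimage_add]
    have hLm : MeasurableSet L' := (hL.image (by fun_prop)).measurableSet
    have hnull : volume (K' ∩ L') = 0 := by
      refine measure_mono_null (t := {a + b}) ?_ (by simp)
      rintro z ⟨⟨x, hx, rfl⟩, ⟨y, hy, hxy⟩⟩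
      have h1 := ha hx
      have h2 := hb hy
      simp only at hxy
      simp only [mem_singleton_iff]
      linarith
    have hun : volume (K' ∪ L') = volume K + volume L := by
      have := measure_union_add_inter (μ := volume) K' hLm
      rw [hnull, add_zero, vK, vL] at this
      exact this
    have hsub : K' ∪ L' ⊆ (fun x : ℝ => (1 / 2 : ℝ) * x) ⁻¹' C := by
      rintro z (⟨x, hx, rfl⟩ | ⟨y, hy, rfl⟩)
      · have := hC x (hKA hx) b (hLB hbL)
        simp only [mem_preimage]
        convert this using 1; ring
      · have := hC a (hKA haK) y (hLB hy)
        simp only [mem_preimage]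
        convert this using 1; ring
    calc volume K + volume L = volume (K' ∪ L') := hun.symm
      _ ≤ volume ((fun x : ℝ => (1 / 2 : ℝ) * x) ⁻¹' C) := measure_mono hsub
      _ = 2 * volume C := by
          rw [Real.volume_preimage_mul_left (by norm_num)]
          norm_num
  obtain ⟨a, ha⟩ := hAn
  obtain ⟨b, hb⟩ := hBn
  have key2 : ∀ K ⊆ A, IsCompact K → ∀ L ⊆ B, IsCompact L →
      volume K + volume L ≤ 2 * volume C := by
    intro K hKA hK L hLB hL
    refine le_trans (add_le_add (measure_mono (subset_insert a K)) (measure_mono (subset_insert b L)))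
      (key _ (insert_subset ha hKA) (hK.insert a) (insert_nonempty _ _) _ (insert_subset hb hLB)
        (hL.insert b) (insert_nonempty _ _))
  rw [hA.measure_eq_iSup_isCompact, hB.measure_eq_iSup_isCompact]
  have hne : ∀ S : Set ℝ, Nonempty {K : Set ℝ // K ⊆ S ∧ IsCompact K} := fun S =>
    ⟨⟨∅, empty_subset _, isCompact_empty⟩⟩
  have e : ∀ S : Set ℝ, (⨆ K, ⨆ (_ : K ⊆ S), ⨆ (_ : IsCompact K), volume K)
      = ⨆ K : {K : Set ℝ // K ⊆ S ∧ IsCompact K}, volume (K : Set ℝ) := by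
    intro S
    rw [iSup_subtype]
    simp only [iSup_and]
  rw [e, e]
  refine ENNReal.iSup_add_iSup_le ?_
  rintro ⟨K, hK1, hK2⟩ ⟨L, hL1, hL2⟩
  exact key2 K hK1 hK2 L hL1 hL2

lemma lintegral_layer {f : ℝ → ℝ≥0∞} (hf : Measurable f) (hf1 : ∀ x, f x ≤ 1) :
    ∫⁻ x, f x = ∫⁻ t in Ioo (0:ℝ) 1, volume {x | ENNReal.ofReal t < f x} := by
  have h1 : ∀ x, f x = ENNReal.ofReal ((f x).toReal) := fun x =>
    (ENNReal.ofReal_toReal ((hf1 x).trans_lt ENNReal.one_lt_top).ne).symm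
  have h2 : ∫⁻ x, f x = ∫⁻ x, ENNReal.ofReal ((f x).toReal) := by simp_rw [← h1]
  rw [h2, lintegral_eq_lintegral_meas_lt _ (Eventually.of_forall fun x => ENNReal.toReal_nonneg)
    hf.ennreal_toReal.aemeasurable]
  have h3 : ∀ t : ℝ, 0 < t → {x | t < (f x).toReal} = {x | ENNReal.ofReal t < f x} := by
    intro t ht
    ext x
    simp only [mem_ofPred_eq]
    rw [← ENNReal.ofReal_lt_iff_lt_toReal ht.le ((hf1 x).trans_lt ENNReal.one_lt_top).ne]
  have h4 : ∫⁻ t in Ioi (0:ℝ), volume {a | t < (f a).toReal}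
      = ∫⁻ t in Ioi (0:ℝ), (Ioo (0:ℝ) 1).indicator (fun t => volume {x | ENNReal.ofReal t < f x}) t := by
    refine setLIntegral_congr_fun measurableSet_Ioi ?_
    intro t ht
    simp only
    by_cases h : t < 1
    · rw [indicator_of_mem (show t ∈ Ioo (0:ℝ) 1 from ⟨ht, h⟩), h3 t ht]
    · rw [indicator_of_notMem (fun hh => h hh.2), h3 t ht]
      convert measure_empty (μ := (volume : Measure ℝ))
      ext x
      simp only [mem_ofPred_eq, mem_empty_iff_false, iff_false, not_lt]
      refine (hf1 x).trans ?_
      rw [← ENNReal.ofReal_one]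
      exact ENNReal.ofReal_le_ofReal (not_lt.1 h)
  rw [h4, lintegral_indicator measurableSet_Ioo, Measure.restrict_restrict measurableSet_Ioo]
  congr 2
  exact inter_eq_left.2 fun x hx => hx.1

lemma pl_norm {f g h : ℝ → ℝ≥0∞} (hf : Measurable f) (hg : Measurable g) (hh : Measurable h)
    (hf1 : ⨆ x, f x = 1) (hg1 : ⨆ x, g x = 1)
    (H : ∀ x y, f x * g y ≤ h ((x + y) / 2) ^ 2) :
    (∫⁻ x, f x) * (∫⁻ x, g x) ≤ (∫⁻ x, h x) ^ 2 := by
  have lf : ∀ x, f x ≤ 1 := fun x => hf1 ▸ le_iSup f x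
  have lg : ∀ x, g x ≤ 1 := fun x => hg1 ▸ le_iSup g x
  have h1 : (∫⁻ x, f x) + (∫⁻ x, g x) ≤ 2 * ∫⁻ x, h x := by
    calc (∫⁻ x, f x) + (∫⁻ x, g x)
        = ∫⁻ t in Ioo (0:ℝ) 1, (volume {x | ENNReal.ofReal t < f x}
            + volume {x | ENNReal.ofReal t < g x}) := by
          rw [lintegral_layer hf lf, lintegral_layer hg lg, lintegral_add_left]
          apply Antitone.measurable
          intro s t hst
          exact measure_mono fun x hx => (ENNReal.ofReal_le_ofReal hst).trans_lt hx
      _ ≤ ∫⁻ t in Ioo (0:ℝ) 1, 2 * volume {x | ENNReal.ofReal t < min (h x) 1} := by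
          refine setLIntegral_mono' measurableSet_Ioo ?_
          intro t ht
          have ht1 : ENNReal.ofReal t < 1 := by
            rw [← ENNReal.ofReal_one]; exact (ENNReal.ofReal_lt_ofReal_iff (by norm_num)).2 ht.2
          apply bm_one_dim (measurableSet_lt measurable_const hf) (measurableSet_lt measurable_const hg)
          · rw [← hf1] at ht1; exact lt_iSup_iff.1 ht1
          · rw [← hg1] at ht1; exact lt_iSup_iff.1 ht1
          · intro x hx y hy
            simp only [mem_ofPred_eq] at *
            refine lt_min ?_ ht1
            by_contra hcon
            push Not at hcon
            have : f x * g y ≤ ENNReal.ofReal t ^ 2 := (H x y).trans (by gcongr)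
            have h3 : ENNReal.ofReal t ^ 2 < f x * g y := by
              rw [sq]; exact ENNReal.mul_lt_mul hx hy
            exact absurd this (not_le.2 h3)
      _ = 2 * ∫⁻ x, min (h x) 1 := by
          rw [lintegral_const_mul' _ _ (by norm_num), lintegral_layer (hh.min measurable_const)
            (fun x => min_le_right _ _)]
      _ ≤ 2 * ∫⁻ x, h x := by gcongr; exact min_le_left _ _
  generalize (∫⁻ x, f x) = F at *
  generalize (∫⁻ x, g x) = G at *
  generalize (∫⁻ x, h x) = K at *
  by_cases hK : K = ⊤
  · simp [hK]
  have hF : F ≠ ⊤ := by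
    rintro rfl
    simp at h1
    exact hK (by simpa [ENNReal.mul_eq_top] using h1)
  have hG : G ≠ ⊤ := by
    rintro rfl
    simp at h1
    exact hK (by simpa [ENNReal.mul_eq_top] using h1)
  lift F to NNReal using hF
  lift G to NNReal using hG
  lift K to NNReal using hK
  norm_cast at *
  have h2 : (F:ℝ) + G ≤ 2 * K := by exact_mod_cast h1
  have : (F:ℝ) * G ≤ K ^ 2 := by
    nlinarith [sq_nonneg ((F:ℝ) - G), F.2, G.2, K.2, mul_self_le_mul_self (add_nonneg F.2 G.2) h2]
  exact_mod_cast this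

lemma pl_bdd {f g h : ℝ → ℝ≥0∞} (hf : Measurable f) (hg : Measurable g) (hh : Measurable h)
    (hf1 : ⨆ x, f x ≠ ⊤) (hg1 : ⨆ x, g x ≠ ⊤)
    (H : ∀ x y, f x * g y ≤ h ((x + y) / 2) ^ 2) :
    (∫⁻ x, f x) * (∫⁻ x, g x) ≤ (∫⁻ x, h x) ^ 2 := by
  set a := ⨆ x, f x with ha
  set b := ⨆ x, g x with hb
  by_cases ha0 : a = 0
  · have : ∀ x, f x = 0 := fun x => le_antisymm (ha0 ▸ le_iSup f x) bot_le
    simp [this]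
  by_cases hb0 : b = 0
  · have : ∀ x, g x = 0 := fun x => le_antisymm (hb0 ▸ le_iSup g x) bot_le
    simp [this]
  set c := (a * b) ^ (1/2 : ℝ) with hc
  have hcc : c ^ 2 = a * b := by
    rw [hc, ← ENNReal.rpow_natCast, ← ENNReal.rpow_mul]; norm_num
  have hab0 : a * b ≠ 0 := mul_ne_zero ha0 hb0
  have habt : a * b ≠ ⊤ := ENNReal.mul_ne_top hf1 hg1
  have hc0 : c ≠ 0 := by
    intro h0; rw [h0] at hcc; exact hab0 (by rw [← hcc]; simp)
  have hct : c ≠ ⊤ := by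
    intro h0; rw [h0] at hcc; exact habt (by rw [← hcc]; simp)
  have := pl_norm (f := fun x => a⁻¹ * f x) (g := fun x => b⁻¹ * g x) (h := fun x => c⁻¹ * h x)
    (hf.const_mul _) (hg.const_mul _) (hh.const_mul _)
    (by rw [← ENNReal.mul_iSup, ← ha, ENNReal.inv_mul_cancel ha0 hf1])
    (by rw [← ENNReal.mul_iSup, ← hb, ENNReal.inv_mul_cancel hb0 hg1]) (by
      intro x y
      calc a⁻¹ * f x * (b⁻¹ * g y) = (a * b)⁻¹ * (f x * g y) := by
            rw [ENNReal.mul_inv (Or.inl ha0) (Or.inl hf1)]; ring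
        _ ≤ (c ^ 2)⁻¹ * h ((x + y) / 2) ^ 2 := by rw [hcc]; gcongr; exact H x y
        _ = _ := by rw [mul_pow, ENNReal.inv_pow])
  rw [lintegral_const_mul _ hf, lintegral_const_mul _ hg, lintegral_const_mul _ hh] at this
  have h2 : a⁻¹ * (∫⁻ x, f x) * (b⁻¹ * ∫⁻ x, g x) = (a*b)⁻¹ * ((∫⁻ x, f x) * ∫⁻ x, g x) := by
    rw [ENNReal.mul_inv (Or.inl ha0) (Or.inl hf1)]; ring
  rw [h2, mul_pow, ← ENNReal.inv_pow, hcc] at this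
  calc (∫⁻ x, f x) * (∫⁻ x, g x) = (a * b) * ((a*b)⁻¹ * ((∫⁻ x, f x) * ∫⁻ x, g x)) := by
        rw [← mul_assoc, ENNReal.mul_inv_cancel hab0 habt, one_mul]
    _ ≤ (a * b) * ((a*b)⁻¹ * (∫⁻ x, h x) ^ 2) := by gcongr
    _ = _ := by rw [← mul_assoc, ENNReal.mul_inv_cancel hab0 habt, one_mul]

lemma pl_one {f g h : ℝ → ℝ≥0∞} (hf : Measurable f) (hg : Measurable g) (hh : Measurable h)
    (H : ∀ x y, f x * g y ≤ h ((x + y) / 2) ^ 2) :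
    (∫⁻ x, f x) * (∫⁻ x, g x) ≤ (∫⁻ x, h x) ^ 2 := by
  have hmono : ∀ (f : ℝ → ℝ≥0∞), Measurable f → ∫⁻ x, f x = ⨆ k : ℕ, ∫⁻ x, min (f x) k := by
    intro f hf
    rw [← lintegral_iSup (fun k => hf.min measurable_const)]
    · congr 1; ext x
      rw [← inf_iSup_eq, ENNReal.iSup_natCast, inf_top_eq]
    · intro i j hij x
      exact min_le_min le_rfl (by exact_mod_cast hij)
  rw [hmono f hf, hmono g hg]
  rw [ENNReal.iSup_mul]
  refine iSup_le fun j => ?_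
  rw [ENNReal.mul_iSup]
  refine iSup_le fun k => pl_bdd (hf.min measurable_const) (hg.min measurable_const) hh ?_ ?_ ?_
  · exact ((iSup_le fun x => min_le_right _ _).trans_lt (ENNReal.natCast_lt_top _)).ne
  · exact ((iSup_le fun x => min_le_right _ _).trans_lt (ENNReal.natCast_lt_top _)).ne
  · intro x y
    exact (mul_le_mul' (min_le_left _ _) (min_le_left _ _)).trans (H x y)

lemma pl_pi : ∀ (n : ℕ) {f g h : (Fin n → ℝ) → ℝ≥0∞}, Measurable f → Measurable g → Measurable h →
    (∀ x y, f x * g y ≤ h ((2⁻¹ : ℝ) • (x + y)) ^ 2) →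
    (∫⁻ x, f x) * (∫⁻ x, g x) ≤ (∫⁻ x, h x) ^ 2
  | 0, f, g, h, hf, hg, hh, H => by
      rw [volume_pi, Measure.pi_of_empty]
      simp only [lintegral_dirac]
      convert H _ _ using 2
      congr 1
      exact Subsingleton.elim _ _
  | n + 1, f, g, h, hf, hg, hh, H => by
      have hcc : ∀ p : ℝ × (Fin n → ℝ), (MeasurableEquiv.piFinSuccAbove (fun _ : Fin (n+1) => ℝ) 0).symm p
          = Fin.cons p.1 p.2 := by
        intro p
        simp [MeasurableEquiv.piFinSuccAbove, Fin.insertNthEquiv]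
      have hsplit : ∀ F : (Fin (n+1) → ℝ) → ℝ≥0∞, Measurable F →
          ∫⁻ x, F x = ∫⁻ t : ℝ, ∫⁻ y : Fin n → ℝ, F (Fin.cons t y) := by
        intro F hF
        have mp := (volume_preserving_piFinSuccAbove (fun _ : Fin (n+1) => ℝ) 0).symm
        rw [← mp.lintegral_comp hF, Measure.volume_eq_prod, lintegral_prod]
        · simp only [hcc]
        · exact (hF.comp (MeasurableEquiv.measurable _)).aemeasurable
      have hcons : Measurable (fun p : ℝ × (Fin n → ℝ) => (Fin.cons p.1 p.2 : Fin (n+1) → ℝ)) := by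
        simp only [← hcc]
        exact (MeasurableEquiv.piFinSuccAbove (fun _ : Fin (n+1) => ℝ) 0).symm.measurable
      have hm : ∀ F : (Fin (n+1) → ℝ) → ℝ≥0∞, Measurable F →
          Measurable (fun t : ℝ => ∫⁻ y : Fin n → ℝ, F (Fin.cons t y)) := by
        intro F hF
        exact Measurable.lintegral_prod_right' (hF.comp hcons)
      rw [hsplit f hf, hsplit g hg, hsplit h hh]
      refine pl_one (hm f hf) (hm g hg) (hm h hh) ?_
      intro s t
      refine pl_pi n (hf.comp (hcons.comp measurable_prodMk_left))
        (hg.comp (hcons.comp measurable_prodMk_left)) (hh.comp (hcons.comp measurable_prodMk_left)) ?_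
      intro x y
      refine (H (Fin.cons s x) (Fin.cons t y)).trans (le_of_eq ?_)
      congr 2
      ext i
      refine Fin.cases ?_ (fun j => ?_) i
      · simp; ring
      · simp; ring

/-- Isodiametric inequality. -/
lemma isodiametric (n : ℕ) (A : Set (EuclideanSpace ℝ (Fin n))) (d : ℝ) (hd : 0 ≤ d)
    (hA : ∀ x ∈ A, ∀ y ∈ A, dist x y ≤ d) :
    volume A ≤ volume (closedBall (0 : EuclideanSpace ℝ (Fin n)) (d / 2)) := by
  wlog hAc : IsClosed A with Hw
  · refine (measure_mono subset_closure).trans (Hw n (closure A) d hd ?_ isClosed_closure)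
    intro x hx y hy
    have hb : Bornology.IsBounded A := Metric.isBounded_iff.2 ⟨d, fun x hx y hy => hA x hx y hy⟩
    refine (Metric.dist_le_diam_of_mem hb.closure hx hy).trans ?_
    rw [Metric.diam_closure]
    exact Metric.diam_le_of_forall_dist_le hd hA
  have hAm := hAc.measurableSet
  set ι := (MeasurableEquiv.toLp 2 (Fin n → ℝ)) with hι
  have mp : MeasurePreserving ι volume volume :=
    (EuclideanSpace.volume_preserving_symm_measurableEquiv_toLp (Fin n)).symm
  set B := closedBall (0 : EuclideanSpace ℝ (Fin n)) (d / 2) with hB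
  have hBm : MeasurableSet B := measurableSet_closedBall
  have key := pl_pi n (f := fun x => A.indicator 1 (ι x)) (g := fun x => A.indicator 1 (- ι x))
    (h := fun x => B.indicator 1 (ι x))
    ((measurable_one.indicator hAm).comp ι.measurable)
    ((measurable_one.indicator hAm).comp ι.measurable.neg)
    ((measurable_one.indicator hBm).comp ι.measurable) (by
      intro x y
      by_cases hx : ι x ∈ A
      swap; · simp [hx]
      by_cases hy : - ι y ∈ A
      swap; · simp [hy]
      have hz : ι ((2⁻¹ : ℝ) • (x + y)) ∈ B := by
        have e : ι ((2⁻¹ : ℝ) • (x + y)) = (2⁻¹ : ℝ) • (ι x - (- ι y)) := by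
          rw [sub_neg_eq_add]; rfl
        have := hA _ hx _ hy
        rw [e, hB, mem_closedBall_zero_iff, norm_smul, ← dist_eq_norm]
        norm_num
        linarith
      rw [indicator_of_mem hx, indicator_of_mem hy, indicator_of_mem hz]; simp)
  have e1 : ∀ S : Set (EuclideanSpace ℝ (Fin n)), MeasurableSet S →
      ∫⁻ x, S.indicator (1 : EuclideanSpace ℝ (Fin n) → ℝ≥0∞) (ι x) = volume S := by
    intro S hS
    rw [mp.lintegral_comp (measurable_one.indicator hS), lintegral_indicator_one hS]
  have e2 : ∫⁻ x, A.indicator (1 : EuclideanSpace ℝ (Fin n) → ℝ≥0∞) (- ι x) = volume A := by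
    rw [mp.lintegral_comp (f := fun z => A.indicator 1 (-z)) ((measurable_one.indicator hAm).comp measurable_neg)]
    rw [lintegral_neg_eq_self, lintegral_indicator_one hAm]
  rw [e1 A hAm, e1 B hBm, e2] at key
  by_contra hcon
  push Not at hcon
  rw [sq] at key
  exact absurd key (not_le.2 (ENNReal.mul_lt_mul hcon hcon))

/-- Ratio between the (unnormalized) Hausdorff measure and Lebesgue measure. -/
noncomputable def kap (n : ℕ) : NNReal :=
  Measure.addHaarScalarFactor (μH[(n:ℝ)] : Measure (EuclideanSpace ℝ (Fin n))) volume

lemma kap_spec (n : ℕ) : (μH[(n:ℝ)] : Measure (EuclideanSpace ℝ (Fin n))) = kap n • volume :=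
  Measure.isAddLeftInvariant_eq_smul _ _

lemma kap_ball (n : ℕ) :
    (2:ℝ≥0∞) ^ n ≤ (kap n : ℝ≥0∞) * volume (closedBall (0 : EuclideanSpace ℝ (Fin n)) 1) := by
  set ω := volume (closedBall (0 : EuclideanSpace ℝ (Fin n)) 1) with hω
  have hω0 : ω ≠ 0 := (measure_closedBall_pos volume _ one_pos).ne'
  have hωt : ω ≠ ⊤ := measure_closedBall_lt_top.ne
  have hle : (2 ^ n * ω⁻¹) • (volume : Measure (EuclideanSpace ℝ (Fin n))) ≤ μH[(n:ℝ)] := by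
    refine Measure.le_hausdorffMeasure _ _ 1 one_pos ?_
    intro s hs
    have hst : ediam s ≠ ⊤ := (hs.trans_lt ENNReal.one_lt_top).ne
    have h1 := isodiametric n s (ediam s).toReal ENNReal.toReal_nonneg (by
      intro x hx y hy
      rw [dist_edist]
      exact ENNReal.toReal_mono hst (edist_le_ediam_of_mem hx hy))
    have h2 : volume (closedBall (0 : EuclideanSpace ℝ (Fin n)) ((ediam s).toReal / 2))
        = ENNReal.ofReal (((ediam s).toReal / 2) ^ n) * ω := by
      have := Measure.addHaar_closedBall' (volume : Measure (EuclideanSpace ℝ (Fin n))) 0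
        (r := (ediam s).toReal / 2) (by positivity)
      simpa using this
    rw [h2] at h1
    calc ((2 ^ n * ω⁻¹) • (volume : Measure (EuclideanSpace ℝ (Fin n)))) s
        = 2 ^ n * ω⁻¹ * volume s := rfl
      _ ≤ 2 ^ n * ω⁻¹ * (ENNReal.ofReal (((ediam s).toReal / 2) ^ n) * ω) := by gcongr
      _ = (2 ^ n * ENNReal.ofReal (((ediam s).toReal / 2) ^ n)) * (ω⁻¹ * ω) := by ring
      _ = ediam s ^ (n:ℝ) := by
        rw [ENNReal.inv_mul_cancel hω0 hωt, mul_one, ENNReal.rpow_natCast]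
        rw [show (2:ℝ≥0∞) ^ n = ENNReal.ofReal (2 ^ n) by
          rw [ENNReal.ofReal_pow (by norm_num)]; norm_num]
        rw [← ENNReal.ofReal_mul (by positivity), ← mul_pow]
        rw [mul_div_cancel₀ _ (by norm_num : (2:ℝ) ≠ 0), ENNReal.ofReal_pow ENNReal.toReal_nonneg,
          ENNReal.ofReal_toReal hst]
  have := hle (closedBall (0 : EuclideanSpace ℝ (Fin n)) 1)
  rw [kap_spec] at this
  simp only [Measure.smul_apply, smul_eq_mul, ← hω] at this
  rw [mul_assoc, ENNReal.inv_mul_cancel hω0 hωt, mul_one] at this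
  exact this

lemma kap_pos (n : ℕ) : 0 < kap n := by
  rw [pos_iff_ne_zero]
  intro h
  have := kap_ball n
  rw [h] at this
  simp at this

/-- Density comparison between a measure and Hausdorff measure. -/
lemma hausdorff_le_of_density {E : Type*} [NormedAddCommGroup E] [NormedSpace ℝ E]
    [FiniteDimensional ℝ E] [MeasurableSpace E] [BorelSpace E] (n : ℕ)
    (τ : Measure E) [IsFiniteMeasure τ] (T : Set E) (c : ℝ≥0∞)
    (hct : c ≠ ⊤)
    (h : ∀ x ∈ T, ∀ δ > 0, ∃ r ∈ Ioo (0:ℝ) δ, c * ENNReal.ofReal (2 * r) ^ n ≤ τ (closedBall x r)) :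
    c * μH[(n:ℝ)] T ≤ τ T := by
  have step : ∀ k : ℕ, ∃ (t : Set E) (r : E → ℝ), t.Countable ∧ t ⊆ T ∧
      (∀ x ∈ t, r x ∈ {r : ℝ | 0 < r ∧ r < 1 / (k + 1 : ℝ) ∧
        c * ENNReal.ofReal (2 * r) ^ n ≤ τ (closedBall x r)}) ∧
      T ⊆ ⋃ x ∈ t, closedBall x (r x) ∧
      ∑' x : t, τ (closedBall (x:E) (r x)) ≤ τ T + ENNReal.ofReal (1 / (k + 1 : ℝ)) := by
    intro k
    refine Besicovitch.exists_closedBall_covering_tsum_measure_le τ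
      (by simp; positivity) (fun x => {r : ℝ | 0 < r ∧ r < 1 / (k + 1 : ℝ) ∧
        c * ENNReal.ofReal (2 * r) ^ n ≤ τ (closedBall x r)}) T ?_
    intro x hx δ hδ
    obtain ⟨r, hr, hr2⟩ := h x hx (min δ (1 / (k + 1 : ℝ))) (by positivity)
    exact ⟨r, ⟨hr.1, hr.2.trans_le (min_le_right _ _), hr2⟩, hr.1, hr.2.trans_le (min_le_left _ _)⟩
  choose t r htc htT hr hcov hsum using step
  have hcnt : ∀ k, Countable (t k) := fun k => (htc k).to_subtype
  have hediam : ∀ k (x : t k), ediam (closedBall (x:E) (r k x)) ≤ ENNReal.ofReal (2 * r k x) := by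
    intro k x
    refine Metric.ediam_le_of_forall_dist_le ?_
    intro y hy z hz
    have := dist_triangle_right y z (x:E)
    rw [mem_closedBall] at hy hz
    linarith
  have hlim : Tendsto (fun k : ℕ => ENNReal.ofReal (2 * (1 / (k + 1 : ℝ)))) atTop (𝓝 0) := by
    have := (tendsto_one_div_add_atTop_nhds_zero_nat (𝕜 := ℝ)).const_mul 2
    rw [mul_zero] at this
    simpa using ENNReal.tendsto_ofReal this
  have hlim' : Tendsto (fun k : ℕ => ENNReal.ofReal (1 / (k + 1 : ℝ))) atTop (𝓝 0) := by
    simpa using ENNReal.tendsto_ofReal (tendsto_one_div_add_atTop_nhds_zero_nat (𝕜 := ℝ))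
  have h1 := Measure.hausdorffMeasure_le_liminf_tsum (n:ℝ) T (l := atTop) _ hlim
    (fun k (x : t k) => closedBall (x:E) (r k x))
    (Eventually.of_forall fun k x => (hediam k x).trans
      (ENNReal.ofReal_le_ofReal (by have := (hr k x x.2).2.1; linarith)))
    (Eventually.of_forall fun k => by
      have := hcov k
      rwa [biUnion_eq_iUnion] at this)
  have h2 : ∀ k, c * ∑' x : t k, ediam (closedBall (x:E) (r k x)) ^ (n:ℝ)
      ≤ τ T + ENNReal.ofReal (1 / (k + 1 : ℝ)) := by
    intro k
    rw [← ENNReal.tsum_mul_left]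
    refine le_trans (ENNReal.tsum_le_tsum fun x => ?_) (hsum k)
    refine le_trans ?_ (hr k x x.2).2.2
    rw [ENNReal.rpow_natCast]
    gcongr
    exact hediam k x
  calc c * μH[(n:ℝ)] T
      ≤ c * liminf (fun k => ∑' x : t k, ediam (closedBall (x:E) (r k x)) ^ (n:ℝ)) atTop := by gcongr
    _ = liminf (fun k => c * ∑' x : t k, ediam (closedBall (x:E) (r k x)) ^ (n:ℝ)) atTop :=
        (ENNReal.liminf_const_mul_of_ne_top hct).symm
    _ ≤ liminf (fun k : ℕ => τ T + ENNReal.ofReal (1 / (k + 1 : ℝ))) atTop :=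
        liminf_le_liminf (Eventually.of_forall h2)
    _ = τ T := by
        have := (tendsto_const_nhds (x := τ T)).add hlim'
        rw [add_zero] at this
        exact this.liminf_eq

/-- Orthogonal coordinates adapted to a unit vector `e`. -/
structure Crd {n : ℕ} (e : Euc n) where
  J : EuclideanSpace ℝ (Fin n) →ₗᵢ[ℝ] Euc n
  pr : Euc n →L[ℝ] EuclideanSpace ℝ (Fin n)
  decomp : ∀ x, ⟪x, e⟫ • e + J (pr x) = x
  inner_J : ∀ y, ⟪J y, e⟫ = 0
  pr_J : ∀ y, pr (J y) = y
  pr_e : pr e = 0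
  pr_le : ∀ x, ‖pr x‖ ≤ ‖x‖
  mp : MeasurePreserving (fun p : ℝ × EuclideanSpace ℝ (Fin n) => p.1 • e + J p.2) volume volume

lemma exists_crd {n : ℕ} (e : Euc n) (he : ‖e‖ = 1) : Nonempty (Crd e) := by
  obtain ⟨b, hb⟩ : ∃ b : OrthonormalBasis (Fin (n+1)) ℝ (Euc n), b 0 = e := by
    obtain ⟨b, hb⟩ := Orthonormal.exists_orthonormalBasis_extension_of_card_eq (𝕜 := ℝ) (E := Euc n)
      (ι := Fin (n+1)) (by simp) (v := fun _ => e) (s := {0}) (by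
        rw [orthonormal_iff_ite]
        rintro ⟨i, hi⟩ ⟨j, hj⟩
        simp only [mem_singleton_iff] at hi hj
        subst hi; subst hj
        simp [he])
    exact ⟨b, hb 0 rfl⟩
  let c : ℝ × EuclideanSpace ℝ (Fin n) → Euc n := fun p =>
    WithLp.toLp 2 (Fin.cons p.1 (fun i => p.2 i) : Fin (n+1) → ℝ)
  let J0 : EuclideanSpace ℝ (Fin n) →ₗ[ℝ] Euc n :=
    { toFun := fun y => c (0, y)
      map_add' := by
        intro x y
        ext i
        refine Fin.cases ?_ (fun j => ?_) i <;> simp [c]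
      map_smul' := by
        intro a y
        ext i
        refine Fin.cases ?_ (fun j => ?_) i <;> simp [c] }
  have hJ0 : ∀ y, ‖J0 y‖ = ‖y‖ := by
    intro y
    rw [EuclideanSpace.norm_eq, EuclideanSpace.norm_eq, Fin.sum_univ_succ]
    simp [J0, c]
  let J1 : EuclideanSpace ℝ (Fin n) →ₗᵢ[ℝ] Euc n := ⟨J0, hJ0⟩
  let J : EuclideanSpace ℝ (Fin n) →ₗᵢ[ℝ] Euc n := b.repr.symm.toLinearIsometry.comp J1
  let p0 : Euc n →ₗ[ℝ] EuclideanSpace ℝ (Fin n) :=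
    { toFun := fun x => WithLp.toLp 2 (fun i : Fin n => x i.succ)
      map_add' := by intro x y; ext i; simp
      map_smul' := by intro a y; ext i; simp }
  let pr : Euc n →L[ℝ] EuclideanSpace ℝ (Fin n) :=
    p0.toContinuousLinearMap.comp (b.repr.toContinuousLinearEquiv : Euc n →L[ℝ] Euc n)
  have hre : b.repr e = EuclideanSpace.single 0 1 := by rw [← hb]; exact b.repr_self 0
  have hinner : ∀ x, ⟪x, e⟫ = b.repr x 0 := by
    intro x
    rw [b.repr_apply_apply, hb, real_inner_comm]
  have hc : ∀ t y, t • e + J y = b.repr.symm (c (t, y)) := by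
    intro t y
    apply b.repr.injective
    simp only [map_add, map_smul, hre, J, LinearIsometry.comp_apply,
      LinearIsometryEquiv.coe_toLinearIsometry, LinearIsometryEquiv.apply_symm_apply]
    ext i
    refine Fin.cases ?_ (fun j => ?_) i <;> simp [J1, J0, c]
  refine ⟨{ J := J, pr := pr, decomp := ?_, inner_J := ?_, pr_J := ?_, pr_e := ?_, pr_le := ?_, mp := ?_ }⟩
  · intro x
    rw [hc]
    apply b.repr.injective
    rw [LinearIsometryEquiv.apply_symm_apply]
    ext i
    refine Fin.cases ?_ (fun j => ?_) i <;> simp [c, hinner, pr, p0]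
  · intro y
    rw [hinner]
    simp [J, J1, J0, c]
  · intro y
    ext i
    simp [pr, J, J1, J0, c, p0]
  · ext i
    simp [pr, p0, hre]
  · intro x
    rw [← b.repr.norm_map x, EuclideanSpace.norm_eq, EuclideanSpace.norm_eq]
    refine Real.sqrt_le_sqrt ?_
    rw [Fin.sum_univ_succ (n := n)]
    simp only [pr, p0]
    simp
    positivity
  · simp only [hc]
    have hcc : ∀ p : ℝ × (Fin n → ℝ), (MeasurableEquiv.piFinSuccAbove (fun _ : Fin (n+1) => ℝ) 0).symm p
          = Fin.cons p.1 p.2 := by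
        intro p
        simp [MeasurableEquiv.piFinSuccAbove, Fin.insertNthEquiv]
    have m1 := b.measurePreserving_repr.symm (e := b.repr.toHomeomorph.toMeasurableEquiv)
    have m2 : MeasurePreserving (MeasurableEquiv.toLp 2 (Fin (n+1) → ℝ)) volume volume :=
      (EuclideanSpace.volume_preserving_symm_measurableEquiv_toLp (Fin (n+1))).symm
    have m3 := (volume_preserving_piFinSuccAbove (fun _ : Fin (n+1) => ℝ) 0).symm
    have m4 : MeasurePreserving (MeasurableEquiv.toLp 2 (Fin n → ℝ)).symm volume volume :=
      (EuclideanSpace.volume_preserving_symm_measurableEquiv_toLp (Fin n))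
    have m5 := (MeasurePreserving.id (volume : Measure ℝ)).prod m4
    have := m1.comp (m2.comp (m3.comp m5))
    have heq : (fun p : ℝ × EuclideanSpace ℝ (Fin n) => b.repr.symm (c (p.1, p.2))) =
      (b.repr.toHomeomorph.toMeasurableEquiv.symm ∘
      (MeasurableEquiv.toLp 2 (Fin (n + 1) → ℝ)) ∘
        (MeasurableEquiv.piFinSuccAbove (fun _ : Fin (n+1) => ℝ) 0).symm ∘
          Prod.map id (MeasurableEquiv.toLp 2 (Fin n → ℝ)).symm) := by
      funext p
      rw [Function.comp_apply, Function.comp_apply, Function.comp_apply, hcc]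
      rfl
    rw [heq]
    exact this

lemma Crd.lip {n : ℕ} {e : Euc n} (C : Crd e) : LipschitzWith 1 C.pr := by
  refine LipschitzWith.of_dist_le_mul fun x y => ?_
  rw [dist_eq_norm, dist_eq_norm, ← map_sub]
  simpa using C.pr_le (x - y)

lemma divg_smul {n : ℕ} {w : Euc n → ℝ} {X : Euc n → Euc n} {x : Euc n}
    (hw : DifferentiableAt ℝ w x) (hX : DifferentiableAt ℝ X x) :
    divg (fun y => w y • X y) x = w x * divg X x + fderiv ℝ w x (X x) := by
  unfold divg
  rw [show (fun y => w y • X y) = w • X from rfl, fderiv_smul hw hX, Finset.mul_sum]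
  have h : fderiv ℝ w x (X x) = ∑ i : Fin (n+1), X x i * fderiv ℝ w x (EuclideanSpace.single i 1) := by
    have h1 : X x = ∑ i : Fin (n+1), X x i • EuclideanSpace.single i (1:ℝ) := by
      ext j
      simp [Finset.sum_apply, Pi.single_apply]
    conv_lhs => rw [h1, map_sum]
    simp
  rw [h, ← Finset.sum_add_distrib]
  refine Finset.sum_congr rfl fun i _ => ?_
  simp [inner_add_left, inner_smul_left, EuclideanSpace.inner_single_right]
  ring

lemma divg_smul_const {n : ℕ} {w : Euc n → ℝ} {x : Euc n} (e : Euc n)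
    (hw : DifferentiableAt ℝ w x) :
    divg (fun y => w y • e) x = fderiv ℝ w x e := by
  rw [divg_smul hw (differentiableAt_const e)]
  simp [divg]

lemma divg_add {n : ℕ} {X Y : Euc n → Euc n} {x : Euc n}
    (hX : DifferentiableAt ℝ X x) (hY : DifferentiableAt ℝ Y x) :
    divg (fun y => X y + Y y) x = divg X x + divg Y x := by
  unfold divg
  rw [fderiv_fun_add hX hY, ← Finset.sum_add_distrib]
  simp [inner_add_left]

lemma divg_continuous {n : ℕ} {X : Euc n → Euc n} (hX : ContDiff ℝ 1 X) : Continuous (divg X) := by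
  unfold divg
  have := hX.continuous_fderiv (by norm_num)
  fun_prop

lemma divg_support {n : ℕ} {X : Euc n → Euc n} {x : Euc n} (hx : x ∉ tsupport X) : divg X x = 0 := by
  unfold divg
  have : fderiv ℝ X x = 0 := by
    by_contra h
    exact hx (support_fderiv_subset ℝ h)
  simp [this]

lemma divg_compact {n : ℕ} {X : Euc n → Euc n} (h : HasCompactSupport X) :
    HasCompactSupport (divg X) :=
  HasCompactSupport.intro h fun _ hx => divg_support hx

lemma integral_fderiv_zero {n : ℕ} {u : Euc n → ℝ} (hu : ContDiff ℝ 1 u) (hc : HasCompactSupport u)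
    (e : Euc n) : ∫ x, fderiv ℝ u x e = 0 := by
  have hcont : Continuous (fun x => fderiv ℝ u x e) :=
    (hu.continuous_fderiv (by norm_num)).clm_apply continuous_const
  have hcs : HasCompactSupport (fun x => fderiv ℝ u x e) := (hc.fderiv (𝕜 := ℝ)).comp_left
    (g := fun L : Euc n →L[ℝ] ℝ => L e) (by simp)
  have := integral_mul_fderiv_eq_neg_fderiv_mul_of_integrable (μ := (volume : Measure (Euc n)))
    (f := fun _ => (1:ℝ)) (g := u) (v := e) (by simp) (by simpa using hcont.integrable_of_hasCompactSupport hcs)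
    (by simpa using hu.continuous.integrable_of_hasCompactSupport hc)
    (fun x _ => by fun_prop) (fun x _ => hu.differentiable (by norm_num) x)
  simpa using this

lemma integral_divg_zero {n : ℕ} {X : Euc n → Euc n} (hX : ContDiff ℝ 1 X)
    (hc : HasCompactSupport X) : ∫ x, divg X x = 0 := by
  have h : ∀ (i : Fin (n+1)) x, ⟪fderiv ℝ X x (EuclideanSpace.single i (1 : ℝ)), EuclideanSpace.single i (1 : ℝ)⟫
      = fderiv ℝ (fun y => X y i) x (EuclideanSpace.single i (1 : ℝ)) := by
    intro i x
    have hd := (hX.differentiable (by norm_num)) x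
    have : (fun y => X y i) = (EuclideanSpace.proj i : Euc n →L[ℝ] ℝ) ∘ X := rfl
    rw [this, fderiv_comp x (by fun_prop) hd, ContinuousLinearMap.fderiv]
    simp [EuclideanSpace.inner_single_right]
  unfold divg
  simp_rw [h]
  have hXi : ∀ i, ContDiff ℝ 1 (fun y => X y i) := fun i =>
    (EuclideanSpace.proj i : Euc n →L[ℝ] ℝ).contDiff.comp hX
  have hci : ∀ i, HasCompactSupport (fun y => X y i) := fun i => hc.comp_left (g := fun v : Euc n => v i) rfl
  rw [integral_finsetSum]
  · exact Finset.sum_eq_zero fun i _ => integral_fderiv_zero (hXi i) (hci i) _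
  · intro i _
    refine Continuous.integrable_of_hasCompactSupport ?_ ?_
    · exact ((hXi i).continuous_fderiv (by norm_num)).clm_apply continuous_const
    · exact ((hci i).fderiv (𝕜 := ℝ)).comp_left
        (g := fun L : Euc n →L[ℝ] ℝ => L (EuclideanSpace.single i (1 : ℝ))) (by simp)

/-- Fubini and the fundamental theorem of calculus along the lines of direction `e`. -/
lemma fubini_graph {n : ℕ} {e : Euc n} (C : Crd e) (x0 : Euc n) {u : Euc n → ℝ} (hu : ContDiff ℝ 1 u)
    (hc : HasCompactSupport u) {S : Set (Euc n)} (hS : MeasurableSet S)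
    {D : Set (EuclideanSpace ℝ (Fin n))} (hD : MeasurableSet D) (φ : EuclideanSpace ℝ (Fin n) → ℝ)
    (h1 : ∀ y ∈ D, ∀ t : ℝ, fderiv ℝ u (x0 + (t • e + C.J y)) e ≠ 0 →
      (x0 + (t • e + C.J y) ∈ S ↔ t < φ y))
    (h2 : ∀ y ∉ D, ∀ t : ℝ, fderiv ℝ u (x0 + (t • e + C.J y)) e = 0) (hne : e ≠ 0) :
    ∫ x in S, fderiv ℝ u x e = ∫ y in D, u (x0 + (φ y • e + C.J y)) := by
  have hcont : Continuous (fun x => fderiv ℝ u x e) :=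
    (hu.continuous_fderiv (by norm_num)).clm_apply continuous_const
  have hcs : HasCompactSupport (fun x => fderiv ℝ u x e) := (hc.fderiv (𝕜 := ℝ)).comp_left
    (g := fun L : Euc n →L[ℝ] ℝ => L e) (by simp)
  set F : Euc n → ℝ := S.indicator (fun x => fderiv ℝ u x e) with hF
  have hFi : Integrable F := (hcont.integrable_of_hasCompactSupport hcs).indicator hS
  have mp2 : MeasurePreserving (fun p : ℝ × EuclideanSpace ℝ (Fin n) => x0 + (p.1 • e + C.J p.2))
      volume volume := (measurePreserving_add_left volume x0).comp C.mp
  have hi2 : Integrable (fun p : ℝ × EuclideanSpace ℝ (Fin n) => F (x0 + (p.1 • e + C.J p.2)))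
      volume := mp2.integrable_comp_of_integrable hFi
  have e1 : ∫ x, F x = ∫ p : ℝ × EuclideanSpace ℝ (Fin n), F (x0 + (p.1 • e + C.J p.2)) := by
    rw [← mp2.map_eq, integral_map mp2.measurable.aemeasurable]
    rw [mp2.map_eq]; exact hFi.aestronglyMeasurable
  rw [← integral_indicator hS, ← hF, e1, Measure.volume_eq_prod, integral_prod_symm _ (by
    rwa [Measure.volume_eq_prod] at hi2), ← integral_indicator hD]
  congr 1
  ext y
  by_cases hy : y ∈ D
  · rw [indicator_of_mem hy]
    have hγ : ContDiff ℝ 1 (fun t : ℝ => u (x0 + (t • e + C.J y))) := hu.comp (by fun_prop)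
    have hγc : HasCompactSupport (fun t : ℝ => u (x0 + (t • e + C.J y))) := by
      have hemb : Topology.IsClosedEmbedding (fun t : ℝ => x0 + (t • e + C.J y)) := by
        have h3 : Topology.IsClosedEmbedding (fun t : ℝ => t • e) := isClosedEmbedding_smul_left hne
        have h4 := (Homeomorph.addRight (C.J y)).isClosedEmbedding.comp h3
        exact (Homeomorph.addLeft x0).isClosedEmbedding.comp h4
      exact hc.comp_isClosedEmbedding hemb
    have hder : ∀ t, deriv (fun t : ℝ => u (x0 + (t • e + C.J y))) t
        = fderiv ℝ u (x0 + (t • e + C.J y)) e := by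
      intro t
      have hd : HasDerivAt (fun t : ℝ => x0 + (t • e + C.J y)) e t := by
        have := ((hasDerivAt_id t).smul_const e).add_const (C.J y)
        simpa using this.const_add x0
      exact ((hu.differentiable (by norm_num) _).hasFDerivAt.comp_hasDerivAt t hd).deriv
    rw [← hγc.integral_Iic_deriv_eq hγ (φ y), integral_Iic_eq_integral_Iio,
      ← integral_indicator measurableSet_Iio]
    congr 1
    ext t
    by_cases h0 : fderiv ℝ u (x0 + (t • e + C.J y)) e = 0
    · have : F (x0 + (t • e + C.J y)) = 0 := by
        rw [hF]; exact indicator_apply_eq_zero.2 fun _ => h0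
      rw [this]; symm; exact indicator_apply_eq_zero.2 fun _ => by rw [hder, h0]
    · have := h1 y hy t h0
      rw [hF]
      by_cases ht : t < φ y
      · rw [indicator_of_mem (this.2 ht), indicator_of_mem (show t ∈ Iio (φ y) from ht), hder]
      · rw [indicator_of_notMem (fun h => ht (this.1 h)),
          indicator_of_notMem (fun h : t ∈ Iio (φ y) => ht h)]
  · rw [indicator_of_notMem hy]
    have : ∀ t : ℝ, F (x0 + (t • e + C.J y)) = 0 := by
      intro t
      rw [hF]; exact indicator_apply_eq_zero.2 fun _ => h2 y hy t
    simp [this]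

lemma setInt_diff {α : Type*} [MeasurableSpace α] {μ : Measure α} {g : α → ℝ} (hg : Integrable g μ)
    {A B : Set α} (hA : MeasurableSet A) (hB : MeasurableSet B) (C : ℝ) (hC : ∀ x, |g x| ≤ C)
    (D : Set α) (hD : ∀ x, g x ≠ 0 → ¬ (x ∈ A ↔ x ∈ B) → x ∈ D) (hDt : μ D ≠ ⊤) :
    |∫ x in A, g x ∂μ - ∫ x in B, g x ∂μ| ≤ C * (μ D).toReal := by
  rw [← integral_indicator hA, ← integral_indicator hB, ← integral_sub (hg.indicator hA) (hg.indicator hB)]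
  rw [← Real.norm_eq_abs]
  have hDm := measurableSet_toMeasurable μ D
  calc ‖∫ x, (A.indicator (fun x => g x) x - B.indicator (fun x => g x) x) ∂μ‖
      ≤ ∫ x, (toMeasurable μ D).indicator (fun _ => C) x ∂μ := by
        refine norm_integral_le_of_norm_le ?_ (Eventually.of_forall fun x => ?_)
        · rw [integrable_indicator_iff hDm]
          refine integrableOn_const (by rw [measure_toMeasurable]; exact hDt)
        · have hC0 : 0 ≤ C := (abs_nonneg _).trans (hC x)
          by_cases hx : x ∈ toMeasurable μ D
          · rw [indicator_of_mem hx]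
            by_cases h1 : x ∈ A <;> by_cases h2 : x ∈ B <;> simp [h1, h2, hC x, hC0]
          · rw [indicator_of_notMem hx]
            have hx' : x ∉ D := fun h => hx (subset_toMeasurable μ D h)
            have := hD x
            by_cases h1 : x ∈ A <;> by_cases h2 : x ∈ B <;> simp [h1, h2] <;> simp_all
    _ = C * (μ D).toReal := by
        rw [integral_indicator_const _ hDm, measureReal_def, measure_toMeasurable, smul_eq_mul, mul_comm]

/-- Change of variables for the blow-up. -/
lemma setInt_rescale {n : ℕ} {A : Set (Euc n)} (hA : MeasurableSet A) (x : Euc n) {r : ℝ} (hr : 0 < r)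
    (g : Euc n → ℝ) :
    ∫ y in A, r⁻¹ * g (r⁻¹ • (y - x)) = r ^ n * ∫ z in {z | x + r • z ∈ A}, g z := by
  have hm : MeasurableSet {z : Euc n | x + r • z ∈ A} :=
    (show Measurable fun z : Euc n => x + r • z by fun_prop) hA
  rw [← integral_indicator hA, ← integral_indicator hm]
  set F : Euc n → ℝ := A.indicator (fun y => r⁻¹ * g (r⁻¹ • (y - x))) with hF
  have h1 : ∫ y, F y = ∫ y, F (x + y) := (integral_add_left_eq_self F x).symm
  have h2 := Measure.integral_comp_smul (volume : Measure (Euc n)) (fun y => F (x + y)) r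
  have h3 : (fun z => F (x + r • z)) = fun z => r⁻¹ * {z : Euc n | x + r • z ∈ A}.indicator g z := by
    funext z
    rw [hF]
    by_cases hz : x + r • z ∈ A
    · rw [indicator_of_mem hz, indicator_of_mem (show z ∈ {z : Euc n | x + r • z ∈ A} from hz)]
      simp [smul_smul, inv_mul_cancel₀ hr.ne']
    · rw [indicator_of_notMem hz, indicator_of_notMem (show z ∉ {z : Euc n | x + r • z ∈ A} from hz)]
      simp
  rw [h3, integral_const_mul] at h2
  rw [h1]
  have hfr : Module.finrank ℝ (Euc n) = n + 1 := by simp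
  rw [hfr, abs_of_pos (by positivity), smul_eq_mul] at h2
  field_simp at h2
  rw [pow_succ] at h2
  have : r * (r ^ n * ∫ (a : Euc n), {z : Euc n | x + r • z ∈ A}.indicator g a) = r * ∫ (y : Euc n), F (x + y) := by
    linarith
  exact (mul_left_cancel₀ hr.ne' this).symm

lemma blowup_density {n : ℕ} {A : Set (Euc n)} (hA : MeasurableSet A) {U : Set (Euc n)} (hU : IsOpen U)
    {τ : Measure (Euc n)} {N : Euc n → Euc n}
    (GG : ∀ X : Euc n → Euc n, ContDiff ℝ (⊤ : ℕ∞) X → HasCompactSupport X → tsupport X ⊆ U →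
      (kap n : ℝ) * ∫ x in A, divg X x = ∫ x, ⟪X x, N x⟫ ∂τ)
    {x : Euc n} (hx : x ∈ U) {v : Euc n} (hv : ‖v‖ = 1) (hb : HalfSpaceBlowup A x v)
    {c : ℝ} (hc : c < 2 ^ n) :
    ∃ ψ : Euc n → ℝ, Continuous ψ ∧ (∀ z, 0 ≤ ψ z) ∧ (∀ z, ψ z ≤ 1) ∧ (∀ z, z ∉ closedBall (0 : Euc n) 1 → ψ z = 0) ∧
      ∀ᶠ r in 𝓝[>] (0 : ℝ), c * r ^ n ≤ ∫ y, ψ (r⁻¹ • (y - x)) * ⟪v, N y⟫ ∂τ := by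
  obtain ⟨s, hs0, hs1, hsc⟩ : ∃ s : ℝ, 0 < s ∧ s < 1 ∧ c < 2 ^ n * s ^ n := by
    have h1 : Tendsto (fun s : ℝ => 2 ^ n * s ^ n) (𝓝[<] 1) (𝓝 (2 ^ n)) := by
      have : Continuous (fun s : ℝ => (2:ℝ) ^ n * s ^ n) := by fun_prop
      have h := (this.tendsto 1).mono_left (nhdsWithin_le_nhds (s := Iio 1))
      simpa using h
    have h2 := h1.eventually (lt_mem_nhds hc)
    have h3 : ∀ᶠ s : ℝ in 𝓝[<] 1, s ∈ Ioo (0:ℝ) 1 := Ioo_mem_nhdsLT (by norm_num)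
    obtain ⟨s, h4, h5⟩ := (h2.and h3).exists
    exact ⟨s, h5.1, h5.2, h4⟩
  let B : ContDiffBump (0 : Euc n) := ⟨s, (1 + s) / 2, hs0, by linarith⟩
  set ψ : Euc n → ℝ := (fun z => B z) with hψ
  have hψs : ContDiff ℝ (⊤ : ℕ∞) ψ := B.contDiff
  have hψ1 : ContDiff ℝ 1 ψ := B.contDiff
  have hψc : HasCompactSupport ψ := B.hasCompactSupport
  have hψz : ∀ z, z ∉ ball (0 : Euc n) 1 → ψ z = 0 := by
    intro z hz
    refine B.zero_of_le_dist ?_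
    have : (1 : ℝ) ≤ dist z 0 := by simpa using hz
    show (1 + s) / 2 ≤ _
    linarith
  refine ⟨ψ, B.continuous, fun z => B.nonneg, fun z => B.le_one, fun z hz =>
    hψz z (fun h => hz (ball_subset_closedBall h)), ?_⟩
  obtain ⟨C⟩ := exists_crd v hv
  set g : Euc n → ℝ := fun z => fderiv ℝ ψ z v with hg
  have hgcont : Continuous g :=
    (hψ1.continuous_fderiv (by norm_num)).clm_apply continuous_const
  have hgc : HasCompactSupport g := (hψc.fderiv (𝕜 := ℝ)).comp_left
    (g := fun L : Euc n →L[ℝ] ℝ => L v) (by simp)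
  obtain ⟨K, hK⟩ := hgc.exists_bound_of_continuous hgcont
  have hgz : ∀ z, g z ≠ 0 → z ∈ ball (0 : Euc n) 1 := by
    intro z hz
    have h1 : z ∈ tsupport ψ := by
      by_contra h
      apply hz
      have : fderiv ℝ ψ z = 0 := by
        by_contra h'
        exact h (support_fderiv_subset ℝ h')
      simp [hg, this]
    have h1 : z ∈ tsupport B := h1
    rw [B.tsupport_eq] at h1
    refine closedBall_subset_ball ?_ h1
    show (1 + s) / 2 < 1
    linarith
  have hvne : v ≠ 0 := by intro h; simp [h] at hv
  set HS : Set (Euc n) := {z | ⟪z, v⟫ < 0} with hHS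
  have hHSm : MeasurableSet HS := (isOpen_lt (by fun_prop) continuous_const).measurableSet
  set I : ℝ := ∫ z in HS, g z with hI
  have hIge : 2 ^ n * s ^ n ≤ (kap n : ℝ) * I := by
    have h1 : I = ∫ y : EuclideanSpace ℝ (Fin n), ψ (C.J y) := by
      have := fubini_graph C 0 hψ1 hψc hHSm MeasurableSet.univ (fun _ => 0) (by
        intro y _ t _
        have : ⟪v, v⟫ = 1 := by rw [real_inner_self_eq_norm_sq, hv]; norm_num
        simp [hHS, inner_add_left, inner_smul_left, C.inner_J, hv]) (by simp) hvne
      rw [hI, hg, this]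
      simp
    have hcJ : Continuous (fun y => ψ (C.J y)) := B.continuous.comp C.J.continuous
    have hcs : HasCompactSupport (fun y => ψ (C.J y)) :=
      hψc.comp_isClosedEmbedding C.J.isometry.isClosedEmbedding
    have h2 : (volume (closedBall (0 : EuclideanSpace ℝ (Fin n)) s)).toReal ≤ I := by
      rw [h1, ← measureReal_def, ← integral_indicator_one measurableSet_closedBall]
      refine integral_mono ?_ (hcJ.integrable_of_hasCompactSupport hcs) ?_
      · rw [integrable_indicator_iff measurableSet_closedBall]
        exact integrableOn_const measure_closedBall_lt_top.ne
      · intro y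
        by_cases hy : y ∈ closedBall (0 : EuclideanSpace ℝ (Fin n)) s
        · rw [indicator_of_mem hy]
          have : ψ (C.J y) = 1 := by
            refine B.one_of_mem_closedBall ?_
            simpa using hy
          simp [this]
        · rw [indicator_of_notMem hy]
          exact B.nonneg
    have h3 : volume (closedBall (0 : EuclideanSpace ℝ (Fin n)) s)
        = ENNReal.ofReal (s ^ n) * volume (closedBall (0 : EuclideanSpace ℝ (Fin n)) 1) := by
      have := Measure.addHaar_closedBall_mul (volume : Measure (EuclideanSpace ℝ (Fin n))) 0 hs0.le (zero_le_one)
      simpa using this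
    have h4 : (2:ℝ) ^ n ≤ kap n * (volume (closedBall (0 : EuclideanSpace ℝ (Fin n)) 1)).toReal := by
      have := ENNReal.toReal_mono (ENNReal.mul_ne_top ENNReal.coe_ne_top measure_closedBall_lt_top.ne) (kap_ball n)
      simpa using this
    rw [h3, ENNReal.toReal_mul, ENNReal.toReal_ofReal (by positivity)] at h2
    calc (2:ℝ) ^ n * s ^ n ≤ (kap n * (volume (closedBall (0 : EuclideanSpace ℝ (Fin n)) 1)).toReal) * s ^ n := by
          gcongr
      _ = kap n * (s ^ n * (volume (closedBall (0 : EuclideanSpace ℝ (Fin n)) 1)).toReal) := by ring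
      _ ≤ _ := by gcongr
  -- eventually estimates
  have hDr : Tendsto (fun r : ℝ =>
      (kap n : ℝ) * (I - K * (volume {y ∈ ball (0 : Euc n) 1 | ¬ ((x + r • y ∈ A) ↔ ⟪y, v⟫ < 0)}).toReal))
      (𝓝[>] 0) (𝓝 ((kap n : ℝ) * (I - K * 0))) := by
    have := (ENNReal.tendsto_toReal (a := 0) (by simp)).comp hb
    simp only [ENNReal.toReal_zero] at this
    exact (tendsto_const_nhds.sub (this.const_mul K)).const_mul _
  have hev1 := hDr.eventually (lt_mem_nhds (show c < _ by simp only [mul_zero, sub_zero]; linarith))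
  obtain ⟨ρ, hρ, hρU⟩ := Metric.isOpen_iff.1 hU x hx
  have hev2 : ∀ᶠ r : ℝ in 𝓝[>] 0, r ∈ Ioo (0:ℝ) ρ := Ioo_mem_nhdsGT hρ
  filter_upwards [hev1, hev2] with r h1 h2
  obtain ⟨hr0, hrρ⟩ := h2
  set X : Euc n → Euc n := fun y => ψ (r⁻¹ • (y - x)) • v with hX
  have hin : ContDiff ℝ (⊤ : ℕ∞) (fun y : Euc n => r⁻¹ • (y - x)) := by fun_prop
  have hw : ContDiff ℝ (⊤ : ℕ∞) (fun y : Euc n => ψ (r⁻¹ • (y - x))) := hψs.comp hin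
  have hXs : ContDiff ℝ (⊤ : ℕ∞) X := hw.smul contDiff_const
  have hsup : tsupport X ⊆ closedBall x r := by
    refine closure_minimal ?_ isClosed_closedBall
    intro y hy
    by_contra hyn
    apply hy
    have : ψ (r⁻¹ • (y - x)) = 0 := by
      apply hψz
      simp only [mem_closedBall, not_le, dist_eq_norm] at hyn
      simp only [mem_ball, not_lt, dist_zero_right, norm_smul, norm_inv, Real.norm_eq_abs, abs_of_pos hr0]
      rw [le_inv_mul_iff₀ hr0]; linarith
    simp [hX, this]
  have hXc : HasCompactSupport X := HasCompactSupport.of_support_subset_isCompact (isCompact_closedBall x r)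
    ((subset_tsupport X).trans hsup)
  have hgg := GG X hXs hXc (hsup.trans ((closedBall_subset_ball hrρ).trans hρU))
  have hrhs : ∫ y, ⟪X y, N y⟫ ∂τ = ∫ y, ψ (r⁻¹ • (y - x)) * ⟪v, N y⟫ ∂τ := by
    simp only [hX, inner_smul_left]; rfl
  have hdiv : ∀ y, divg X y = r⁻¹ * g (r⁻¹ • (y - x)) := by
    intro y
    rw [hX, divg_smul_const v (hw.differentiable (by norm_num) y)]
    have hd : HasFDerivAt (fun y : Euc n => r⁻¹ • (y - x)) (r⁻¹ • ContinuousLinearMap.id ℝ (Euc n)) y :=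
      ((hasFDerivAt_id y).sub_const x).const_smul r⁻¹
    have := ((hψ1.differentiable (by norm_num) _).hasFDerivAt.comp y hd).fderiv
    change (fderiv ℝ (ψ ∘ fun y : Euc n => r⁻¹ • (y - x)) y) v = _
    rw [this]
    simp [hg]
  rw [← hrhs, ← hgg]
  simp only [hdiv]
  rw [setInt_rescale hA x hr0]
  have hAr : MeasurableSet {z : Euc n | x + r • z ∈ A} :=
    (show Measurable fun z : Euc n => x + r • z by fun_prop) hA
  have hdd := setInt_diff (μ := (volume : Measure (Euc n))) (hgcont.integrable_of_hasCompactSupport hgc) hAr hHSm K (fun z => hK z)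
    {y ∈ ball (0 : Euc n) 1 | ¬ ((x + r • y ∈ A) ↔ ⟪y, v⟫ < 0)} (fun z hz hz2 => ⟨hgz z hz, hz2⟩)
    ((measure_mono (fun z hz => hz.1)).trans_lt measure_ball_lt_top).ne
  rw [← hI] at hdd
  have hk : (0:ℝ) ≤ kap n := NNReal.coe_nonneg _
  have := (abs_le.1 hdd).1
  calc c * r ^ n ≤ (kap n * (I - K * (volume {y ∈ ball (0 : Euc n) 1 | ¬ ((x + r • y ∈ A) ↔ ⟪y, v⟫ < 0)}).toReal)) * r ^ n := by
        gcongr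
    _ ≤ (kap n * (∫ z in {z : Euc n | x + r • z ∈ A}, g z)) * r ^ n := by
        gcongr; linarith
    _ = _ := by ring

/-- Hausdorff measure of blow-up points is controlled by the Gauss-Green measure. -/
lemma hausdorff_le_of_GG {n : ℕ} {A : Set (Euc n)} (hA : MeasurableSet A) {U : Set (Euc n)} (hU : IsOpen U)
    {τ : Measure (Euc n)} [IsFiniteMeasure τ] {N : Euc n → Euc n}
    (hN1 : ∀ x, ‖N x‖ ≤ 1)
    (GG : ∀ X : Euc n → Euc n, ContDiff ℝ (⊤ : ℕ∞) X → HasCompactSupport X → tsupport X ⊆ U →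
      (kap n : ℝ) * ∫ x in A, divg X x = ∫ x, ⟪X x, N x⟫ ∂τ)
    {T : Set (Euc n)} (hT : T ⊆ redBdry A ∩ U) : μH[(n : ℝ)] T ≤ τ T := by
  have key : ∀ d : NNReal, d < 1 → (d : ℝ≥0∞) * μH[(n : ℝ)] T ≤ τ T := by
    intro d hd
    refine hausdorff_le_of_density n τ T d ENNReal.coe_ne_top ?_
    intro x hx δ hδ
    obtain ⟨⟨v, hv, hb⟩, hxU⟩ := hT hx
    obtain ⟨ψ, hψ1, hψ2, hψ3, hψ4, hev⟩ := blowup_density hA hU GG hxU hv hb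
      (c := d * 2 ^ n) (by
        have : (d:ℝ) < 1 := by exact_mod_cast hd
        nlinarith [pow_pos (show (0:ℝ) < 2 by norm_num) n])
    have hev2 : ∀ᶠ r : ℝ in 𝓝[>] 0, r ∈ Ioo (0:ℝ) δ := Ioo_mem_nhdsGT hδ
    obtain ⟨r, h1, h2⟩ := (hev.and hev2).exists
    refine ⟨r, h2, ?_⟩
    have hr := h2.1
    have h3 : ∫ y, ψ (r⁻¹ • (y - x)) * ⟪v, N y⟫ ∂τ ≤ (τ (closedBall x r)).toReal := by
      rw [← measureReal_def, ← integral_indicator_one measurableSet_closedBall]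
      have hle : ∀ y, ‖ψ (r⁻¹ • (y - x)) * ⟪v, N y⟫‖ ≤ (closedBall x r).indicator (1 : Euc n → ℝ) y := by
        intro y
        by_cases hy : y ∈ closedBall x r
        · rw [indicator_of_mem hy, norm_mul]
          have a1 : ‖ψ (r⁻¹ • (y - x))‖ ≤ 1 := by
            rw [Real.norm_eq_abs, abs_of_nonneg (hψ2 _)]; exact hψ3 _
          have a2 : ‖⟪v, N y⟫‖ ≤ 1 := by
            refine (norm_inner_le_norm _ _).trans ?_
            rw [hv, one_mul]; exact hN1 y
          exact mul_le_one₀ a1 (norm_nonneg _) a2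
        · rw [indicator_of_notMem hy, hψ4]
          · simp
          · simp only [mem_closedBall, not_le, dist_eq_norm] at hy
            simp only [mem_closedBall, not_le, dist_zero_right, norm_smul, norm_inv, Real.norm_eq_abs, abs_of_pos hr]
            rw [lt_inv_mul_iff₀ hr]; linarith
      have hi : Integrable ((closedBall x r).indicator (1 : Euc n → ℝ)) τ := by
        rw [integrable_indicator_iff measurableSet_closedBall]
        exact integrableOn_const (measure_lt_top _ _).ne
      refine (le_abs_self _).trans ?_
      exact norm_integral_le_of_norm_le hi (Eventually.of_forall hle)
    have h4 : d * 2 ^ n * r ^ n ≤ (τ (closedBall x r)).toReal := h1.trans h3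
    have h5 : (d : ℝ≥0∞) * ENNReal.ofReal (2 * r) ^ n = ENNReal.ofReal (d * 2 ^ n * r ^ n) := by
      rw [mul_assoc, ENNReal.ofReal_mul (NNReal.coe_nonneg d), ← mul_pow, ENNReal.ofReal_pow (by positivity),
        ENNReal.ofReal_coe_nnreal]
    rw [h5]
    exact ENNReal.ofReal_le_of_le_toReal h4
  by_contra hcon
  push Not at hcon
  have : ∀ d : NNReal, d < 1 → (d : ℝ≥0∞) * μH[(n : ℝ)] T ≤ τ T := key
  have hlim : Tendsto (fun d : ℝ≥0∞ => d * μH[(n : ℝ)] T) (𝓝[<] 1) (𝓝 (1 * μH[(n : ℝ)] T)) := by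
    refine Tendsto.mono_left ?_ nhdsWithin_le_nhds
    exact ENNReal.Tendsto.mul_const tendsto_id (Or.inl (by simp))
  have hle : 1 * μH[(n : ℝ)] T ≤ τ T := by
    refine le_of_tendsto hlim ?_
    filter_upwards [self_mem_nhdsWithin] with d hd
    have hd' : d < 1 := hd
    lift d to NNReal using (hd'.trans ENNReal.one_lt_top).ne
    exact key d (by exact_mod_cast hd')
  rw [one_mul] at hle
  exact absurd hle (not_le.2 hcon)

lemma inner_grad {n : ℕ} (f : Euc n → ℝ) (x v : Euc n) : ⟪gradient f x, v⟫ = fderiv ℝ f x v :=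
  InnerProductSpace.toDual_symm_apply

lemma grad_contDiff {n : ℕ} {f : Euc n → ℝ} (hf : ContDiff ℝ 2 f) : ContDiff ℝ 1 (gradient f) := by
  have h1 : ContDiff ℝ 1 (fderiv ℝ f) := hf.fderiv_right (by norm_num)
  exact (InnerProductSpace.toDual ℝ (Euc n)).symm.contDiff.comp h1

/-- Points of a regular level set are blow-up points. -/
lemma blowup_of_regular {n : ℕ} {Ω U : Set (Euc n)} (hΩ : IsOpen Ω) (hU : IsOpen U) {f : Euc n → ℝ}
    {x : Euc n} (hx : x ∈ U) (hf : DifferentiableAt ℝ f x) (hg : gradient f x ≠ 0) (h0 : f x = 0)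
    (h1 : Ω ∩ U = {y ∈ U | f y < 0}) : HalfSpaceBlowup Ω x (‖gradient f x‖⁻¹ • gradient f x) := by
  set v := ‖gradient f x‖⁻¹ • gradient f x with hv
  have hgn : 0 < ‖gradient f x‖ := norm_pos_iff.2 hg
  have hin : ∀ y, ⟪y, v⟫ = ‖gradient f x‖⁻¹ * fderiv ℝ f x y := by
    intro y
    rw [hv, inner_smul_right, real_inner_comm, inner_grad]
  have hnull : ∀ᵐ y : Euc n, ⟪y, v⟫ ≠ 0 := by
    have h2 : (LinearMap.ker (fderiv ℝ f x).toLinearMap : Submodule ℝ (Euc n)) ≠ ⊤ := by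
      intro h
      have : gradient f x ∈ LinearMap.ker (fderiv ℝ f x).toLinearMap := by rw [h]; trivial
      have h3 : fderiv ℝ f x (gradient f x) = 0 := this
      rw [← inner_grad, real_inner_self_eq_norm_sq] at h3
      exact absurd h3 (by positivity)
    have h3 := Measure.addHaar_submodule (volume : Measure (Euc n)) _ h2
    filter_upwards [measure_eq_zero_iff_ae_notMem.1 h3] with y hy h4
    apply hy
    rw [hin] at h4
    rcases mul_eq_zero.1 h4 with h5 | h5
    · exact absurd h5 (by positivity)
    · exact h5
  have key := tendsto_measure_of_ae_tendsto_indicator (μ := (volume : Measure (Euc n)))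
    (𝓝[>] (0:ℝ)) (A := ∅) (As := fun r : ℝ => {y ∈ ball (0 : Euc n) 1 | ¬ ((x + r • y ∈ Ω) ↔ ⟪y, v⟫ < 0)})
    MeasurableSet.empty (by
      intro r
      have m1 : MeasurableSet {y : Euc n | x + r • y ∈ Ω} :=
        (show Measurable fun z : Euc n => x + r • z by fun_prop) hΩ.measurableSet
      have m2 : MeasurableSet {y : Euc n | ⟪y, v⟫ < 0} :=
        (isOpen_lt (by fun_prop) continuous_const).measurableSet
      exact measurableSet_ball.inter (m1.iff m2).compl)
    (B := ball (0 : Euc n) 1) measurableSet_ball measure_ball_lt_top.ne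
    (Eventually.of_forall fun r y hy => hy.1) (by
      filter_upwards [hnull] with y hy
      have hd : HasDerivAt (fun r : ℝ => f (x + r • y)) (fderiv ℝ f x y) 0 := by
        have h2 : HasDerivAt (fun r : ℝ => x + r • y) y 0 := by
          simpa using ((hasDerivAt_id (0:ℝ)).smul_const y).const_add x
        have h3 : HasFDerivAt f (fderiv ℝ f x) (x + (0:ℝ) • y) := by simpa using hf.hasFDerivAt
        exact h3.comp_hasDerivAt 0 h2
      have hs := hd.tendsto_slope_zero_right
      have hmem : ∀ᶠ r : ℝ in 𝓝[>] 0, x + r • y ∈ U := by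
        refine Filter.Eventually.filter_mono nhdsWithin_le_nhds ?_
        have : Continuous (fun r : ℝ => x + r • y) := by fun_prop
        exact this.continuousAt.eventually_mem (by simpa using hU.mem_nhds hx)
      have hmemU : ∀ z ∈ U, (z ∈ Ω ↔ f z < 0) := by
        intro z hz
        have : z ∈ Ω ∩ U ↔ z ∈ {y ∈ U | f y < 0} := by rw [h1]
        simpa [hz] using this
      simp only [zero_add, zero_smul, add_zero, h0, sub_zero, smul_eq_mul] at hs
      have hsgn : ∀ᶠ r : ℝ in 𝓝[>] 0, (f (x + r • y) < 0 ↔ fderiv ℝ f x y < 0) := by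
        have hne : fderiv ℝ f x y ≠ 0 := by
          intro h; apply hy; rw [hin, h, mul_zero]
        rcases lt_or_gt_of_ne hne with h | h
        · filter_upwards [hs.eventually (gt_mem_nhds h), self_mem_nhdsWithin] with r h2 h3
          have h3 : (0:ℝ) < r := h3
          refine ⟨fun _ => h, fun _ => ?_⟩
          by_contra h4
          push Not at h4
          have : 0 ≤ r⁻¹ * f (x + r • y) := by positivity
          linarith
        · filter_upwards [hs.eventually (lt_mem_nhds h), self_mem_nhdsWithin] with r h2 h3
          have h3 : (0:ℝ) < r := h3
          refine ⟨fun h4 => ?_, fun h5 => by linarith⟩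
          have : r⁻¹ * f (x + r • y) ≤ 0 := mul_nonpos_of_nonneg_of_nonpos (by positivity) h4.le
          linarith
      filter_upwards [hmem, hsgn] with r h2 h3
      simp only [mem_empty_iff_false, iff_false]
      rintro ⟨_, h4⟩
      apply h4
      rw [hmemU _ h2, h3, hin]
      constructor
      · intro h; exact mul_neg_of_pos_of_neg (by positivity) h
      · intro h
        by_contra h5
        push Not at h5
        have : 0 ≤ ‖gradient f x‖⁻¹ * fderiv ℝ f x y := by positivity
        linarith)
  simpa [HalfSpaceBlowup] using key

/-- Divergence theorem for tangential fields. -/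
lemma tangential_GG {n : ℕ} {Ω U : Set (Euc n)} (hΩ : IsOpen Ω) {f : Euc n → ℝ} (hf : ContDiff ℝ 2 f)
    (h1 : Ω ∩ U = {y ∈ U | f y < 0}) {T : Euc n → Euc n} (hT : ContDiff ℝ 1 T)
    (hTc : HasCompactSupport T) (hTU : tsupport T ⊆ U) (htan : ∀ x, ⟪gradient f x, T x⟫ = 0) :
    ∫ x in Ω, divg T x = 0 := by
  let χ : ℕ → Euc n → ℝ := fun k x => Real.smoothTransition (-(k * f x))
  have hχ : ∀ k, ContDiff ℝ 1 (χ k) := by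
    intro k
    have : ContDiff ℝ 1 (fun x => -((k:ℝ) * f x)) := by
      have := hf.of_le (show (1 : WithTop ℕ∞) ≤ 2 by norm_num)
      fun_prop
    exact Real.smoothTransition.contDiff.comp this
  have hz : ∀ k, ∫ x, χ k x * divg T x = 0 := by
    intro k
    have h2 := integral_divg_zero ((hχ k).smul hT) (hTc.smul_left (f := χ k))
    rw [← h2]
    congr 1
    ext x
    change _ = divg (fun y => χ k y • T y) x
    rw [divg_smul ((hχ k).differentiable (by norm_num) x) (hT.differentiable (by norm_num) x)]
    have h3 : fderiv ℝ (χ k) x (T x) = 0 := by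
      have hd : HasFDerivAt (fun x => -((k:ℝ) * f x)) (-((k:ℝ) • fderiv ℝ f x)) x :=
        ((hf.differentiable (by norm_num) x).hasFDerivAt.const_mul (k:ℝ)).neg
      have hs : DifferentiableAt ℝ Real.smoothTransition (-((k:ℝ) * f x)) :=
        (Real.smoothTransition.contDiff (n := 1)).differentiable (by norm_num) _
      have := (hs.hasDerivAt.comp_hasFDerivAt x hd).fderiv
      change fderiv ℝ (Real.smoothTransition ∘ fun x => -((k:ℝ) * f x)) x (T x) = 0
      rw [this]
      have := htan x
      rw [inner_grad] at this
      simp [this]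
    rw [h3, add_zero]
  have hcont := divg_continuous hT
  have hnull : Integrable (divg T) := hcont.integrable_of_hasCompactSupport (divg_compact hTc)
  have hlim : Tendsto (fun k => ∫ x, χ k x * divg T x) atTop (𝓝 (∫ x, Ω.indicator (divg T) x)) := by
    refine tendsto_integral_of_dominated_convergence (fun x => |divg T x|) ?_ hnull.abs ?_ ?_
    · intro k
      exact ((hχ k).continuous.mul hcont).aestronglyMeasurable
    · intro k
      refine Eventually.of_forall fun x => ?_
      rw [norm_mul, Real.norm_eq_abs, Real.norm_eq_abs, abs_of_nonneg (Real.smoothTransition.nonneg _)]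
      exact mul_le_of_le_one_left (abs_nonneg _) (Real.smoothTransition.le_one _)
    · refine Eventually.of_forall fun x => ?_
      by_cases hx : x ∈ tsupport T
      · have hxU := hTU hx
        have hiff : x ∈ Ω ↔ f x < 0 := by
          have : x ∈ Ω ∩ U ↔ x ∈ {y ∈ U | f y < 0} := by rw [h1]
          simpa [hxU] using this
        by_cases hxΩ : x ∈ Ω
        · rw [indicator_of_mem hxΩ]
          have hneg := hiff.1 hxΩ
          refine tendsto_const_nhds.congr' ?_
          obtain ⟨K, hK⟩ := exists_nat_gt (1 / (-f x))
          filter_upwards [eventually_ge_atTop K] with k hk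
          have : χ k x = 1 := by
            refine Real.smoothTransition.one_of_one_le ?_
            have hk' : (K:ℝ) ≤ k := by exact_mod_cast hk
            rw [div_lt_iff₀ (by linarith)] at hK
            nlinarith
          rw [this, one_mul]
        · rw [indicator_of_notMem hxΩ]
          have hpos : 0 ≤ f x := not_lt.1 fun h => hxΩ (hiff.2 h)
          have : ∀ k, χ k x = 0 := by
            intro k
            refine Real.smoothTransition.zero_of_nonpos ?_
            have : (0:ℝ) ≤ k * f x := by positivity
            linarith
          simp [this]
      · have h2 := divg_support hx
        have h3 : Ω.indicator (divg T) x = 0 := indicator_apply_eq_zero.2 fun _ => h2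
        simp [h2, h3]
  simp only [hz] at hlim
  rw [← integral_indicator hΩ.measurableSet]
  exact (tendsto_nhds_unique hlim tendsto_const_nhds)

/-- A cylinder in which the regular level set is a graph. -/
lemma exists_cyl {n : ℕ} {U : Set (Euc n)} (hU : IsOpen U) {f : Euc n → ℝ} (hf : ContDiff ℝ 2 f)
    {x0 : Euc n} (hx0 : x0 ∈ U) (h0 : f x0 = 0) (hgr : ∀ y ∈ U, gradient f y ≠ 0) {q : ℝ} (hq : 1 < q)
    {e : Euc n} (he : e = ‖gradient f x0‖⁻¹ • gradient f x0) (C : Crd e) :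
    ∃ (a ρ : ℝ) (φ : EuclideanSpace ℝ (Fin n) → ℝ), 0 < a ∧ 0 < ρ ∧ Measurable φ ∧
      (∀ y ∈ ball (0 : EuclideanSpace ℝ (Fin n)) ρ, |φ y| < a ∧ f (x0 + (φ y • e + C.J y)) = 0) ∧
      (∀ y ∈ ball (0 : EuclideanSpace ℝ (Fin n)) ρ, ∀ t : ℝ, |t| < a →
        (f (x0 + (t • e + C.J y)) < 0 ↔ t < φ y)) ∧
      (∀ z, |⟪z - x0, e⟫| < a → ‖C.pr (z - x0)‖ < ρ →
        z ∈ U ∧ 0 < ⟪gradient f z, e⟫ ∧ ‖gradient f z‖ ≤ q * ⟪gradient f z, e⟫) := by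
  have hg0 : 0 < ‖gradient f x0‖ := norm_pos_iff.2 (hgr x0 hx0)
  have hen : ‖e‖ = 1 := by rw [he, norm_smul, norm_inv, norm_norm, inv_mul_cancel₀ hg0.ne']
  have hgc : Continuous (gradient f) := (grad_contDiff hf).continuous
  obtain ⟨R, hR, hRU⟩ : ∃ R > 0, ∀ z ∈ ball x0 R, z ∈ U ∧ ‖gradient f z‖ < q * ⟪gradient f z, e⟫ := by
    have h1 : IsOpen {z | ‖gradient f z‖ < q * ⟪gradient f z, e⟫} :=
      isOpen_lt (by fun_prop) (by fun_prop)
    have h2 : x0 ∈ U ∩ {z | ‖gradient f z‖ < q * ⟪gradient f z, e⟫} := by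
      refine ⟨hx0, ?_⟩
      change ‖gradient f x0‖ < q * ⟪gradient f x0, e⟫
      rw [he, inner_smul_right, real_inner_self_eq_norm_sq]
      have : ‖gradient f x0‖⁻¹ * ‖gradient f x0‖ ^ 2 = ‖gradient f x0‖ := by field_simp
      rw [this]; nlinarith
    obtain ⟨R, hR, h3⟩ := Metric.isOpen_iff.1 (hU.inter h1) x0 h2
    exact ⟨R, hR, fun z hz => h3 hz⟩
  have hpos : ∀ z ∈ ball x0 R, 0 < ⟪gradient f z, e⟫ := by
    intro z hz
    have h1 := hRU z hz
    have h2 : 0 < ‖gradient f z‖ := norm_pos_iff.2 (hgr z h1.1)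
    by_contra h3
    push Not at h3
    nlinarith [h1.2]
  have hball : ∀ (t : ℝ) (y : EuclideanSpace ℝ (Fin n)), |t| + ‖y‖ < R → x0 + (t • e + C.J y) ∈ ball x0 R := by
    intro t y h
    rw [mem_ball, dist_eq_norm, add_sub_cancel_left]
    refine (norm_add_le _ _).trans_lt ?_
    rw [norm_smul, hen, mul_one, Real.norm_eq_abs, C.J.norm_map]
    exact h
  have hmono : ∀ y : EuclideanSpace ℝ (Fin n), ‖y‖ < R / 2 →
      StrictMonoOn (fun t : ℝ => f (x0 + (t • e + C.J y))) (Icc (-(R / 2)) (R / 2)) := by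
    intro y hy
    have hfc := hf.continuous
    refine strictMonoOn_of_deriv_pos (convex_Icc _ _) ?_ ?_
    · exact Continuous.continuousOn (by fun_prop)
    · intro t ht
      rw [interior_Icc] at ht
      have hd : HasDerivAt (fun t : ℝ => x0 + (t • e + C.J y)) e t := by
        have := ((hasDerivAt_id t).smul_const e).add_const (C.J y)
        simpa using this.const_add x0
      have hh := ((hf.differentiable (by norm_num) _).hasFDerivAt.comp_hasDerivAt t hd).deriv
      change 0 < deriv (f ∘ fun t : ℝ => x0 + (t • e + C.J y)) t
      rw [hh, ← inner_grad]
      apply hpos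
      apply hball
      have : |t| < R / 2 := abs_lt.2 ht
      linarith
  have hm0 := hmono 0 (by simpa using by linarith)
  have hbot : f (x0 + ((-(R/2)) • e + C.J 0)) < 0 := by
    have h1 := hm0 (show -(R/2) ∈ Icc (-(R / 2)) (R / 2) by constructor <;> linarith)
      (show (0:ℝ) ∈ Icc (-(R / 2)) (R / 2) by constructor <;> linarith) (by linarith)
    simp only [map_zero, add_zero, zero_smul, h0] at h1
    simpa using h1
  have htop : 0 < f (x0 + ((R/2) • e + C.J 0)) := by
    have h1 := hm0 (show (0:ℝ) ∈ Icc (-(R / 2)) (R / 2) by constructor <;> linarith)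
      (show (R/2) ∈ Icc (-(R / 2)) (R / 2) by constructor <;> linarith) (by linarith)
    simp only [map_zero, add_zero, zero_smul, h0] at h1
    simpa using h1
  obtain ⟨ρ0, hρ0, hρ⟩ : ∃ ρ > 0, ∀ y ∈ ball (0 : EuclideanSpace ℝ (Fin n)) ρ,
      f (x0 + ((-(R/2)) • e + C.J y)) < 0 ∧ 0 < f (x0 + ((R/2) • e + C.J y)) := by
    have hfc := hf.continuous
    have hJc := C.J.continuous
    have o1 : IsOpen {y : EuclideanSpace ℝ (Fin n) | f (x0 + ((-(R/2)) • e + C.J y)) < 0} :=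
      isOpen_lt (by fun_prop) continuous_const
    have o2 : IsOpen {y : EuclideanSpace ℝ (Fin n) | 0 < f (x0 + ((R/2) • e + C.J y))} :=
      isOpen_lt continuous_const (by fun_prop)
    obtain ⟨ρ, hρ, h⟩ := Metric.isOpen_iff.1 (o1.inter o2) 0 ⟨hbot, htop⟩
    exact ⟨ρ, hρ, fun y hy => h hy⟩
  set ρ := min ρ0 (R/2) with hρdef
  have hρpos : 0 < ρ := lt_min hρ0 (by linarith)
  have hex : ∀ y : EuclideanSpace ℝ (Fin n), ∃ t : ℝ, y ∈ ball (0 : EuclideanSpace ℝ (Fin n)) ρ →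
      |t| < R/2 ∧ f (x0 + (t • e + C.J y)) = 0 := by
    intro y
    by_cases hy : y ∈ ball (0 : EuclideanSpace ℝ (Fin n)) ρ
    · have hy2 := hρ y (ball_subset_ball (min_le_left _ _) hy)
      have hfc := hf.continuous
      have hcont : ContinuousOn (fun t : ℝ => f (x0 + (t • e + C.J y))) (Icc (-(R/2)) (R/2)) :=
        Continuous.continuousOn (by fun_prop)
      obtain ⟨t, ht, hft⟩ := intermediate_value_Ioo (by linarith) hcont hy2
      exact ⟨t, fun _ => ⟨abs_lt.2 ht, hft⟩⟩
    · exact ⟨0, fun h => absurd h hy⟩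
  choose φ0 hφ0 using hex
  set φ : EuclideanSpace ℝ (Fin n) → ℝ := (ball (0 : EuclideanSpace ℝ (Fin n)) ρ).indicator φ0 with hφ
  have hφe : ∀ y ∈ ball (0 : EuclideanSpace ℝ (Fin n)) ρ, φ y = φ0 y := fun y hy => indicator_of_mem hy _
  have hP4 : ∀ y ∈ ball (0 : EuclideanSpace ℝ (Fin n)) ρ, |φ y| < R/2 ∧ f (x0 + (φ y • e + C.J y)) = 0 := by
    intro y hy
    rw [hφe y hy]; exact hφ0 y hy
  have hP5 : ∀ y ∈ ball (0 : EuclideanSpace ℝ (Fin n)) ρ, ∀ t : ℝ, |t| < R/2 →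
        (f (x0 + (t • e + C.J y)) < 0 ↔ t < φ y) := by
    intro y hy t ht
    have hyn : ‖y‖ < R/2 := by
      have : ‖y‖ < ρ := by simpa using hy
      exact this.trans_le (min_le_right _ _)
    obtain ⟨h1, h2⟩ := hP4 y hy
    rw [← h2]
    exact (hmono y hyn).lt_iff_lt (Ioo_subset_Icc_self (abs_lt.1 ht)) (Ioo_subset_Icc_self (abs_lt.1 h1))
  refine ⟨R/2, ρ, φ, by linarith, hρpos, ?_, hP4, hP5, ?_⟩
  · refine measurable_of_Ioi fun t => ?_
    have hfc := hf.continuous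
    have hJc := C.J.continuous
    have m1 : MeasurableSet {y : EuclideanSpace ℝ (Fin n) | f (x0 + (t • e + C.J y)) < 0} :=
      (isOpen_lt (by fun_prop) continuous_const).measurableSet
    have hb : MeasurableSet (ball (0 : EuclideanSpace ℝ (Fin n)) ρ) := measurableSet_ball
    by_cases ht1 : R/2 ≤ t
    · have : φ ⁻¹' Ioi t = ∅ := by
        ext y
        simp only [mem_preimage, mem_Ioi, mem_empty_iff_false, iff_false, not_lt]
        by_cases hy : y ∈ ball (0 : EuclideanSpace ℝ (Fin n)) ρ
        · have := (abs_lt.1 (hP4 y hy).1).2; linarith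
        · rw [hφ, indicator_of_notMem hy]; linarith
      rw [this]; exact MeasurableSet.empty
    by_cases ht2 : t ≤ -(R/2)
    · have : φ ⁻¹' Ioi t = univ := by
        ext y
        simp only [mem_preimage, mem_Ioi, mem_univ, iff_true]
        by_cases hy : y ∈ ball (0 : EuclideanSpace ℝ (Fin n)) ρ
        · have := (abs_lt.1 (hP4 y hy).1).1; linarith
        · rw [hφ, indicator_of_notMem hy]; linarith
      rw [this]; exact MeasurableSet.univ
    push Not at ht1 ht2
    have : φ ⁻¹' Ioi t = (ball 0 ρ ∩ {y | f (x0 + (t • e + C.J y)) < 0}) ∪ ((ball 0 ρ)ᶜ ∩ {_y | t < 0}) := by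
      ext y
      simp only [mem_preimage, mem_Ioi, mem_union, mem_inter_iff, mem_compl_iff]
      by_cases hy : y ∈ ball (0 : EuclideanSpace ℝ (Fin n)) ρ
      · have := hP5 y hy t (abs_lt.2 ⟨ht2, ht1⟩)
        simp only [hy, true_and, not_true, false_and, or_false]
        exact this.symm
      · rw [hφ, indicator_of_notMem hy]
        simp [hy]
    rw [this]
    exact (hb.inter m1).union (hb.compl.inter (MeasurableSet.const _))
  · intro z hz1 hz2
    have hz : z = x0 + (⟪z - x0, e⟫ • e + C.J (C.pr (z - x0))) := by rw [C.decomp]; abel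
    have hzb : z ∈ ball x0 R := by
      rw [hz]; apply hball
      have : ρ ≤ R/2 := min_le_right _ _
      linarith
    exact ⟨(hRU z hzb).1, hpos z hzb, (hRU z hzb).2.le⟩

lemma int_sandwich {α : Type*} [MeasurableSpace α] {m σ : Measure α} {q : ℝ} (hq : 1 ≤ q)
    (h1 : m ≤ σ) (h2 : σ ≤ ENNReal.ofReal q • m) {h g b : α → ℝ} (hb : Integrable b σ)
    (hh : Integrable h σ) (hg : Integrable g m) (h3 : ∀ᵐ x ∂σ, |h x| ≤ b x)
    (h4 : ∀ᵐ x ∂m, |g x - h x| ≤ (q - 1) * b x) :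
    |∫ x, g x ∂m - ∫ x, h x ∂σ| ≤ 2 * (q - 1) * ∫ x, b x ∂σ := by
  have hbm : Integrable b m := hb.mono_measure h1
  have hhm : Integrable h m := hh.mono_measure h1
  have h3m : ∀ᵐ x ∂m, |h x| ≤ b x := h3.filter_mono (ae_mono h1)
  have hb0 : 0 ≤ᵐ[σ] b := h3.mono fun x hx => (abs_nonneg _).trans hx
  have hb0m : 0 ≤ᵐ[m] b := h3m.mono fun x hx => (abs_nonneg _).trans hx
  have e1 : |∫ x, g x ∂m - ∫ x, h x ∂m| ≤ (q - 1) * ∫ x, b x ∂m := by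
    rw [← integral_sub hg hhm, ← integral_const_mul]
    exact norm_integral_le_of_norm_le (f := fun x => g x - h x) (hbm.const_mul _) h4
  have e2 : ∫ x, b x ∂m - ∫ x, h x ∂m ≤ ∫ x, b x ∂σ - ∫ x, h x ∂σ := by
    rw [← integral_sub hbm hhm, ← integral_sub hb hh]
    refine integral_mono_measure h1 ?_ (hb.sub hh)
    filter_upwards [h3] with x hx
    have := (abs_le.1 hx).2
    simp only [Pi.zero_apply]; linarith
  have e3 : ∫ x, b x ∂m + ∫ x, h x ∂m ≤ ∫ x, b x ∂σ + ∫ x, h x ∂σ := by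
    rw [← integral_add hbm hhm, ← integral_add hb hh]
    refine integral_mono_measure h1 ?_ (hb.add hh)
    filter_upwards [h3] with x hx
    have := (abs_le.1 hx).1
    simp only [Pi.zero_apply]; linarith
  have e4 : ∫ x, b x ∂σ ≤ q * ∫ x, b x ∂m := by
    have hbq : Integrable b (ENNReal.ofReal q • m) := hbm.smul_measure ENNReal.ofReal_ne_top
    have h0 : 0 ≤ᵐ[ENNReal.ofReal q • m] b := Measure.ae_smul_measure hb0m _
    have := integral_mono_measure h2 h0 hbq
    rw [integral_smul_measure, ENNReal.toReal_ofReal (by linarith), smul_eq_mul] at this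
    exact this
  have e5 : ∫ x, b x ∂m ≤ ∫ x, b x ∂σ := integral_mono_measure h1 hb0 hb
  rw [abs_le] at e1 ⊢
  have : (q - 1) * ∫ x, b x ∂m ≤ (q - 1) * ∫ x, b x ∂σ := mul_le_mul_of_nonneg_left e5 (by linarith)
  constructor <;> nlinarith

lemma local_GG {n : ℕ} {Ω U : Set (Euc n)} (hΩ : IsOpen Ω) (hU : IsOpen U) {f : Euc n → ℝ}
    (hf : ContDiff ℝ 2 f)
    {x0 : Euc n} (hx0 : x0 ∈ U) (h0 : f x0 = 0) (hgr : ∀ y ∈ U, gradient f y ≠ 0)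
    (h1 : Ω ∩ U = {y ∈ U | f y < 0}) (h2 : frontier Ω ∩ U = {y ∈ U | f y = 0}) {q : ℝ} (hq : 1 < q) :
    ∃ V, IsOpen V ∧ x0 ∈ V ∧ V ⊆ U ∧ μH[(n : ℝ)] (frontier Ω ∩ V) < ⊤ ∧
      ∀ X : Euc n → Euc n, ContDiff ℝ 1 X → HasCompactSupport X → tsupport X ⊆ V →
        |(kap n : ℝ) * (∫ x in Ω, divg X x)
            - ∫ x in frontier Ω, ⟪X x, ‖gradient f x‖⁻¹ • gradient f x⟫ ∂μH[(n : ℝ)]|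
          ≤ 2 * (q - 1) * ∫ x in frontier Ω, ‖X x‖ ∂μH[(n : ℝ)] := by
  obtain ⟨e, he⟩ : ∃ e, e = ‖gradient f x0‖⁻¹ • gradient f x0 := ⟨_, rfl⟩
  have hg0 : 0 < ‖gradient f x0‖ := norm_pos_iff.2 (hgr x0 hx0)
  have hen : ‖e‖ = 1 := by rw [he, norm_smul, norm_inv, norm_norm, inv_mul_cancel₀ hg0.ne']
  have hene : e ≠ 0 := by intro h; rw [h] at hen; simp at hen
  have hee : ⟪e, e⟫ = 1 := by rw [real_inner_self_eq_norm_sq, hen]; norm_num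
  obtain ⟨C⟩ := exists_crd e hen
  obtain ⟨a, ρ, φ, ha, hρ, hφm, hφ1, hφ2, hcyl⟩ := exists_cyl hU hf hx0 h0 hgr hq he C
  have hgc : ContDiff ℝ 1 (gradient f) := grad_contDiff hf
  set V : Set (Euc n) := {z | |⟪z - x0, e⟫| < a ∧ ‖C.pr (z - x0)‖ < ρ} with hV
  have hVo : IsOpen V := by
    have c1 : Continuous (fun z : Euc n => |⟪z - x0, e⟫|) := by fun_prop
    have c2 : Continuous (fun z : Euc n => ‖C.pr (z - x0)‖) := by fun_prop
    exact (isOpen_lt c1 continuous_const).inter (isOpen_lt c2 continuous_const)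
  have hx0V : x0 ∈ V := by simp [hV, ha, hρ]
  have hVU : V ⊆ U := fun z hz => (hcyl z hz.1 hz.2).1
  have hVp : ∀ z ∈ V, 0 < ⟪gradient f z, e⟫ := fun z hz => (hcyl z hz.1 hz.2).2.1
  have hVq : ∀ z ∈ V, ‖gradient f z‖ ≤ q * ⟪gradient f z, e⟫ := fun z hz => (hcyl z hz.1 hz.2).2.2
  have hVm := hVo.measurableSet
  have hcoord1 : ∀ (t : ℝ) y, ⟪x0 + (t • e + C.J y) - x0, e⟫ = t := by
    intro t y
    rw [add_sub_cancel_left, inner_add_left, inner_smul_left, hee, C.inner_J]; simp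
  have hcoord2 : ∀ (t : ℝ) y, C.pr (x0 + (t • e + C.J y) - x0) = y := by
    intro t y
    rw [add_sub_cancel_left, map_add, map_smul, C.pr_e, C.pr_J]; simp
  have hVmem : ∀ (t : ℝ) y, x0 + (t • e + C.J y) ∈ V ↔ |t| < a ∧ ‖y‖ < ρ := by
    intro t y
    rw [hV]
    change (|⟪x0 + (t • e + C.J y) - x0, e⟫| < a ∧ ‖C.pr (x0 + (t • e + C.J y) - x0)‖ < ρ) ↔ _
    rw [hcoord1, hcoord2]
  have hΩV : ∀ z ∈ V, (z ∈ Ω ↔ f z < 0) := by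
    intro z hz
    have : z ∈ Ω ∩ U ↔ z ∈ {y ∈ U | f y < 0} := by rw [h1]
    simpa [hVU hz] using this
  have hFV : ∀ z ∈ V, (z ∈ frontier Ω ↔ f z = 0) := by
    intro z hz
    have : z ∈ frontier Ω ∩ U ↔ z ∈ {y ∈ U | f y = 0} := by rw [h2]
    simpa [hVU hz] using this
  set B := ball (0 : EuclideanSpace ℝ (Fin n)) ρ with hB
  have hBm : MeasurableSet B := measurableSet_ball
  set G : EuclideanSpace ℝ (Fin n) → Euc n := fun y => x0 + (φ y • e + C.J y) with hG
  have hGm : Measurable G := by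
    have := C.J.continuous.measurable
    exact ((hφm.smul_const e).add this).const_add x0
  have hGV : ∀ y ∈ B, G y ∈ V := fun y hy => (hVmem _ _).2 ⟨(hφ1 y hy).1, by simpa [hB] using hy⟩
  have hGF : ∀ y ∈ B, G y ∈ frontier Ω := fun y hy => (hFV _ (hGV y hy)).2 (hφ1 y hy).2
  haveI : IsFiniteMeasure ((volume : Measure (EuclideanSpace ℝ (Fin n))).restrict B) :=
    ⟨by rw [Measure.restrict_apply_univ]; exact measure_ball_lt_top⟩
  set P : Measure (Euc n) := ((volume : Measure (EuclideanSpace ℝ (Fin n))).restrict B).map G with hP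
  set m : Measure (Euc n) := kap n • P with hm
  set σ : Measure (Euc n) := μH[(n : ℝ)].restrict (frontier Ω ∩ V) with hσ
  have hPV : ∀ᵐ x ∂P, x ∈ V := by
    refine (ae_map_iff (p := fun x => x ∈ V) hGm.aemeasurable hVm).2 ?_
    filter_upwards [ae_restrict_mem hBm] with y hy using hGV y hy
  have hmV : ∀ᵐ x ∂m, x ∈ V := Measure.ae_smul_measure hPV _
  -- comparison `m ≤ σ`
  have hmσ : m ≤ σ := by
    refine Measure.le_iff.2 fun E hE => ?_
    have e1 : m E = μH[(n:ℝ)] (G ⁻¹' E ∩ B) := by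
      rw [hm, Measure.smul_apply, hP, Measure.map_apply hGm hE, Measure.restrict_apply (hGm hE), kap_spec]
      rfl
    rw [e1, hσ, Measure.restrict_apply hE]
    have hL : LipschitzWith 1 (fun z : Euc n => C.pr (z - x0)) := by
      refine LipschitzWith.of_dist_le_mul fun z w => ?_
      have := C.lip.dist_le_mul (z - x0) (w - x0)
      simpa using this
    have e2 := hL.hausdorffMeasure_image_le (d := (n:ℝ)) (by positivity) (E ∩ (frontier Ω ∩ V))
    simp only [ENNReal.coe_one, ENNReal.one_rpow, one_mul] at e2
    refine (measure_mono ?_).trans e2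
    rintro y ⟨hyE, hyB⟩
    exact ⟨G y, ⟨hyE, hGF y hyB, hGV y hyB⟩, hcoord2 _ _⟩
  -- Gauss-Green with respect to `m`
  have GG : ∀ X : Euc n → Euc n, ContDiff ℝ 1 X → HasCompactSupport X → tsupport X ⊆ V →
      (kap n : ℝ) * (∫ x in Ω, divg X x) = ∫ x, ⟪X x, gradient f x⟫ / ⟪gradient f x, e⟫ ∂m := by
    intro X hX hXc hXV
    set w : Euc n → ℝ := fun x => ⟪X x, gradient f x⟫ / ⟪gradient f x, e⟫ with hw
    have hX0 : ∀ x, x ∉ tsupport X → X x = 0 := fun x hx => image_eq_zero_of_notMem_tsupport hx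
    have hw1 : ContDiff ℝ 1 w := by
      rw [contDiff_iff_contDiffAt]
      intro x
      by_cases hx : x ∈ tsupport X
      · have hne := (hVp x (hXV hx)).ne'
        exact (hX.contDiffAt.inner ℝ hgc.contDiffAt).div (hgc.contDiffAt.inner ℝ contDiffAt_const) hne
      · have : w =ᶠ[𝓝 x] fun _ => 0 := by
          filter_upwards [(isClosed_tsupport X).isOpen_compl.mem_nhds hx] with y hy
          simp [hw, hX0 y hy]
        exact contDiffAt_const.congr_of_eventuallyEq this
    have hwsup : tsupport w ⊆ tsupport X := by
      refine closure_mono fun x hx hx2 => hx ?_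
      simp only [hw, hx2, inner_zero_left, zero_div]
    have hwc : HasCompactSupport w := hXc.mono' ((subset_tsupport w).trans hwsup)
    set T : Euc n → Euc n := fun x => X x - w x • e with hTdef
    have hT : ContDiff ℝ 1 T := hX.sub (hw1.smul contDiff_const)
    have hTsub : Function.support T ⊆ tsupport X := by
      intro x hx
      by_contra hxn
      apply hx
      have : w x = 0 := by
        by_contra h
        exact hxn (hwsup (subset_tsupport w h))
      simp [hTdef, this, hX0 x hxn]
    have hTc : HasCompactSupport T := hXc.mono' hTsub
    have hTU : tsupport T ⊆ U :=
      (closure_minimal hTsub (isClosed_tsupport X)).trans (hXV.trans hVU)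
    have htan : ∀ x, ⟪gradient f x, T x⟫ = 0 := by
      intro x
      by_cases hx : x ∈ tsupport X
      · have hne := (hVp x (hXV hx)).ne'
        simp only [hTdef, inner_sub_right, inner_smul_right, hw]
        rw [div_mul_cancel₀ _ hne, real_inner_comm, sub_self]
      · have : T x = 0 := by
          by_contra h
          exact hx (hTsub h)
        rw [this, inner_zero_right]
    have hTz := tangential_GG hΩ hf h1 hT hTc hTU htan
    have hdec : ∀ x, divg X x = fderiv ℝ w x e + divg T x := by
      intro x
      have hwd := hw1.differentiable (by norm_num) x
      have hTd := hT.differentiable (by norm_num) x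
      rw [← divg_smul_const e hwd, ← divg_add (hwd.smul_const e) hTd]
      congr 1
      funext y
      simp [hTdef]
    have hfub := fubini_graph C x0 hw1 hwc hΩ.measurableSet hBm φ (by
      intro y hy t hne
      have hmem : x0 + (t • e + C.J y) ∈ tsupport w := by
        by_contra h
        apply hne
        have : fderiv ℝ w (x0 + (t • e + C.J y)) = 0 := by
          by_contra h'
          exact h (support_fderiv_subset ℝ h')
        simp [this]
      have hv := hXV (hwsup hmem)
      rw [hΩV _ hv, hφ2 y hy t ((hVmem _ _).1 hv).1]) (by
      intro y hy t
      by_contra hne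
      have hmem : x0 + (t • e + C.J y) ∈ tsupport w := by
        by_contra h
        apply hne
        have : fderiv ℝ w (x0 + (t • e + C.J y)) = 0 := by
          by_contra h'
          exact h (support_fderiv_subset ℝ h')
        simp [this]
      have hv := hXV (hwsup hmem)
      apply hy
      have := ((hVmem _ _).1 hv).2
      simpa [hB] using this) hene
    have hint1 : Integrable (fun x => fderiv ℝ w x e) := by
      refine Continuous.integrable_of_hasCompactSupport ?_ ?_
      · exact (hw1.continuous_fderiv (by norm_num)).clm_apply continuous_const
      · exact (hwc.fderiv (𝕜 := ℝ)).comp_left (g := fun L : Euc n →L[ℝ] ℝ => L e) (by simp)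
    have hint2 : Integrable (divg T) :=
      (divg_continuous hT).integrable_of_hasCompactSupport (divg_compact hTc)
    simp_rw [hdec]
    rw [integral_add hint1.integrableOn hint2.integrableOn, hTz, add_zero, hfub, hm,
      integral_smul_nnreal_measure, hP, integral_map hGm.aemeasurable hw1.continuous.aestronglyMeasurable]
    rfl
  -- comparison `σ ≤ q m`
  have hσm : σ ≤ ENNReal.ofReal q • m := by
    refine Measure.le_iff.2 fun E hE => ?_
    rw [hσ, Measure.restrict_apply hE]
    set N : Euc n → Euc n := V.indicator (fun x => (q * ⟪gradient f x, e⟫)⁻¹ • gradient f x) with hN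
    have hN1 : ∀ x, ‖N x‖ ≤ 1 := by
      intro x
      by_cases hx : x ∈ V
      · rw [hN, indicator_of_mem hx, norm_smul, norm_inv, Real.norm_eq_abs]
        have := hVp x hx
        rw [abs_of_pos (by positivity), inv_mul_le_iff₀ (by positivity), mul_one]
        exact hVq x hx
      · rw [hN, indicator_of_notMem hx]; simp
    haveI : IsFiniteMeasure P := by rw [hP]; infer_instance
    haveI : IsFiniteMeasure m := by rw [hm]; infer_instance
    haveI : IsFiniteMeasure (ENNReal.ofReal q • m) := m.smul_finite ENNReal.ofReal_ne_top
    refine (hausdorff_le_of_GG (τ := ENNReal.ofReal q • m) hΩ.measurableSet hVo hN1 ?_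
      (T := E ∩ (frontier Ω ∩ V)) ?_).trans (measure_mono inter_subset_left)
    · intro X hX hXc hXV
      rw [GG X (hX.of_le (by exact_mod_cast le_top)) hXc hXV, integral_smul_measure,
        ENNReal.toReal_ofReal (by linarith), smul_eq_mul, ← integral_const_mul]
      refine integral_congr_ae ?_
      filter_upwards [hmV] with x hx
      have := hVp x hx
      rw [hN, indicator_of_mem hx, inner_smul_right]
      field_simp
    · rintro x ⟨_, hxF, hxV⟩
      refine ⟨⟨‖gradient f x‖⁻¹ • gradient f x, ?_, ?_⟩, hxV⟩
      · have : 0 < ‖gradient f x‖ := norm_pos_iff.2 (hgr x (hVU hxV))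
        rw [norm_smul, norm_inv, norm_norm, inv_mul_cancel₀ this.ne']
      · exact blowup_of_regular hΩ hU (hVU hxV) (hf.differentiable (by norm_num) x) (hgr x (hVU hxV))
          ((hFV x hxV).1 hxF) h1
  have hfin : μH[(n : ℝ)] (frontier Ω ∩ V) < ⊤ := by
    have : σ univ ≤ (ENNReal.ofReal q • m) univ := hσm univ
    rw [hσ, Measure.restrict_apply_univ] at this
    refine this.trans_lt ?_
    haveI : IsFiniteMeasure P := by rw [hP]; infer_instance
    haveI : IsFiniteMeasure m := by rw [hm]; infer_instance
    haveI : IsFiniteMeasure (ENNReal.ofReal q • m) := m.smul_finite ENNReal.ofReal_ne_top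
    exact measure_lt_top _ _
  refine ⟨V, hVo, hx0V, hVU, hfin, ?_⟩
  intro X hX hXc hXV
  haveI : IsFiniteMeasure σ := ⟨by rw [hσ, Measure.restrict_apply_univ]; exact hfin⟩
  have hX0 : ∀ x, x ∉ V → X x = 0 := fun x hx => image_eq_zero_of_notMem_tsupport fun h => hx (hXV h)
  have hr1 : ∫ x in frontier Ω, ⟪X x, ‖gradient f x‖⁻¹ • gradient f x⟫ ∂μH[(n : ℝ)]
      = ∫ x, ⟪X x, ‖gradient f x‖⁻¹ • gradient f x⟫ ∂σ := by
    rw [hσ]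
    refine setIntegral_eq_of_subset_of_forall_diff_eq_zero isClosed_frontier.measurableSet inter_subset_left ?_
    rintro x ⟨h3, h4⟩
    rw [hX0 x fun h => h4 ⟨h3, h⟩, inner_zero_left]
  have hr2 : ∫ x in frontier Ω, ‖X x‖ ∂μH[(n : ℝ)] = ∫ x, ‖X x‖ ∂σ := by
    rw [hσ]
    refine setIntegral_eq_of_subset_of_forall_diff_eq_zero isClosed_frontier.measurableSet inter_subset_left ?_
    rintro x ⟨h3, h4⟩
    rw [hX0 x fun h => h4 ⟨h3, h⟩, norm_zero]
  rw [hr1, hr2, GG X hX hXc hXV]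
  have hXi : Integrable (fun x => ‖X x‖) σ :=
    (hX.continuous.integrable_of_hasCompactSupport hXc).norm
  have hgm : Measurable (gradient f) := hgc.continuous.measurable
  have hXm : Measurable X := hX.continuous.measurable
  have hle : ∀ x, |⟪X x, ‖gradient f x‖⁻¹ • gradient f x⟫| ≤ ‖X x‖ := by
    intro x
    refine (abs_real_inner_le_norm _ _).trans ?_
    refine mul_le_of_le_one_right (norm_nonneg _) ?_
    rw [norm_smul, norm_inv, norm_norm]
    exact inv_mul_le_one
  have hdiff : ∀ x ∈ V, |⟪X x, gradient f x⟫ / ⟪gradient f x, e⟫ - ⟪X x, ‖gradient f x‖⁻¹ • gradient f x⟫|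
      ≤ (q - 1) * ‖X x‖ := by
    intro x hx
    have hp := hVp x hx
    have hq' := hVq x hx
    have hG0 : 0 < ‖gradient f x‖ := norm_pos_iff.2 (hgr x (hVU hx))
    have hle2 : ⟪gradient f x, e⟫ ≤ ‖gradient f x‖ := by
      have := real_inner_le_norm (gradient f x) e
      rwa [hen, mul_one] at this
    rw [inner_smul_right, div_eq_inv_mul, ← sub_mul, abs_mul]
    have hc0 : 0 ≤ (⟪gradient f x, e⟫)⁻¹ - ‖gradient f x‖⁻¹ := by
      rw [sub_nonneg]; gcongr
    rw [abs_of_nonneg hc0]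
    calc _ ≤ ((⟪gradient f x, e⟫)⁻¹ - ‖gradient f x‖⁻¹) * (‖X x‖ * ‖gradient f x‖) := by
          gcongr; exact abs_real_inner_le_norm _ _
      _ = (‖gradient f x‖ * (⟪gradient f x, e⟫)⁻¹ - 1) * ‖X x‖ := by
          field_simp
      _ ≤ (q - 1) * ‖X x‖ := by
          gcongr
          rw [← div_eq_mul_inv, div_le_iff₀ hp]; exact hq'
  refine int_sandwich hq.le hmσ hσm hXi ?_ ?_ (Eventually.of_forall hle) (hmV.mono hdiff)
  · refine hXi.mono' ?_ (Eventually.of_forall hle)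
    exact (hXm.inner (hgm.norm.inv.smul hgm)).aestronglyMeasurable
  · have hXim := (hXi.mono_measure hmσ).const_mul q
    refine hXim.mono' ?_ ?_
    · exact ((hXm.inner hgm).div (hgm.inner measurable_const)).aestronglyMeasurable
    · filter_upwards [hmV] with x hx
      have a1 := hdiff x hx
      have a2 := hle x
      rw [Real.norm_eq_abs]
      have a3 := abs_sub_abs_le_abs_sub (⟪X x, gradient f x⟫ / ⟪gradient f x, e⟫) (⟪X x, ‖gradient f x‖⁻¹ • gradient f x⟫)
      nlinarith

lemma exists_pou {n : ℕ} {K : Set (Euc n)} (hK : IsCompact K) (V : Euc n → Set (Euc n))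
    (hV : ∀ x, IsOpen (V x)) (hmem : ∀ x, x ∈ V x) :
    ∃ (s : Finset (Euc n)) (χ : Euc n → Euc n → ℝ), (∀ i, ContDiff ℝ (⊤ : ℕ∞) (χ i)) ∧
      (∀ i x, 0 ≤ χ i x) ∧ (∀ i, tsupport (χ i) ⊆ V i) ∧ ∀ x ∈ K, ∑ i ∈ s, χ i x = 1 := by
  obtain ⟨f, hf⟩ := SmoothPartitionOfUnity.exists_isSubordinate (modelWithCornersSelf ℝ (Euc n)) hK.isClosed
    V hV (fun x _ => mem_iUnion.2 ⟨x, hmem x⟩)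
  have hfin := f.locallyFinite.finite_nonempty_inter_compact hK
  refine ⟨hfin.toFinset, fun i => f i, fun i => (f i).contMDiff.contDiff, fun i x => f.nonneg i x, hf, ?_⟩
  intro x hx
  rw [← f.sum_eq_one hx]
  symm
  apply finsum_eq_sum_of_support_subset
  intro i hi
  simp only [Finite.coe_toFinset]
  exact ⟨x, hi, hx⟩

lemma divg_sum {n : ℕ} {ι : Type*} (s : Finset ι) {X : ι → Euc n → Euc n} {x : Euc n}
    (hX : ∀ i ∈ s, DifferentiableAt ℝ (X i) x) :
    divg (fun y => ∑ i ∈ s, X i y) x = ∑ i ∈ s, divg (X i) x := by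
  unfold divg
  rw [fderiv_fun_sum hX, Finset.sum_comm]
  refine Finset.sum_congr rfl fun i _ => ?_
  simp [sum_inner]

namespace C2Domain
variable {n : ℕ} (D : C2Domain n)

/-- The boundary measure. -/
def sg : Measure (Euc n) := μH[(n : ℝ)].restrict (frontier D.carrier)

lemma compact_frontier : IsCompact (frontier D.carrier) :=
  Metric.isCompact_of_isClosed_isBounded isClosed_frontier (D.bounded.closure.subset frontier_subset_closure)

lemma frontier_lt_top : μH[(n : ℝ)] (frontier D.carrier) < ⊤ := by
  refine D.compact_frontier.measure_lt_top_of_nhdsWithin fun x hx => ?_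
  obtain ⟨U, f, hU, hxU, hf, hgr, h1, h2⟩ := D.boundaryC2 x hx
  have h0 : f x = 0 := by
    have : x ∈ frontier D.carrier ∩ U := ⟨hx, hxU⟩
    rw [h2] at this; exact this.2
  obtain ⟨V, hVo, hxV, _, hfin, _⟩ := local_GG D.isOpen hU hf hxU h0 hgr h1 h2 (q := 2) (by norm_num)
  exact ⟨frontier D.carrier ∩ V, inter_mem self_mem_nhdsWithin (mem_nhdsWithin_of_mem_nhds (hVo.mem_nhds hxV)), hfin⟩

instance sg_finite : IsFiniteMeasure D.sg :=
  ⟨by rw [sg, Measure.restrict_apply_univ]; exact D.frontier_lt_top⟩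

lemma ae_frontier : ∀ᵐ x ∂D.sg, x ∈ frontier D.carrier :=
  ae_restrict_mem isClosed_frontier.measurableSet

lemma nu_eq {x : Euc n} (hx : x ∈ frontier D.carrier) {U : Set (Euc n)} {f : Euc n → ℝ} (hU : IsOpen U)
    (hxU : x ∈ U) (hf : ContDiff ℝ 2 f) (hgr : ∀ y ∈ U, gradient f y ≠ 0)
    (h1 : D.carrier ∩ U = {y ∈ U | f y < 0}) (h2 : frontier D.carrier ∩ U = {y ∈ U | f y = 0}) :
    D.nu x = ‖gradient f x‖⁻¹ • gradient f x := by
  have := (D.weingarten x hx U f hU hxU hf hgr h1 h2).1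
  have hne : ‖gradient f x‖ ≠ 0 := norm_ne_zero_iff.2 (hgr x hxU)
  have h3 : ‖gradient f x‖⁻¹ • gradient f x = ‖gradient f x‖⁻¹ • (‖gradient f x‖ • D.nu x) := by
    rw [← this]
  rw [h3, smul_smul, inv_mul_cancel₀ hne, one_smul]

lemma nu_norm {x : Euc n} (hx : x ∈ frontier D.carrier) : ‖D.nu x‖ = 1 := by
  have := (D.frame_orthonormal x hx).1 (Fin.last n)
  simpa using this

lemma nu_cont : ContinuousOn D.nu (frontier D.carrier) := by
  intro x hx
  obtain ⟨U, f, hU, hxU, hf, hgr, h1, h2⟩ := D.boundaryC2 x hx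
  have hc : ContinuousAt (fun y => ‖gradient f y‖⁻¹ • gradient f y) x := by
    have := (grad_contDiff hf).continuous.continuousAt (x := x)
    exact (this.norm.inv₀ (norm_ne_zero_iff.2 (hgr x hxU))).smul this
  refine (hc.continuousWithinAt (s := frontier D.carrier)).congr_of_eventuallyEq ?_
    (D.nu_eq hx hU hxU hf hgr h1 h2)
  filter_upwards [self_mem_nhdsWithin, mem_nhdsWithin_of_mem_nhds (hU.mem_nhds hxU)] with y hy hyU
  exact D.nu_eq hy hU hyU hf hgr h1 h2

lemma nu_meas : AEStronglyMeasurable D.nu D.sg :=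
  D.nu_cont.aestronglyMeasurable isClosed_frontier.measurableSet

lemma int_inner_nu {X : Euc n → Euc n} (hX : Continuous X) (hXc : HasCompactSupport X) :
    Integrable (fun x => ⟪X x, D.nu x⟫) D.sg := by
  refine (hX.integrable_of_hasCompactSupport hXc).norm.mono' (hX.aestronglyMeasurable.inner D.nu_meas) ?_
  filter_upwards [D.ae_frontier] with x hx
  have := norm_inner_le_norm (𝕜 := ℝ) (X x) (D.nu x)
  rwa [D.nu_norm hx, mul_one] at this

lemma GG_eps {q : ℝ} (hq : 1 < q) {X : Euc n → Euc n} (hX : ContDiff ℝ 1 X) (hXc : HasCompactSupport X) :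
    |(kap n : ℝ) * (∫ x in D.carrier, divg X x) - ∫ x, ⟪X x, D.nu x⟫ ∂D.sg|
      ≤ 2 * (q - 1) * ∫ x, ‖X x‖ ∂D.sg := by
  have hloc : ∀ x : Euc n, ∃ V, IsOpen V ∧ x ∈ V ∧ ∀ X : Euc n → Euc n, ContDiff ℝ 1 X →
      HasCompactSupport X → tsupport X ⊆ V →
      |(kap n : ℝ) * (∫ x in D.carrier, divg X x) - ∫ x, ⟪X x, D.nu x⟫ ∂D.sg|
      ≤ 2 * (q - 1) * ∫ x, ‖X x‖ ∂D.sg := by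
    intro x
    by_cases hx : x ∈ frontier D.carrier
    · obtain ⟨U, f, hU, hxU, hf, hgr, h1, h2⟩ := D.boundaryC2 x hx
      have h0 : f x = 0 := by
        have : x ∈ frontier D.carrier ∩ U := ⟨hx, hxU⟩
        rw [h2] at this; exact this.2
      obtain ⟨V, hVo, hxV, hVU, _, hGG⟩ := local_GG D.isOpen hU hf hxU h0 hgr h1 h2 hq
      refine ⟨V, hVo, hxV, fun X hX hXc hXV => ?_⟩
      have := hGG X hX hXc hXV
      have heq : ∫ x in frontier D.carrier, ⟪X x, ‖gradient f x‖⁻¹ • gradient f x⟫ ∂μH[(n : ℝ)]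
          = ∫ x, ⟪X x, D.nu x⟫ ∂D.sg := by
        rw [sg]
        refine integral_congr_ae ?_
        filter_upwards [ae_restrict_mem isClosed_frontier.measurableSet] with y hy
        by_cases hyV : y ∈ V
        · rw [D.nu_eq hy hU (hVU hyV) hf hgr h1 h2]
        · rw [image_eq_zero_of_notMem_tsupport fun h => hyV (hXV h), inner_zero_left, inner_zero_left]
      rw [heq] at this
      exact this
    · have hz : ∀ X : Euc n → Euc n, tsupport X ⊆ (frontier D.carrier)ᶜ →
          ∫ x, ⟪X x, D.nu x⟫ ∂D.sg = 0 := by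
        intro X hXV
        refine integral_eq_zero_of_ae ?_
        filter_upwards [D.ae_frontier] with y hy
        rw [image_eq_zero_of_notMem_tsupport fun h => hXV h hy, inner_zero_left]; rfl
      have hnn : ∀ X : Euc n → Euc n, 0 ≤ 2 * (q - 1) * ∫ x, ‖X x‖ ∂D.sg := by
        intro X
        have : 0 ≤ ∫ x, ‖X x‖ ∂D.sg := integral_nonneg fun x => norm_nonneg _
        have : 0 < q - 1 := by linarith
        positivity
      by_cases hxD : x ∈ D.carrier
      · refine ⟨D.carrier, D.isOpen, hxD, fun X hX hXc hXV => ?_⟩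
        have e1 : ∫ x in D.carrier, divg X x = 0 := by
          rw [setIntegral_eq_integral_of_forall_compl_eq_zero]
          · exact integral_divg_zero hX hXc
          · intro y hy; exact divg_support fun h => hy (hXV h)
        rw [e1, hz X (fun y hy h => by
          rw [D.isOpen.frontier_eq] at h; exact h.2 (hXV hy))]
        simpa using hnn X
      · have hxc : x ∈ (closure D.carrier)ᶜ := by
          intro h; apply hx; rw [D.isOpen.frontier_eq]; exact ⟨h, hxD⟩
        refine ⟨(closure D.carrier)ᶜ, isClosed_closure.isOpen_compl, hxc, fun X hX hXc hXV => ?_⟩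
        have e1 : ∫ x in D.carrier, divg X x = 0 := by
          refine setIntegral_eq_zero_of_forall_eq_zero fun y hy => ?_
          exact divg_support fun h => hXV h (subset_closure hy)
        rw [e1, hz X (fun y hy h => hXV hy (frontier_subset_closure h))]
        simpa using hnn X
  choose V hVo hxV hV using hloc
  obtain ⟨s, χ, hχ1, hχ2, hχ3, hχ4⟩ := exists_pou hXc V hVo hxV
  have hχX : ∀ i, ContDiff ℝ 1 (fun y => χ i y • X y) := fun i =>
    ((hχ1 i).of_le (by exact_mod_cast le_top)).smul hX
  have hχc : ∀ i, HasCompactSupport (fun y => χ i y • X y) := fun i => hXc.smul_left (f := χ i)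
  have hχs : ∀ i, tsupport (fun y => χ i y • X y) ⊆ V i := fun i =>
    (closure_mono (Function.support_smul_subset_left (χ i) X)).trans (hχ3 i)
  have hdec : X = fun y => ∑ i ∈ s, χ i y • X y := by
    funext y
    by_cases hy : y ∈ tsupport X
    · rw [← Finset.sum_smul, hχ4 y hy, one_smul]
    · simp [image_eq_zero_of_notMem_tsupport hy]
  have e1 : ∫ x in D.carrier, divg X x = ∑ i ∈ s, ∫ x in D.carrier, divg (fun y => χ i y • X y) x := by
    rw [← integral_finsetSum]
    · congr 1
      funext x
      conv_lhs => rw [hdec]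
      exact divg_sum s fun i _ => (hχX i).differentiable (by norm_num) x
    · intro i _
      exact ((divg_continuous (hχX i)).integrable_of_hasCompactSupport (divg_compact (hχc i))).integrableOn
  have e2 : ∫ x, ⟪X x, D.nu x⟫ ∂D.sg = ∑ i ∈ s, ∫ x, ⟪χ i x • X x, D.nu x⟫ ∂D.sg := by
    rw [← integral_finsetSum]
    · congr 1
      funext x
      conv_lhs => rw [hdec]
      rw [sum_inner]
    · intro i _
      exact D.int_inner_nu (hχX i).continuous (hχc i)
  have e3 : ∫ x, ‖X x‖ ∂D.sg = ∑ i ∈ s, ∫ x, ‖χ i x • X x‖ ∂D.sg := by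
    rw [← integral_finsetSum]
    · congr 1
      funext x
      by_cases hx : x ∈ tsupport X
      · simp_rw [norm_smul, Real.norm_eq_abs, abs_of_nonneg (hχ2 _ x)]
        rw [← Finset.sum_mul, hχ4 x hx, one_mul]
      · simp [image_eq_zero_of_notMem_tsupport hx]
    · intro i _
      exact ((hχX i).continuous.integrable_of_hasCompactSupport (hχc i)).norm
  rw [e1, e2, e3, Finset.mul_sum, Finset.mul_sum, ← Finset.sum_sub_distrib]
  exact (Finset.abs_sum_le_sum_abs _ _).trans
    (Finset.sum_le_sum fun i _ => hV i _ (hχX i) (hχc i) (hχs i))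

/-- Gauss-Green formula for `C²` domains. -/
theorem GG {X : Euc n → Euc n} (hX : ContDiff ℝ 1 X) (hXc : HasCompactSupport X) :
    (kap n : ℝ) * (∫ x in D.carrier, divg X x) = ∫ x, ⟪X x, D.nu x⟫ ∂D.sg := by
  have h : ∀ q ∈ Ioi (1:ℝ), |(kap n : ℝ) * (∫ x in D.carrier, divg X x) - ∫ x, ⟪X x, D.nu x⟫ ∂D.sg|
      ≤ 2 * (q - 1) * ∫ x, ‖X x‖ ∂D.sg := fun q hq => D.GG_eps hq hX hXc
  have hlim : Tendsto (fun q : ℝ => 2 * (q - 1) * ∫ x, ‖X x‖ ∂D.sg) (𝓝[>] 1) (𝓝 0) := by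
    have : Continuous (fun q : ℝ => 2 * (q - 1) * ∫ x, ‖X x‖ ∂D.sg) := by fun_prop
    have h2 := (this.tendsto 1).mono_left (nhdsWithin_le_nhds (s := Ioi 1))
    simpa using h2
  have := ge_of_tendsto hlim (eventually_of_mem self_mem_nhdsWithin h)
  exact sub_eq_zero.1 (abs_eq_zero.1 (le_antisymm this (abs_nonneg _)))
end C2Domain

section
open scoped Convolution

lemma mollify {n : ℕ} {b : Euc n → ℝ} (hb : ContDiff ℝ 1 b) (hc : HasCompactSupport b) {ε : ℝ} (hε : 0 < ε) :
    ∃ b' : Euc n → ℝ, ContDiff ℝ 2 b' ∧ HasCompactSupport b' ∧ ∀ x, ‖fderiv ℝ b' x - fderiv ℝ b x‖ ≤ ε := by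
  have hcd : Continuous (fderiv ℝ b) := hb.continuous_fderiv (by norm_num)
  have huc : UniformContinuous (fderiv ℝ b) := (hc.fderiv (𝕜 := ℝ)).uniformContinuous_of_continuous hcd
  obtain ⟨δ, hδ, hδ2⟩ := Metric.uniformContinuous_iff.1 huc ε hε
  let φ : ContDiffBump (0 : Euc n) := ⟨δ / 2, δ, by linarith, by linarith⟩
  have hli : LocallyIntegrable b (volume : Measure (Euc n)) := hb.continuous.locallyIntegrable
  have hlφ : LocallyIntegrable (φ.normed volume) (volume : Measure (Euc n)) :=
    φ.continuous_normed.locallyIntegrable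
  refine ⟨(φ.normed volume) ⋆[ContinuousLinearMap.lsmul ℝ ℝ, volume] b, ?_, ?_, ?_⟩
  · exact φ.hasCompactSupport_normed.contDiff_convolution_left _ φ.contDiff_normed hli
  · exact φ.hasCompactSupport_normed.convolution _ hc
  · intro x
    have h1 := (hc.hasFDerivAt_convolution_right (ContinuousLinearMap.lsmul ℝ ℝ) hlφ hb x).fderiv
    rw [h1]
    have h2 : ((φ.normed volume) ⋆[(ContinuousLinearMap.lsmul ℝ ℝ).precompR (Euc n), volume] (fderiv ℝ b)) x
        = ((φ.normed volume) ⋆[ContinuousLinearMap.lsmul ℝ ℝ, volume] (fderiv ℝ b)) x := by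
      rw [convolution_def, convolution_def]
      congr 1
    rw [h2, ← dist_eq_norm]
    refine φ.dist_normed_convolution_le hcd.aestronglyMeasurable ?_
    intro y hy
    exact (hδ2 hy).le

namespace C2Domain
variable {n : ℕ} (D : C2Domain n)

lemma curl_C2 {b : Euc n → ℝ} (hb : ContDiff ℝ 2 b) (hc : HasCompactSupport b) (u v : Euc n) :
    ∫ x, (fderiv ℝ b x u * ⟪v, D.nu x⟫ - fderiv ℝ b x v * ⟪u, D.nu x⟫) ∂D.sg = 0 := by
  have hd : ContDiff ℝ 1 (fderiv ℝ b) := hb.fderiv_right (by norm_num)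
  have hdu : ∀ u, ContDiff ℝ 1 (fun x => fderiv ℝ b x u) := fun u => hd.clm_apply contDiff_const
  have hcu : ∀ u, HasCompactSupport (fun x => fderiv ℝ b x u) := fun u =>
    (hc.fderiv (𝕜 := ℝ)).comp_left (g := fun L : Euc n →L[ℝ] ℝ => L u) (by simp)
  have hdd : ∀ x, DifferentiableAt ℝ (fderiv ℝ b) x := fun x => hd.differentiable (by norm_num) x
  have hsec : ∀ u v x, fderiv ℝ (fun x => fderiv ℝ b x u) x v = fderiv ℝ (fderiv ℝ b) x v u := by
    intro u v x
    have := (hdd x).hasFDerivAt.clm_apply (hasFDerivAt_const u x)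
    rw [this.fderiv]
    simp
  set Y : Euc n → Euc n := fun x => fderiv ℝ b x u • v + (- fderiv ℝ b x v) • u with hY
  have hYd : ContDiff ℝ 1 Y := ((hdu u).smul contDiff_const).add ((hdu v).neg.smul contDiff_const)
  have hYc : HasCompactSupport Y :=
    ((hcu u).smul_right (f' := fun _ => v)).add ((hcu v).neg.smul_right (f' := fun _ => u))
  have hdiv : ∀ x, divg Y x = 0 := by
    intro x
    have d1 := (hdu u).differentiable (by norm_num) x
    have d2 := (hdu v).neg.differentiable (by norm_num) x
    rw [hY, divg_add (d1.smul_const v) (d2.smul_const u), divg_smul_const v d1, divg_smul_const u d2,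
      fderiv_fun_neg]
    have hs : IsSymmSndFDerivAt ℝ b x := hb.contDiffAt.isSymmSndFDerivAt (by simp)
    have := hs.eq u v
    simp [hsec, this]
  have := D.GG hYd hYc
  simp only [hdiv, integral_zero, mul_zero] at this
  rw [this]
  congr 1
  funext x
  simp only [hY, inner_add_left, inner_smul_left]
  simp
  ring

lemma curl_C1 {b : Euc n → ℝ} (hb : ContDiff ℝ 1 b) (hc : HasCompactSupport b) (u v : Euc n) :
    ∫ x, (fderiv ℝ b x u * ⟪v, D.nu x⟫ - fderiv ℝ b x v * ⟪u, D.nu x⟫) ∂D.sg = 0 := by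
  have hnull : ∀ {b : Euc n → ℝ}, ContDiff ℝ 1 b → HasCompactSupport b →
      Integrable (fun x => fderiv ℝ b x u * ⟪v, D.nu x⟫ - fderiv ℝ b x v * ⟪u, D.nu x⟫) D.sg := by
    intro b hb hc
    have hg : ∀ u v, Integrable (fun x => fderiv ℝ b x u * ⟪v, D.nu x⟫) D.sg := by
      intro u v
      have h1 : Continuous (fun x => fderiv ℝ b x u • v) :=
        ((hb.continuous_fderiv (by norm_num)).clm_apply continuous_const).smul continuous_const
      have h2 : HasCompactSupport (fun x => fderiv ℝ b x u • v) :=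
        (hc.fderiv (𝕜 := ℝ)).comp_left (g := fun L : Euc n →L[ℝ] ℝ => L u • v) (by simp)
      have := D.int_inner_nu h1 h2
      simpa [inner_smul_left] using this
    exact (hg u v).sub (hg v u)
  have key : ∀ ε > 0, |∫ x, (fderiv ℝ b x u * ⟪v, D.nu x⟫ - fderiv ℝ b x v * ⟪u, D.nu x⟫) ∂D.sg|
      ≤ ε * (2 * ‖u‖ * ‖v‖ * D.sg.real univ) := by
    intro ε hε
    obtain ⟨b', hb', hc', hbb⟩ := mollify hb hc hε
    have h0 := D.curl_C2 hb' hc' u v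
    rw [← sub_zero (∫ x, (fderiv ℝ b x u * ⟪v, D.nu x⟫ - fderiv ℝ b x v * ⟪u, D.nu x⟫) ∂D.sg), ← h0,
      ← integral_sub (hnull hb hc) (hnull (hb'.of_le (by norm_num)) hc')]
    rw [← Real.norm_eq_abs]
    have := norm_integral_le_of_norm_le_const (μ := D.sg) (C := ε * (2 * ‖u‖ * ‖v‖))
      (f := fun x => (fderiv ℝ b x u * ⟪v, D.nu x⟫ - fderiv ℝ b x v * ⟪u, D.nu x⟫)
        - (fderiv ℝ b' x u * ⟪v, D.nu x⟫ - fderiv ℝ b' x v * ⟪u, D.nu x⟫)) (by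
      filter_upwards [D.ae_frontier] with x hx
      have e1 : ∀ u, |fderiv ℝ b x u - fderiv ℝ b' x u| ≤ ε * ‖u‖ := by
        intro u
        have := (fderiv ℝ b' x - fderiv ℝ b x).le_of_opNorm_le (hbb x) u
        rw [abs_sub_comm]
        simpa using this
      have e2 : ∀ v, |⟪v, D.nu x⟫| ≤ ‖v‖ := by
        intro v
        have := abs_real_inner_le_norm v (D.nu x)
        rwa [D.nu_norm hx, mul_one] at this
      have e3 : (fderiv ℝ b x u * ⟪v, D.nu x⟫ - fderiv ℝ b x v * ⟪u, D.nu x⟫)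
        - (fderiv ℝ b' x u * ⟪v, D.nu x⟫ - fderiv ℝ b' x v * ⟪u, D.nu x⟫)
        = (fderiv ℝ b x u - fderiv ℝ b' x u) * ⟪v, D.nu x⟫ - (fderiv ℝ b x v - fderiv ℝ b' x v) * ⟪u, D.nu x⟫ := by
        ring
      rw [e3, Real.norm_eq_abs]
      refine (abs_sub _ _).trans ?_
      rw [abs_mul, abs_mul]
      have f1 := mul_le_mul (e1 u) (e2 v) (abs_nonneg _) (by positivity)
      have f2 := mul_le_mul (e1 v) (e2 u) (abs_nonneg _) (by positivity)
      nlinarith)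
    rwa [mul_assoc] at this
  have hlim : Tendsto (fun ε : ℝ => ε * (2 * ‖u‖ * ‖v‖ * D.sg.real univ)) (𝓝[>] 0) (𝓝 0) := by
    have : Continuous (fun ε : ℝ => ε * (2 * ‖u‖ * ‖v‖ * D.sg.real univ)) := by fun_prop
    have h2 := (this.tendsto 0).mono_left (nhdsWithin_le_nhds (s := Ioi 0))
    simpa using h2
  have := ge_of_tendsto hlim (eventually_of_mem self_mem_nhdsWithin key)
  exact abs_eq_zero.1 (le_antisymm this (abs_nonneg _))

lemma H_one (x : Euc n) : D.H 1 x = ∑ i, D.kappa i x := by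
  unfold C2Domain.H
  rw [Finset.powersetCard_one, Finset.sum_map]
  simp

end C2Domain

/-- The normalized gradient. -/
def nrmGrad {n : ℕ} (f : Euc n → ℝ) (x : Euc n) : Euc n := ‖gradient f x‖⁻¹ • gradient f x

lemma nrmGrad_contDiffAt {n : ℕ} {f : Euc n → ℝ} (hf : ContDiff ℝ 2 f) {x : Euc n} (hx : gradient f x ≠ 0) :
    ContDiffAt ℝ 1 (nrmGrad f) x := by
  have hg := (grad_contDiff hf).contDiffAt (x := x)
  exact ((hg.norm ℝ hx).inv (norm_ne_zero_iff.2 hx)).smul hg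

lemma nrmGrad_norm {n : ℕ} {f : Euc n → ℝ} {x : Euc n} (hx : gradient f x ≠ 0) : ‖nrmGrad f x‖ = 1 := by
  rw [nrmGrad, norm_smul, norm_inv, norm_norm, inv_mul_cancel₀ (norm_ne_zero_iff.2 hx)]

lemma nrmGrad_orth {n : ℕ} {f : Euc n → ℝ} (hf : ContDiff ℝ 2 f) {U : Set (Euc n)} (hU : IsOpen U)
    (hgr : ∀ y ∈ U, gradient f y ≠ 0) {x : Euc n} (hx : x ∈ U) (v : Euc n) :
    ⟪fderiv ℝ (nrmGrad f) x v, nrmGrad f x⟫ = 0 := by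
  have hd := ((nrmGrad_contDiffAt hf (hgr x hx)).differentiableAt (by norm_num)).hasFDerivAt
  have h1 := (hd.inner ℝ hd).fderiv
  have h2 : (fun y => ⟪nrmGrad f y, nrmGrad f y⟫) =ᶠ[𝓝 x] fun _ => (1:ℝ) := by
    filter_upwards [hU.mem_nhds hx] with y hy
    rw [real_inner_self_eq_norm_sq, nrmGrad_norm (hgr y hy)]; norm_num
  rw [h2.fderiv_eq] at h1
  have h3 := congrArg (fun L => L v) h1
  simp [fderivInnerCLM_apply] at h3
  rw [real_inner_comm] at h3
  linarith

lemma divg_eq_sum {n : ℕ} (X : Euc n → Euc n) (x : Euc n) (b : OrthonormalBasis (Fin (n+1)) ℝ (Euc n)) :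
    divg X x = ∑ i, ⟪fderiv ℝ X x (b i), b i⟫ := by
  have h1 := LinearMap.trace_eq_sum_inner (fderiv ℝ X x).toLinearMap b
  have h2 := LinearMap.trace_eq_sum_inner (fderiv ℝ X x).toLinearMap (EuclideanSpace.basisFun (Fin (n+1)) ℝ)
  rw [h1] at h2
  unfold divg
  simp only [EuclideanSpace.basisFun_apply] at h2
  simp_rw [real_inner_comm] at h2 ⊢
  exact h2.symm

namespace C2Domain
variable {n : ℕ} (D : C2Domain n)

lemma divg_nrmGrad {x : Euc n} (hx : x ∈ frontier D.carrier) {U : Set (Euc n)} {f : Euc n → ℝ} (hU : IsOpen U)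
    (hxU : x ∈ U) (hf : ContDiff ℝ 2 f) (hgr : ∀ y ∈ U, gradient f y ≠ 0)
    (h1 : D.carrier ∩ U = {y ∈ U | f y < 0}) (h2 : frontier D.carrier ∩ U = {y ∈ U | f y = 0}) :
    divg (nrmGrad f) x = D.H 1 x := by
  have hon := D.frame_orthonormal x hx
  have hspan := hon.linearIndependent.span_eq_top_of_card_eq_finrank' (by simp)
  let b : OrthonormalBasis (Fin (n+1)) ℝ (Euc n) := OrthonormalBasis.mk hon hspan.ge
  have hb : ∀ i, b i = (Fin.snoc (fun j : Fin n => D.tau j x) (D.nu x) : Fin (n + 1) → Euc n) i := by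
    intro i; simp [b]
  have hw := (D.weingarten x hx U f hU hxU hf hgr h1 h2).2
  rw [divg_eq_sum _ _ b, Fin.sum_univ_castSucc, D.H_one]
  have hlast : ⟪fderiv ℝ (nrmGrad f) x (b (Fin.last n)), b (Fin.last n)⟫ = 0 := by
    rw [hb]
    simp only [Fin.snoc_last]
    have := D.nu_eq hx hU hxU hf hgr h1 h2
    have h3 := nrmGrad_orth hf hU hgr hxU (D.nu x)
    rw [show nrmGrad f x = D.nu x from this.symm] at h3
    exact h3
  rw [hlast, add_zero]
  refine Finset.sum_congr rfl fun i _ => ?_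
  rw [hb]
  simp only [Fin.snoc_castSucc]
  have h3 : fderiv ℝ (nrmGrad f) x (D.tau i x) = D.kappa i x • D.tau i x := hw i
  have h4 : ‖D.tau i x‖ = 1 := by
    have := hon.1 (Fin.castSucc i)
    simpa using this
  rw [h3, inner_smul_left, real_inner_self_eq_norm_sq, h4]
  simp

lemma H_cont : ContinuousOn (D.H 1) (frontier D.carrier) := by
  intro x hx
  obtain ⟨U, f, hU, hxU, hf, hgr, h1, h2⟩ := D.boundaryC2 x hx
  have hc : ContinuousAt (divg (nrmGrad f)) x := by
    have hN := nrmGrad_contDiffAt hf (hgr x hxU)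
    have : ContinuousAt (fderiv ℝ (nrmGrad f)) x := (hN.fderiv_right (m := 0) (by norm_num)).continuousAt
    unfold divg
    fun_prop
  refine (hc.continuousWithinAt (s := frontier D.carrier)).congr_of_eventuallyEq ?_
    (D.divg_nrmGrad hx hU hxU hf hgr h1 h2).symm
  filter_upwards [self_mem_nhdsWithin, mem_nhdsWithin_of_mem_nhds (hU.mem_nhds hxU)] with y hy hyU
  exact (D.divg_nrmGrad hy hU hyU hf hgr h1 h2).symm

lemma H_meas : AEStronglyMeasurable (D.H 1) D.sg :=
  D.H_cont.aestronglyMeasurable isClosed_frontier.measurableSet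

lemma H_int : Integrable (D.H 1) D.sg := by
  obtain ⟨K, hK⟩ := D.compact_frontier.exists_bound_of_continuousOn D.H_cont
  refine Integrable.of_bound D.H_meas K ?_
  filter_upwards [D.ae_frontier] with x hx using hK x hx

lemma Hg_int {X : Euc n → Euc n} (hX : Continuous X) (hXc : HasCompactSupport X) :
    Integrable (fun x => D.H 1 x * ⟪X x, D.nu x⟫) D.sg := by
  obtain ⟨K, hK⟩ := D.compact_frontier.exists_bound_of_continuousOn D.H_cont
  refine (D.int_inner_nu hX hXc).bdd_mul (c := K) D.H_meas ?_
  filter_upwards [D.ae_frontier] with x hx using hK x hx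

lemma fv_int {X : Euc n → Euc n} (hX : ContDiff ℝ 1 X) (hXc : HasCompactSupport X) :
    Integrable (fun x => divg X x - ⟪fderiv ℝ X x (D.nu x), D.nu x⟫) D.sg := by
  have hcd := hX.continuous_fderiv (by norm_num)
  refine Integrable.sub ?_ ?_
  · exact (divg_continuous hX).integrable_of_hasCompactSupport (divg_compact hXc)
  · refine (hcd.integrable_of_hasCompactSupport (hXc.fderiv (𝕜 := ℝ))).norm.mono' ?_ ?_
    · exact (isBoundedBilinearMap_apply.continuous.comp_aestronglyMeasurable (hcd.aestronglyMeasurable.prodMk D.nu_meas)).inner D.nu_meas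
    · filter_upwards [D.ae_frontier] with x hx
      refine (norm_inner_le_norm _ _).trans ?_
      rw [D.nu_norm hx, mul_one]
      have := (fderiv ℝ X x).le_opNorm (D.nu x)
      rwa [D.nu_norm hx, mul_one] at this

end C2Domain

end

lemma curl_alg {n : ℕ} (A B : Euc n →L[ℝ] Euc n) (X N : Euc n) (hN : ‖N‖ = 1) (hB : ∀ v, ⟪B v, N⟫ = 0)
    (e : OrthonormalBasis (Fin (n+1)) ℝ (Euc n)) :
    ∑ i, ∑ j, ((⟪A (e j), e j⟫ * ⟪N, e i⟫ + ⟪X, e j⟫ * ⟪B (e j), e i⟫) * ⟪e i, N⟫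
      - (⟪A (e i), e j⟫ * ⟪N, e i⟫ + ⟪X, e j⟫ * ⟪B (e i), e i⟫) * ⟪e j, N⟫)
    = (∑ j, ⟪A (e j), e j⟫) - ⟪A N, N⟫ - ⟪X, N⟫ * ∑ i, ⟪B (e i), e i⟫ := by
  have hNN : ∑ i, ⟪N, e i⟫ * ⟪e i, N⟫ = 1 := by
    rw [e.sum_inner_mul_inner, real_inner_self_eq_norm_sq, hN]; norm_num
  have t1 : ∑ i, ∑ j, (⟪A (e j), e j⟫ * ⟪N, e i⟫) * ⟪e i, N⟫ = ∑ j, ⟪A (e j), e j⟫ := by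
    rw [Finset.sum_comm]
    refine Finset.sum_congr rfl fun j _ => ?_
    simp_rw [mul_assoc]
    rw [← Finset.mul_sum, hNN, mul_one]
  have t2 : ∑ i, ∑ j, (⟪X, e j⟫ * ⟪B (e j), e i⟫) * ⟪e i, N⟫ = 0 := by
    rw [Finset.sum_comm]
    refine Finset.sum_eq_zero fun j _ => ?_
    simp_rw [mul_assoc]
    rw [← Finset.mul_sum, e.sum_inner_mul_inner, hB, mul_zero]
  have t3 : ∑ i, ∑ j, (⟪A (e i), e j⟫ * ⟪N, e i⟫) * ⟪e j, N⟫ = ⟪A N, N⟫ := by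
    have : ∀ i, ∑ j, (⟪A (e i), e j⟫ * ⟪N, e i⟫) * ⟪e j, N⟫ = ⟪N, e i⟫ * ⟪A (e i), N⟫ := by
      intro i
      rw [← e.sum_inner_mul_inner (A (e i)) N, Finset.mul_sum]
      exact Finset.sum_congr rfl fun j _ => by ring
    simp_rw [this]
    conv_rhs => rw [← e.sum_repr N, map_sum, e.sum_repr N, sum_inner]
    refine Finset.sum_congr rfl fun i _ => ?_
    rw [map_smul, inner_smul_left, e.repr_apply_apply, real_inner_comm N (e i)]; simp
  have t4 : ∑ i, ∑ j, (⟪X, e j⟫ * ⟪B (e i), e i⟫) * ⟪e j, N⟫ = ⟪X, N⟫ * ∑ i, ⟪B (e i), e i⟫ := by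
    rw [Finset.mul_sum]
    refine Finset.sum_congr rfl fun i _ => ?_
    rw [← e.sum_inner_mul_inner X N, Finset.sum_mul]
    exact Finset.sum_congr rfl fun j _ => by ring
  rw [← t1, ← t3, ← t4]
  have t2' := t2
  simp_rw [add_mul, Finset.sum_sub_distrib, Finset.sum_add_distrib]
  rw [t2]; ring

namespace C2Domain
variable {n : ℕ} (D : C2Domain n)

lemma curl_int {b : Euc n → ℝ} (hb : ContDiff ℝ 1 b) (hc : HasCompactSupport b) (u v : Euc n) :
      Integrable (fun x => fderiv ℝ b x u * ⟪v, D.nu x⟫ - fderiv ℝ b x v * ⟪u, D.nu x⟫) D.sg := by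
  have hg : ∀ u v, Integrable (fun x => fderiv ℝ b x u * ⟪v, D.nu x⟫) D.sg := by
    intro u v
    have h1 : Continuous (fun x => fderiv ℝ b x u • v) :=
      ((hb.continuous_fderiv (by norm_num)).clm_apply continuous_const).smul continuous_const
    have h2 : HasCompactSupport (fun x => fderiv ℝ b x u • v) :=
      (hc.fderiv (𝕜 := ℝ)).comp_left (g := fun L : Euc n →L[ℝ] ℝ => L u • v) (by simp)
    have := D.int_inner_nu h1 h2
    simpa [inner_smul_left] using this
  exact (hg u v).sub (hg v u)

lemma fv_local {U : Set (Euc n)} {f : Euc n → ℝ} (hU : IsOpen U)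
    (hf : ContDiff ℝ 2 f) (hgr : ∀ y ∈ U, gradient f y ≠ 0)
    (h1 : D.carrier ∩ U = {y ∈ U | f y < 0}) (h2 : frontier D.carrier ∩ U = {y ∈ U | f y = 0})
    {X : Euc n → Euc n} (hX : ContDiff ℝ 1 X) (hXc : HasCompactSupport X) (hXU : tsupport X ⊆ U) :
    ∫ x, (divg X x - ⟪fderiv ℝ X x (D.nu x), D.nu x⟫) ∂D.sg = ∫ x, D.H 1 x * ⟪X x, D.nu x⟫ ∂D.sg := by
  obtain ⟨e, he⟩ : ∃ e : OrthonormalBasis (Fin (n+1)) ℝ (Euc n), e = EuclideanSpace.basisFun (Fin (n+1)) ℝ := ⟨_, rfl⟩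
  let b : Fin (n+1) → Fin (n+1) → Euc n → ℝ := fun i j y => ⟪X y, e j⟫ * ⟪nrmGrad f y, e i⟫
  have hb0 : ∀ i j x, x ∉ tsupport X → b i j =ᶠ[𝓝 x] fun _ => 0 := by
    intro i j x hx
    filter_upwards [(isClosed_tsupport X).isOpen_compl.mem_nhds hx] with y hy
    simp [b, image_eq_zero_of_notMem_tsupport hy]
  have hb : ∀ i j, ContDiff ℝ 1 (b i j) := by
    intro i j
    rw [contDiff_iff_contDiffAt]
    intro x
    by_cases hx : x ∈ tsupport X
    · exact (hX.contDiffAt.inner ℝ contDiffAt_const).mul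
        ((nrmGrad_contDiffAt hf (hgr x (hXU hx))).inner ℝ contDiffAt_const)
    · exact contDiffAt_const.congr_of_eventuallyEq (hb0 i j x hx)
  have hbc : ∀ i j, HasCompactSupport (b i j) := by
    intro i j
    refine HasCompactSupport.intro hXc fun x hx => ?_
    simp [b, image_eq_zero_of_notMem_tsupport hx]
  have hsum : ∫ x, ∑ i, ∑ j, (fderiv ℝ (b i j) x (e j) * ⟪e i, D.nu x⟫
      - fderiv ℝ (b i j) x (e i) * ⟪e j, D.nu x⟫) ∂D.sg = 0 := by
    rw [integral_finsetSum _ fun i _ => integrable_finset_sum _ fun j _ => D.curl_int (hb i j) (hbc i j) _ _]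
    refine Finset.sum_eq_zero fun i _ => ?_
    rw [integral_finsetSum _ fun j _ => D.curl_int (hb i j) (hbc i j) _ _]
    exact Finset.sum_eq_zero fun j _ => D.curl_C1 (hb i j) (hbc i j) _ _
  rw [← sub_eq_zero, ← integral_sub (D.fv_int hX hXc) (D.Hg_int hX.continuous hXc), ← hsum]
  refine integral_congr_ae ?_
  filter_upwards [D.ae_frontier] with x hx
  by_cases hxs : x ∈ tsupport X
  · have hxU := hXU hxs
    have hnu : D.nu x = nrmGrad f x := D.nu_eq hx hU hxU hf hgr h1 h2
    have hdX := ((hX.differentiable (by norm_num)) x).hasFDerivAt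
    have hdN := ((nrmGrad_contDiffAt hf (hgr x hxU)).differentiableAt (by norm_num)).hasFDerivAt
    have hfb : ∀ i j u, fderiv ℝ (b i j) x u = ⟪fderiv ℝ X x u, e j⟫ * ⟪nrmGrad f x, e i⟫
        + ⟪X x, e j⟫ * ⟪fderiv ℝ (nrmGrad f) x u, e i⟫ := by
      intro i j u
      have a1 := hdX.inner ℝ (hasFDerivAt_const (e j) x)
      have a2 := hdN.inner ℝ (hasFDerivAt_const (e i) x)
      have := (a1.mul a2).fderiv
      rw [show b i j = (fun t => ⟪X t, e j⟫) * (fun t => ⟪nrmGrad f t, e i⟫) from rfl, this]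
      simp [fderivInnerCLM_apply]
      ring
    simp_rw [hfb]
    have := curl_alg (fderiv ℝ X x) (fderiv ℝ (nrmGrad f) x) (X x) (nrmGrad f x) (nrmGrad_norm (hgr x hxU))
      (fun v => nrmGrad_orth hf hU hgr hxU v) e
    rw [hnu, this, ← divg_eq_sum, ← divg_eq_sum, D.divg_nrmGrad hx hU hxU hf hgr h1 h2]
    ring
  · have hz : ∀ i j, fderiv ℝ (b i j) x = 0 := by
      intro i j
      rw [(hb0 i j x hxs).fderiv_eq]; simp
    have hz2 : fderiv ℝ X x = 0 := by
      by_contra h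
      exact hxs (support_fderiv_subset ℝ h)
    simp [hz, hz2, divg_support hxs, image_eq_zero_of_notMem_tsupport hxs]

/-- First variation formula. -/
theorem fv {X : Euc n → Euc n} (hX : ContDiff ℝ 1 X) (hXc : HasCompactSupport X) :
    ∫ x, (divg X x - ⟪fderiv ℝ X x (D.nu x), D.nu x⟫) ∂D.sg = ∫ x, D.H 1 x * ⟪X x, D.nu x⟫ ∂D.sg := by
  have hloc : ∀ x : Euc n, ∃ V, IsOpen V ∧ x ∈ V ∧ ∀ X : Euc n → Euc n, ContDiff ℝ 1 X →
      HasCompactSupport X → tsupport X ⊆ V →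
      ∫ x, (divg X x - ⟪fderiv ℝ X x (D.nu x), D.nu x⟫) ∂D.sg = ∫ x, D.H 1 x * ⟪X x, D.nu x⟫ ∂D.sg := by
    intro x
    by_cases hx : x ∈ frontier D.carrier
    · obtain ⟨U, f, hU, hxU, hf, hgr, h1, h2⟩ := D.boundaryC2 x hx
      exact ⟨U, hU, hxU, fun X hX hXc hXU => D.fv_local hU hf hgr h1 h2 hX hXc hXU⟩
    · refine ⟨(frontier D.carrier)ᶜ, isClosed_frontier.isOpen_compl, hx, fun X hX hXc hXV => ?_⟩
      refine integral_congr_ae ?_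
      filter_upwards [D.ae_frontier] with y hy
      have hys : y ∉ tsupport X := fun h => hXV h hy
      have hz2 : fderiv ℝ X y = 0 := by
        by_contra h
        exact hys (support_fderiv_subset ℝ h)
      simp [hz2, divg_support hys, image_eq_zero_of_notMem_tsupport hys]
  choose V hVo hxV hV using hloc
  obtain ⟨s, χ, hχ1, hχ2, hχ3, hχ4⟩ := exists_pou hXc V hVo hxV
  have hχX : ∀ i, ContDiff ℝ 1 (fun y => χ i y • X y) := fun i =>
    ((hχ1 i).of_le (by exact_mod_cast le_top)).smul hX
  have hχc : ∀ i, HasCompactSupport (fun y => χ i y • X y) := fun i => hXc.smul_left (f := χ i)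
  have hχs : ∀ i, tsupport (fun y => χ i y • X y) ⊆ V i := fun i =>
    (closure_mono (Function.support_smul_subset_left (χ i) X)).trans (hχ3 i)
  have hdec : X = fun y => ∑ i ∈ s, χ i y • X y := by
    funext y
    by_cases hy : y ∈ tsupport X
    · rw [← Finset.sum_smul, hχ4 y hy, one_smul]
    · simp [image_eq_zero_of_notMem_tsupport hy]
  have hd : ∀ x, ∀ i ∈ s, DifferentiableAt ℝ (fun y => χ i y • X y) x :=
    fun x i _ => (hχX i).differentiable (by norm_num) x
  have e1 : ∫ x, (divg X x - ⟪fderiv ℝ X x (D.nu x), D.nu x⟫) ∂D.sg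
      = ∑ i ∈ s, ∫ x, (divg (fun y => χ i y • X y) x - ⟪fderiv ℝ (fun y => χ i y • X y) x (D.nu x), D.nu x⟫) ∂D.sg := by
    rw [← integral_finsetSum]
    · congr 1
      funext x
      conv_lhs => rw [hdec]
      rw [divg_sum s (hd x), fderiv_fun_sum (hd x), Finset.sum_sub_distrib, ContinuousLinearMap.sum_apply, sum_inner]
    · intro i _
      exact D.fv_int (hχX i) (hχc i)
  have e2 : ∫ x, D.H 1 x * ⟪X x, D.nu x⟫ ∂D.sg = ∑ i ∈ s, ∫ x, D.H 1 x * ⟪χ i x • X x, D.nu x⟫ ∂D.sg := by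
    rw [← integral_finsetSum]
    · congr 1
      funext x
      conv_lhs => rw [hdec]
      rw [sum_inner, Finset.mul_sum]
    · intro i _
      exact D.Hg_int (hχX i).continuous (hχc i)
  rw [e1, e2]
  exact Finset.sum_congr rfl fun i _ => hV i _ (hχX i) (hχc i) (hχs i)

end C2Domain

/-- Smooth compactly supported vector fields. -/
def TF (n : ℕ) : Submodule ℝ (Euc n → Euc n) where
  carrier := {X | ContDiff ℝ (⊤ : ℕ∞) X ∧ HasCompactSupport X}
  add_mem' := fun ha hb => ⟨ha.1.add hb.1, ha.2.add hb.2⟩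
  zero_mem' := ⟨contDiff_const, HasCompactSupport.zero⟩
  smul_mem' := fun c X hX => ⟨hX.1.const_smul c, hX.2.smul_left (f := fun _ => c)⟩

lemma TF.memLp {n : ℕ} (τ : Measure (Euc n)) [IsFiniteMeasure τ] (X : TF n) : MemLp X.1 2 τ :=
  X.2.1.continuous.memLp_of_hasCompactSupport X.2.2

def TF.toL {n : ℕ} (τ : Measure (Euc n)) [IsFiniteMeasure τ] : TF n →ₗ[ℝ] Lp (Euc n) 2 τ where
  toFun X := (TF.memLp τ X).toLp X.1
  map_add' _ _ := rfl
  map_smul' _ _ := rfl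

lemma L2_int {n : ℕ} (τ : Measure (Euc n)) [IsFiniteMeasure τ] (φ : Lp (Euc n) 2 τ) : Integrable φ τ :=
  (Lp.memLp φ).integrable (by norm_num)

lemma L2_L1 {n : ℕ} (τ : Measure (Euc n)) [IsFiniteMeasure τ] :
    ∃ C : ℝ, 0 ≤ C ∧ ∀ φ : Lp (Euc n) 2 τ, ∫ x, ‖φ x‖ ∂τ ≤ C * ‖φ‖ := by
  refine ⟨((τ univ) ^ ((1:ℝ) / (1:ℝ≥0∞).toReal - 1 / (2:ℝ≥0∞).toReal)).toReal, ENNReal.toReal_nonneg, fun φ => ?_⟩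
  have h := eLpNorm_le_eLpNorm_mul_rpow_measure_univ (μ := τ) (p := 1) (q := 2) (by norm_num)
    (Lp.memLp φ).aestronglyMeasurable
  rw [integral_norm_eq_lintegral_enorm (Lp.memLp φ).aestronglyMeasurable, ← eLpNorm_one_eq_lintegral_enorm,
    Lp.norm_def, mul_comm, ← ENNReal.toReal_mul]
  refine ENNReal.toReal_mono (ENNReal.mul_ne_top (Lp.memLp φ).eLpNorm_ne_top ?_) h
  exact ENNReal.rpow_ne_top_of_nonneg (by norm_num) (measure_ne_top _ _)

lemma TF.toL_ae {n : ℕ} (τ : Measure (Euc n)) [IsFiniteMeasure τ] (X : TF n) : TF.toL τ X =ᵐ[τ] X.1 :=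
  (TF.memLp τ X).coeFn_toLp

lemma TF.dense {n : ℕ} (τ : Measure (Euc n)) [IsFiniteMeasure τ] : DenseRange (TF.toL τ) := by
  refine (Lp.dense_hasCompactSupport_contDiff (F := Euc n) (μ := τ) (p := 2) (by norm_num)).mono ?_
  rintro f ⟨g, hfg, hg1, hg2⟩
  refine ⟨⟨g, hg2, hg1⟩, ?_⟩
  exact Lp.ext ((TF.toL_ae τ ⟨g, hg2, hg1⟩).trans hfg.symm)

theorem riesz_bdd {n : ℕ} (τ : Measure (Euc n)) [IsFiniteMeasure τ] {M : ℝ} (hM : 0 ≤ M) (L : TF n →ₗ[ℝ] ℝ)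
    (hL : ∀ X, |L X| ≤ M * ∫ x, ‖X.1 x‖ ∂τ) :
    ∃ h : Euc n → Euc n, StronglyMeasurable h ∧ (∀ x, ‖h x‖ ≤ M) ∧ ∀ X : TF n, L X = ∫ x, ⟪h x, X.1 x⟫ ∂τ := by
  obtain ⟨C, hC0, hC⟩ := L2_L1 τ
  have hb : ∀ X, |L X| ≤ M * ∫ x, ‖TF.toL τ X x‖ ∂τ := by
    intro X
    refine (hL X).trans_eq ?_
    congr 1
    refine integral_congr_ae ?_
    filter_upwards [TF.toL_ae τ X] with x hx
    rw [hx]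
  have hn : ∀ X, ‖L X‖ ≤ (M * C) * ‖TF.toL τ X‖ := by
    intro X
    refine (hb X).trans ?_
    rw [mul_assoc]
    exact mul_le_mul_of_nonneg_left (hC _) hM
  let Λ : Lp (Euc n) 2 τ →L[ℝ] ℝ := L.extendOfNorm (TF.toL τ)
  have hΛ : ∀ X, Λ (TF.toL τ X) = L X := LinearMap.extendOfNorm_eq (TF.dense τ) ⟨_, hn⟩
  have hΛb : ∀ φ : Lp (Euc n) 2 τ, |Λ φ| ≤ M * ∫ x, ‖φ x‖ ∂τ := by
    intro φ
    have key : ∀ ε > 0, |Λ φ| ≤ M * ∫ x, ‖φ x‖ ∂τ + ε * (‖Λ‖ + M * C) := by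
      intro ε hε
      obtain ⟨X, hX⟩ := Metric.denseRange_iff.1 (TF.dense τ) φ ε hε
      have a1 : |Λ φ| ≤ |Λ (TF.toL τ X)| + ‖Λ‖ * ε := by
        have : Λ φ = Λ (TF.toL τ X) + Λ (φ - TF.toL τ X) := by rw [map_sub]; ring
        rw [this]
        refine (abs_add_le _ _).trans ?_
        gcongr
        refine (Λ.le_opNorm _).trans ?_
        gcongr
        rw [← dist_eq_norm]; exact hX.le
      have a2 : ∫ x, ‖TF.toL τ X x‖ ∂τ ≤ ∫ x, ‖φ x‖ ∂τ + ∫ x, ‖(TF.toL τ X - φ : Lp (Euc n) 2 τ) x‖ ∂τ := by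
        rw [← integral_add (L2_int τ _).norm (L2_int τ _).norm]
        refine integral_mono_ae (L2_int τ _).norm ((L2_int τ _).norm.add (L2_int τ _).norm) ?_
        filter_upwards [Lp.coeFn_sub (TF.toL τ X) φ] with x hx
        rw [hx, Pi.sub_apply]
        have := norm_add_le (φ x) (TF.toL τ X x - φ x)
        simpa using this
      have a3 := hC (TF.toL τ X - φ)
      have a4 := hb X
      rw [hΛ] at a1
      have a5 : ‖TF.toL τ X - φ‖ ≤ ε := by rw [← dist_eq_norm, dist_comm]; exact hX.le
      have a6 : 0 ≤ ∫ x, ‖(TF.toL τ X - φ : Lp (Euc n) 2 τ) x‖ ∂τ := integral_nonneg fun _ => norm_nonneg _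
      have a7 : M * ∫ x, ‖(TF.toL τ X - φ : Lp (Euc n) 2 τ) x‖ ∂τ ≤ M * C * ε := by
        rw [mul_assoc]
        exact mul_le_mul_of_nonneg_left (a3.trans (mul_le_mul_of_nonneg_left a5 hC0)) hM
      nlinarith [mul_le_mul_of_nonneg_left a2 hM]
    have hlim : Tendsto (fun ε : ℝ => M * ∫ x, ‖φ x‖ ∂τ + ε * (‖Λ‖ + M * C)) (𝓝[>] 0) (𝓝 (M * ∫ x, ‖φ x‖ ∂τ)) := by
      have : Continuous (fun ε : ℝ => M * ∫ x, ‖φ x‖ ∂τ + ε * (‖Λ‖ + M * C)) := by fun_prop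
      have h2 := (this.tendsto 0).mono_left (nhdsWithin_le_nhds (s := Ioi 0))
      simpa using h2
    exact ge_of_tendsto hlim (eventually_of_mem self_mem_nhdsWithin key)
  let h0 : Lp (Euc n) 2 τ := (InnerProductSpace.toDual ℝ _).symm Λ
  have hh0 : ∀ φ : Lp (Euc n) 2 τ, ∫ x, ⟪h0 x, φ x⟫ ∂τ = Λ φ := by
    intro φ
    rw [← L2.inner_def]
    exact InnerProductSpace.toDual_symm_apply
  have hsm : StronglyMeasurable h0 := Lp.stronglyMeasurable h0
  have hbd : ∀ᵐ x ∂τ, ‖h0 x‖ ≤ M := by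
    let T : Set (Euc n) := {x | M < ‖h0 x‖}
    have hT : MeasurableSet T := measurableSet_lt measurable_const hsm.measurable.norm
    have hmem : MemLp (T.indicator h0) 2 τ := (Lp.memLp h0).indicator hT
    have h1 := hΛb (hmem.toLp _)
    rw [← hh0] at h1
    have e1 : ∫ x, ⟪h0 x, hmem.toLp _ x⟫ ∂τ = ∫ x in T, ‖h0 x‖ ^ 2 ∂τ := by
      rw [← integral_indicator hT]
      refine integral_congr_ae ?_
      filter_upwards [hmem.coeFn_toLp] with x hx
      rw [hx]
      by_cases hxT : x ∈ T <;> simp [hxT]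
    have e2 : ∫ x, ‖hmem.toLp _ x‖ ∂τ = ∫ x in T, ‖h0 x‖ ∂τ := by
      rw [← integral_indicator hT]
      refine integral_congr_ae ?_
      filter_upwards [hmem.coeFn_toLp] with x hx
      rw [hx]
      by_cases hxT : x ∈ T <;> simp [hxT]
    rw [e1, e2] at h1
    have i1 : IntegrableOn (fun x => ‖h0 x‖ ^ 2) T τ := ((Lp.memLp h0).integrable_norm_pow (by norm_num)).integrableOn
    have i2 : IntegrableOn (fun x => M * ‖h0 x‖) T τ := ((L2_int τ h0).norm.const_mul M).integrableOn
    have h2 : ∫ x in T, (‖h0 x‖ ^ 2 - M * ‖h0 x‖) ∂τ ≤ 0 := by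
      rw [integral_sub i1 i2, integral_const_mul]
      linarith [le_abs_self (∫ x in T, ‖h0 x‖ ^ 2 ∂τ)]
    have hnn : 0 ≤ᵐ[τ.restrict T] fun x => ‖h0 x‖ ^ 2 - M * ‖h0 x‖ := by
      filter_upwards [ae_restrict_mem hT] with x hx
      have : M < ‖h0 x‖ := hx
      simp only [Pi.zero_apply]
      nlinarith
    have h3 := le_antisymm h2 (integral_nonneg_of_ae hnn)
    rw [setIntegral_eq_zero_iff_of_nonneg_ae hnn (i1.sub i2)] at h3
    rw [Filter.EventuallyEq, ae_restrict_iff' hT] at h3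
    filter_upwards [h3] with x hx
    by_contra hc
    push Not at hc
    have := hx hc
    simp only [Pi.zero_apply] at this
    nlinarith
  refine ⟨{x | ‖h0 x‖ ≤ M}.indicator h0, hsm.indicator (measurableSet_le hsm.measurable.norm measurable_const), ?_, ?_⟩
  · intro x
    by_cases hx : ‖h0 x‖ ≤ M
    · rw [indicator_of_mem (by exact hx)]; exact hx
    · rw [indicator_of_notMem (by exact hx), norm_zero]; exact hM
  · intro X
    rw [← hΛ, ← hh0]
    refine integral_congr_ae ?_
    filter_upwards [hbd, TF.toL_ae τ X] with x hx hx2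
    rw [hx2, indicator_of_mem (by exact hx)]

lemma young_pow {n : ℕ} (hn : 1 ≤ n) {a t : ℝ} (ha : 0 ≤ a) (ht : 0 < t) : a ≤ t + (t ^ (n - 1))⁻¹ * a ^ n := by
  rcases le_or_gt a t with h | h
  · have : 0 ≤ (t ^ (n - 1))⁻¹ * a ^ n := by positivity
    linarith
  · have h1 : a * t ^ (n-1) ≤ a ^ n := by
      obtain ⟨m, rfl⟩ : ∃ m, n = m + 1 := ⟨n - 1, by omega⟩
      rw [Nat.add_sub_cancel, pow_succ']
      gcongr
    have h2 : a ≤ (t ^ (n - 1))⁻¹ * a ^ n := by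
      rw [inv_mul_eq_div, le_div_iff₀ (by positivity)]
      exact h1
    linarith

namespace C2Domain
variable {n : ℕ} (D : C2Domain n)

lemma A_nonneg (x : Euc n) : 0 ≤ D.A x := Real.sqrt_nonneg _

lemma H_le_A (x : Euc n) : |D.H 1 x| ≤ n * D.A x := by
  rw [D.H_one]
  refine (Finset.abs_sum_le_sum_abs _ _).trans ?_
  have : ∀ i ∈ (Finset.univ : Finset (Fin n)), |D.kappa i x| ≤ D.A x := by
    intro i hi
    refine Real.abs_le_sqrt ?_
    exact Finset.single_le_sum (f := fun i => (D.kappa i x)^2) (fun j _ => sq_nonneg _) hi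
  simpa using Finset.sum_le_card_nsmul _ _ _ this

lemma H_lint (hn : 1 ≤ n) {c : ℝ≥0∞}
    (hc : (∫⁻ x in frontier D.carrier, ENNReal.ofReal (D.A x ^ n) ∂μH[(n : ℝ)]) ≤ c) {t : ℝ} (ht : 0 < t)
    (B : Set (Euc n)) :
    ∫⁻ x in B, ENNReal.ofReal |D.H 1 x| ∂D.sg ≤ ENNReal.ofReal (n * t) * D.sg B
      + ENNReal.ofReal (n * (t ^ (n-1))⁻¹) * c := by
  calc ∫⁻ x in B, ENNReal.ofReal |D.H 1 x| ∂D.sg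
      ≤ ∫⁻ x in B, (ENNReal.ofReal (n * t) + ENNReal.ofReal (n * (t ^ (n-1))⁻¹) * ENNReal.ofReal (D.A x ^ n)) ∂D.sg := by
        refine lintegral_mono fun x => ?_
        rw [← ENNReal.ofReal_mul (by positivity), ← ENNReal.ofReal_add (by positivity)
          (mul_nonneg (by positivity) (pow_nonneg (D.A_nonneg x) _))]
        refine ENNReal.ofReal_le_ofReal ?_
        have h1 := D.H_le_A x
        have h2 := young_pow hn (D.A_nonneg x) ht
        have h3 := mul_le_mul_of_nonneg_left h2 (Nat.cast_nonneg (α := ℝ) n)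
        linarith
    _ = ENNReal.ofReal (n * t) * D.sg B
        + ENNReal.ofReal (n * (t ^ (n-1))⁻¹) * ∫⁻ x in B, ENNReal.ofReal (D.A x ^ n) ∂D.sg := by
        rw [lintegral_add_left measurable_const, lintegral_const_mul' _ _ ENNReal.ofReal_ne_top]
        simp
    _ ≤ _ := by
        gcongr
        refine le_trans ?_ hc
        exact setLIntegral_le_lintegral _ _

lemma H_bint (hn : 1 ≤ n) {c : ℝ≥0∞} (hct : c < ⊤)
    (hc : (∫⁻ x in frontier D.carrier, ENNReal.ofReal (D.A x ^ n) ∂μH[(n : ℝ)]) ≤ c) {t : ℝ} (ht : 0 < t)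
    (B : Set (Euc n)) :
    ∫ x in B, |D.H 1 x| ∂D.sg ≤ n * t * D.sg.real B + n * (t ^ (n-1))⁻¹ * c.toReal := by
  rw [integral_eq_lintegral_of_nonneg_ae (ae_of_all _ fun x => abs_nonneg _)
    (D.H_meas.restrict (s := B)).norm]
  have h := D.H_lint hn hc ht B
  have h2 := ENNReal.toReal_mono (ENNReal.add_ne_top.2 ⟨ENNReal.mul_ne_top ENNReal.ofReal_ne_top (measure_ne_top _ _),
    ENNReal.mul_ne_top ENNReal.ofReal_ne_top hct.ne⟩) h
  rw [ENNReal.toReal_add (ENNReal.mul_ne_top ENNReal.ofReal_ne_top (measure_ne_top _ _))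
    (ENNReal.mul_ne_top ENNReal.ofReal_ne_top hct.ne), ENNReal.toReal_mul, ENNReal.toReal_mul,
    ENNReal.toReal_ofReal (by positivity), ENNReal.toReal_ofReal (by positivity)] at h2
  exact h2

lemma mass_bound (hn : 1 ≤ n) {c : ℝ≥0∞} (hct : c < ⊤)
    (hc : (∫⁻ x in frontier D.carrier, ENNReal.ofReal (D.A x ^ n) ∂μH[(n : ℝ)]) ≤ c) {R : ℝ} (hR : 0 < R)
    (hD : D.carrier ⊆ ball 0 R) : D.sg.real univ ≤ (2 * R) ^ n * c.toReal := by
  let φ : ContDiffBump (0 : Euc n) := ⟨R + 1, R + 2, by linarith, by linarith⟩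
  let X : Euc n → Euc n := fun x => φ x • x
  have hX : ContDiff ℝ 1 X := φ.contDiff.smul contDiff_id
  have hXc : HasCompactSupport X := φ.hasCompactSupport.smul_right (f' := fun x => x)
  have hfr : ∀ x ∈ frontier D.carrier, ‖x‖ ≤ R := by
    intro x hx
    have h1 := closure_mono hD (frontier_subset_closure hx)
    have h2 := closure_ball_subset_closedBall h1
    simpa using h2
  have hev : ∀ x ∈ frontier D.carrier, X =ᶠ[𝓝 x] fun y => y := by
    intro x hx
    have : x ∈ ball (0:Euc n) (R + 1) := by
      rw [mem_ball_zero_iff]; linarith [hfr x hx]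
    filter_upwards [isOpen_ball.mem_nhds this] with y hy
    have : φ y = 1 := φ.one_of_mem_closedBall (ball_subset_closedBall hy)
    simp [X, this]
  have hfv := D.fv hX hXc
  have e1 : ∫ x, (divg X x - ⟪fderiv ℝ X x (D.nu x), D.nu x⟫) ∂D.sg = n * D.sg.real univ := by
    have : ∫ x, (divg X x - ⟪fderiv ℝ X x (D.nu x), D.nu x⟫) ∂D.sg = ∫ x, (n:ℝ) ∂D.sg := by
      refine integral_congr_ae ?_
      filter_upwards [D.ae_frontier] with x hx
      unfold divg
      rw [(hev x hx).fderiv_eq]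
      simp [D.nu_norm hx]
    rw [this]; simp [mul_comm]
  rw [e1] at hfv
  have h2 : ∫ x, D.H 1 x * ⟪X x, D.nu x⟫ ∂D.sg ≤ ∫ x, R * |D.H 1 x| ∂D.sg := by
    refine integral_mono_ae (D.Hg_int hX.continuous hXc) (D.H_int.abs.const_mul R) ?_
    filter_upwards [D.ae_frontier] with x hx
    refine (le_abs_self _).trans ?_
    rw [abs_mul, mul_comm]
    gcongr
    refine (abs_real_inner_le_norm _ _).trans ?_
    rw [D.nu_norm hx, mul_one, (hev x hx).self_of_nhds]
    exact hfr x hx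
  rw [integral_const_mul] at h2
  have h3 := D.H_bint hn hct hc (t := (2 * R)⁻¹) (by positivity) univ
  rw [Measure.restrict_univ] at h3
  have hn0 : (0:ℝ) < n := by exact_mod_cast hn
  have h4 := mul_le_mul_of_nonneg_left h3 hR.le
  have h5 : (n:ℝ) * D.sg.real univ ≤ n * (D.sg.real univ / 2 + R * (2 * R) ^ (n-1) * c.toReal) := by
    refine (hfv.le.trans (h2.trans h4)).trans_eq ?_
    rw [inv_pow, inv_inv]
    field_simp
  have h6 := le_of_mul_le_mul_left h5 hn0
  have h7 : (2 * R) ^ n = 2 * R * (2 * R) ^ (n-1) := by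
    obtain ⟨m, rfl⟩ : ∃ m, n = m + 1 := ⟨n - 1, by omega⟩
    rw [Nat.add_sub_cancel, pow_succ']
  rw [h7]
  linarith

end C2Domain

lemma weak_limit {n : ℕ} (F : Ultrafilter ℕ) (σ : ℕ → Measure (Euc n)) [∀ ℓ, IsFiniteMeasure (σ ℓ)] {C : ℝ} {R : ℝ}
    (hC : ∀ ℓ, (σ ℓ).real univ ≤ C) (hR : ∀ ℓ, σ ℓ (closedBall 0 R)ᶜ = 0) :
    ∃ σ' : Measure (Euc n), IsFiniteMeasure σ' ∧
      ∀ g : Euc n → ℝ, Continuous g → (∃ K, ∀ x, |g x| ≤ K) → Tendsto (fun ℓ => ∫ x, g x ∂σ ℓ) F (𝓝 (∫ x, g x ∂σ')) := by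
  have hK := isCompact_setOfPred_finiteMeasure_le_of_isCompact C.toNNReal (isCompact_closedBall (0 : Euc n) R)
  let f : ℕ → FiniteMeasure (Euc n) := fun ℓ => ⟨σ ℓ, inferInstance⟩
  obtain ⟨μ, hμ, hlim⟩ := hK.ultrafilter_le_nhds' (F.map f) (by
    refine Filter.Eventually.of_forall (f := (F : Filter ℕ)) fun ℓ => ⟨?_, ?_⟩
    · rw [← NNReal.coe_le_coe]
      refine le_trans ?_ (Real.le_coe_toNNReal C)
      exact hC ℓ
    · have := hR ℓ
      rw [FiniteMeasure.null_iff_toMeasure_null]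
      exact this)
  refine ⟨μ, inferInstance, fun g hg hgb => ?_⟩
  obtain ⟨K, hK⟩ := hgb
  have ht : Tendsto f F (𝓝 μ) := hlim
  have := (FiniteMeasure.tendsto_iff_forall_integral_tendsto.1 ht)
    (BoundedContinuousFunction.ofNormedAddCommGroup g hg K hK)
  exact this

/-- The blow-up defect. -/
def bdef {n : ℕ} (A : Set (Euc n)) (x v : Euc n) (r : ℝ) : ℝ≥0∞ :=
  volume {y ∈ ball (0 : Euc n) 1 | ¬ ((x + r • y ∈ A) ↔ ⟪y, v⟫ < 0)}

/-- Distance of two half spaces. -/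
def hdist {n : ℕ} (v w : Euc n) : ℝ≥0∞ :=
  volume {y ∈ ball (0 : Euc n) 1 | ¬ ((⟪y, v⟫ < 0) ↔ ⟪y, w⟫ < 0)}

lemma bdef_tri {n : ℕ} (A : Set (Euc n)) (x v w : Euc n) (r : ℝ) : bdef A x v r ≤ bdef A x w r + hdist v w := by
  refine (measure_mono ?_).trans (measure_union_le _ _)
  rintro y ⟨hy, h⟩
  by_cases h2 : (x + r • y ∈ A) ↔ ⟪y, w⟫ < 0
  · right; refine ⟨hy, fun h3 => h ?_⟩; rw [h2, h3]
  · left; exact ⟨hy, h2⟩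

lemma hdist_tendsto {n : ℕ} {v : Euc n} (hv : ‖v‖ = 1) : Tendsto (fun w => hdist v w) (𝓝 v) (𝓝 0) := by
  have hne : v ≠ 0 := by intro h; rw [h] at hv; simp at hv
  have h2 : (ℝ ∙ v)ᗮ ≠ ⊤ := by
    intro h
    have : v ∈ (ℝ ∙ v)ᗮ := by rw [h]; trivial
    rw [Submodule.mem_orthogonal_singleton_iff_inner_right] at this
    rw [real_inner_self_eq_norm_sq, hv] at this
    norm_num at this
  have h3 := Measure.addHaar_submodule (volume : Measure (Euc n)) _ h2
  have hm : ∀ w : Euc n, MeasurableSet {y : Euc n | ⟪y, w⟫ < 0} := fun w =>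
    measurableSet_lt (by fun_prop) measurable_const
  haveI : IsFiniteMeasure ((volume : Measure (Euc n)).restrict (ball 0 1)) := ⟨by
    rw [Measure.restrict_apply_univ]; exact measure_ball_lt_top⟩
  have hlim := tendsto_measure_of_ae_tendsto_indicator_of_isFiniteMeasure (𝓝 v)
    (μ := (volume : Measure (Euc n)).restrict (ball 0 1)) (A := ∅)
    (As := fun w => {y : Euc n | ¬ ((⟪y, v⟫ < 0) ↔ ⟪y, w⟫ < 0)}) MeasurableSet.empty (by
      intro w
      have : {y : Euc n | ¬ ((⟪y, v⟫ < 0) ↔ ⟪y, w⟫ < 0)} = symmDiff {y : Euc n | ⟪y, v⟫ < 0} {y : Euc n | ⟪y, w⟫ < 0} := by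
        ext y
        rw [mem_symmDiff]
        simp only [mem_ofPred_eq]
        tauto
      rw [this]
      exact (hm v).symmDiff (hm w)) (by
      have : ∀ᵐ y ∂((volume : Measure (Euc n)).restrict (ball 0 1)), y ∉ ((ℝ ∙ v)ᗮ : Set (Euc n)) :=
        ae_restrict_of_ae (measure_eq_zero_iff_ae_notMem.1 h3)
      filter_upwards [this] with y hy
      have hy0 : ⟪y, v⟫ ≠ 0 := by
        intro h
        apply hy
        exact (Submodule.mem_orthogonal_singleton_iff_inner_left).2 h
      have hcont : Continuous fun w : Euc n => ⟪y, w⟫ := by fun_prop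
      rcases lt_or_gt_of_ne hy0 with h | h
      · filter_upwards [hcont.continuousAt.eventually_lt continuousAt_const h] with w hw
        simp [h, hw]
      · filter_upwards [continuousAt_const.eventually_lt hcont.continuousAt h] with w hw
        simp [not_lt.2 h.le, not_lt.2 hw.le])
  rw [measure_empty] at hlim
  refine hlim.congr fun w => ?_
  rw [Measure.restrict_apply']
  · unfold hdist
    congr 1
    ext y
    simp only [mem_inter_iff, mem_ofPred_eq]
    tauto
  · exact measurableSet_ball

lemma bdef_double {n : ℕ} (A : Set (Euc n)) (x v : Euc n) {r r' : ℝ} (hr : 0 < r) (h1 : r ≤ r') (h2 : r' ≤ 2 * r) :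
    bdef A x v r ≤ 2 ^ (n+1) * bdef A x v r' := by
  have hr' : 0 < r' := hr.trans_le h1
  have hs : 0 < r / r' := by positivity
  have hsub : {y ∈ ball (0 : Euc n) 1 | ¬ ((x + r • y ∈ A) ↔ ⟪y, v⟫ < 0)} ⊆
      (fun y => (r / r') • y) ⁻¹' {y ∈ ball (0 : Euc n) 1 | ¬ ((x + r' • y ∈ A) ↔ ⟪y, v⟫ < 0)} := by
    rintro y ⟨hy, h⟩
    refine ⟨?_, ?_⟩
    · rw [mem_ball_zero_iff] at hy ⊢
      rw [norm_smul, Real.norm_eq_abs, abs_of_pos hs]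
      have : r / r' ≤ 1 := (div_le_one hr').2 h1
      nlinarith [norm_nonneg y]
    · have e1 : r' • (r / r') • y = r • y := by rw [smul_smul]; congr 1; field_simp
      have e2 : ⟪(r / r') • y, v⟫ < 0 ↔ ⟪y, v⟫ < 0 := by
        rw [inner_smul_left]
        simp only [conj_trivial]
        constructor
        · intro h; by_contra h3; push Not at h3; have := mul_nonneg hs.le h3; linarith
        · intro h; exact mul_neg_of_pos_of_neg hs h
      simp only
      rw [e1, e2]; exact h
  refine (measure_mono hsub).trans ?_
  rw [Measure.addHaar_preimage_smul _ hs.ne']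
  unfold bdef
  gcongr
  have hfr : Module.finrank ℝ (Euc n) = n + 1 := by simp
  rw [hfr, abs_of_pos (by positivity), ← inv_pow, ENNReal.ofReal_pow (by positivity)]
  gcongr
  rw [ENNReal.ofReal_le_iff_le_toReal (by norm_num)]
  simp only [ENNReal.toReal_ofNat]
  rw [inv_div, div_le_iff₀ hr]; linarith

lemma bdef_meas {n : ℕ} {A : Set (Euc n)} (hA : MeasurableSet A) (v : Euc n) (r : ℝ) :
    Measurable fun x => bdef A x v r := by
  have h1 : MeasurableSet {p : Euc n × Euc n | p.1 + r • p.2 ∈ A} :=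
    (show Measurable fun p : Euc n × Euc n => p.1 + r • p.2 by fun_prop) hA
  have h2 : MeasurableSet {p : Euc n × Euc n | ⟪p.2, v⟫ < 0} := measurableSet_lt (by fun_prop) measurable_const
  have h3 : MeasurableSet {p : Euc n × Euc n | p.2 ∈ ball (0 : Euc n) 1} := measurable_snd measurableSet_ball
  have h4 := measurable_measure_prodMk_left (ν := (volume : Measure (Euc n))) (h3.inter (h1.symmDiff h2))
  convert h4 using 2 with x
  unfold bdef
  congr 1
  ext y
  simp only [mem_ofPred_eq, mem_preimage, mem_inter_iff, mem_symmDiff]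
  tauto

theorem redBdry_meas {n : ℕ} {A : Set (Euc n)} (hA : MeasurableSet A) : MeasurableSet (redBdry A) := by
  haveI : Nonempty (sphere (0 : Euc n) 1) := (NormedSpace.sphere_nonempty.2 zero_le_one).to_subtype
  let q : ℕ → sphere (0 : Euc n) 1 := TopologicalSpace.denseSeq _
  have hq : DenseRange q := TopologicalSpace.denseRange_denseSeq _
  have heq : redBdry A = ⋂ k : ℕ, ⋃ i : ℕ, ⋃ j : ℕ, ⋂ s : ℚ, ⋂ (_ : (0:ℝ) < s ∧ (s:ℝ) < 1 / ((j:ℝ) + 1)),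
      {x | bdef A x (q i) s ≤ ((k:ℝ≥0∞) + 1)⁻¹} := by
    ext x
    simp only [mem_iInter, mem_iUnion, mem_ofPred_eq]
    constructor
    · rintro ⟨v, hv, hb⟩ k
      have hε : 0 < ((k:ℝ≥0∞) + 1)⁻¹ / 2 := by simp
      have hd := (hdist_tendsto hv).eventually_lt_const hε
      have hd' : ∀ᶠ w : sphere (0:Euc n) 1 in 𝓝 ⟨v, by simpa using hv⟩, hdist v w < ((k:ℝ≥0∞) + 1)⁻¹ / 2 :=
        (continuous_subtype_val.tendsto (⟨v, by simpa using hv⟩ : sphere (0:Euc n) 1)).eventually hd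
      obtain ⟨i, hi⟩ := hq.exists_mem_open isOpen_interior ⟨_, mem_interior_iff_mem_nhds.2 hd'⟩
      have hi2 : hdist v (q i) < ((k:ℝ≥0∞) + 1)⁻¹ / 2 := by
        have h9 := interior_subset hi
        exact h9
      have hb2 := hb.eventually_lt_const hε
      rw [eventually_nhdsWithin_iff, Metric.eventually_nhds_iff] at hb2
      obtain ⟨δ, hδ, hb2⟩ := hb2
      obtain ⟨j, hj⟩ := exists_nat_one_div_lt hδ
      refine ⟨i, j, fun s hs => ?_⟩
      have h1 := hb2 (y := (s:ℝ)) (by rw [dist_zero_right, Real.norm_eq_abs, abs_of_pos hs.1]; linarith) hs.1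
      have h2 := bdef_tri A x (q i) v s
      have h3 : hdist (q i : Euc n) v = hdist v (q i) := by
        unfold hdist; congr 1; ext y; simp only [mem_ofPred_eq]; tauto
      rw [h3] at h2
      refine h2.trans ((add_le_add h1.le hi2.le).trans ?_)
      rw [ENNReal.add_halves]
    · intro h
      choose i j hij using h
      obtain ⟨v, φ, hφ, hlim⟩ := CompactSpace.tendsto_subseq (fun k => q (i k))
      have hv : ‖(v : Euc n)‖ = 1 := by simpa using v.2
      refine ⟨v, hv, ?_⟩
      have hlim2 : Tendsto (fun k => hdist (v : Euc n) (q (i (φ k)))) atTop (𝓝 0) :=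
        (hdist_tendsto hv).comp ((continuous_subtype_val.tendsto v).comp hlim)
      have hlim3 : Tendsto (fun k : ℕ => (2:ℝ≥0∞) ^ (n+1) * ((φ k : ℕ) + 1 : ℝ≥0∞)⁻¹) atTop (𝓝 0) := by
        have : Tendsto (fun k : ℕ => ((k : ℝ≥0∞) + 1)⁻¹) atTop (𝓝 0) := by
          have := (tendsto_add_atTop_iff_nat 1).2 ENNReal.tendsto_inv_nat_nhds_zero
          simpa using this
        have h := ENNReal.Tendsto.const_mul (a := (2:ℝ≥0∞)^(n+1)) (this.comp hφ.tendsto_atTop) (Or.inr (by simp))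
        simpa using h
      have hsum := hlim3.add hlim2
      rw [add_zero] at hsum
      unfold HalfSpaceBlowup
      rw [ENNReal.tendsto_nhds_zero]
      intro ε hε
      obtain ⟨k, hk⟩ := (hsum.eventually_lt_const hε).exists
      have hpos : (0:ℝ) < 1 / ((j (φ k) : ℝ) + 1) / 2 := by positivity
      filter_upwards [Ioo_mem_nhdsGT hpos] with r hr
      obtain ⟨s, hs1, hs2⟩ := exists_rat_btwn (show r < 2 * r by linarith [hr.1])
      have h1 := hij (φ k) s ⟨hr.1.trans hs1, by linarith [hr.2]⟩
      have h2 := bdef_double A x (q (i (φ k))) hr.1 hs1.le hs2.le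
      have h3 := bdef_tri A x v (q (i (φ k))) r
      refine h3.trans (le_trans ?_ hk.le)
      gcongr
      refine h2.trans ?_
      gcongr
  rw [heq]
  refine MeasurableSet.iInter fun k => MeasurableSet.iUnion fun i => MeasurableSet.iUnion fun j =>
    MeasurableSet.iInter fun s => MeasurableSet.iInter fun _ => ?_
  exact measurableSet_le (bdef_meas hA _ _) measurable_const

lemma nuStar_spec {n : ℕ} {A : Set (Euc n)} {x : Euc n} (hx : x ∈ redBdry A) :
    ‖nuStar A x‖ = 1 ∧ HalfSpaceBlowup A x (nuStar A x) := by
  have hx' : ∃ v : Euc n, ‖v‖ = 1 ∧ HalfSpaceBlowup A x v := hx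
  unfold nuStar
  rw [dif_pos hx']
  exact hx'.choose_spec

lemma ident_measure {n : ℕ} {A : Set (Euc n)} (hA : MeasurableSet A)
    {τ : Measure (Euc n)} [IsFiniteMeasure τ] {N : Euc n → Euc n}
    (hN1 : ∀ x, ‖N x‖ ≤ 1)
    (GG : ∀ X : Euc n → Euc n, ContDiff ℝ (⊤ : ℕ∞) X → HasCompactSupport X →
      (kap n : ℝ) * ∫ x in A, divg X x = ∫ x, ⟪X x, N x⟫ ∂τ)
    (hu : τ univ = μH[(n : ℝ)] (redBdry A)) :
    τ = μH[(n : ℝ)].restrict (redBdry A) := by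
  have hS := redBdry_meas hA
  have hle : μH[(n : ℝ)].restrict (redBdry A) ≤ τ := by
    rw [Measure.le_iff]
    intro s hs
    rw [Measure.restrict_apply hs]
    refine (hausdorff_le_of_GG hA isOpen_univ hN1 (fun X h1 h2 _ => GG X h1 h2)
      (T := s ∩ redBdry A) (by simp)).trans (measure_mono inter_subset_left)
  haveI : IsFiniteMeasure (μH[(n : ℝ)].restrict (redBdry A)) := ⟨by
    rw [Measure.restrict_apply_univ, ← hu]; exact measure_lt_top _ _⟩
  exact (Measure.eq_of_le_of_measure_univ_eq hle (by
    rw [Measure.restrict_apply_univ, hu])).symm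

lemma ident_density {n : ℕ} {A : Set (Euc n)} (hA : MeasurableSet A)
    {τ : Measure (Euc n)} [IsFiniteMeasure τ] {N : Euc n → Euc n}
    (hNm : StronglyMeasurable N)
    (hN1 : ∀ x, ‖N x‖ ≤ 1)
    (GG : ∀ X : Euc n → Euc n, ContDiff ℝ (⊤ : ℕ∞) X → HasCompactSupport X →
      (kap n : ℝ) * ∫ x in A, divg X x = ∫ x, ⟪X x, N x⟫ ∂τ)
    {δ : ℝ} (hδ : 0 < δ) (hδ1 : δ < 1) {T : Set (Euc n)}
    (hTS : T ⊆ redBdry A)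
    (hT : ∀ x ∈ T, ⟪nuStar A x, N x⟫ ≤ 1 - δ ∧
      Tendsto (fun r : ℝ => ⨍ y in closedBall x r, ‖N y - N x‖ ∂τ) (𝓝[>] 0) (𝓝 0)) :
    ENNReal.ofReal ((1 - δ / 4) / (1 - δ / 2)) * μH[(n : ℝ)] T ≤ τ T := by
  refine hausdorff_le_of_density n τ T _ ENNReal.ofReal_ne_top ?_
  intro x hx ε hε
  obtain ⟨hin, hleb⟩ := hT x hx
  obtain ⟨hv, hb⟩ := nuStar_spec (hTS hx)
  obtain ⟨ψ, hψc, hψ0, hψ1, hψs, hev⟩ := blowup_density hA isOpen_univ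
    (fun X h1 h2 _ => GG X h1 h2) (mem_univ x) hv hb
    (c := 2 ^ n * (1 - δ / 4)) (by
      have : (0:ℝ) < 2 ^ n := by positivity
      nlinarith)
  have h1 := hleb.eventually_lt_const (show (0:ℝ) < δ / 2 by linarith)
  have h2 : ∀ᶠ r in 𝓝[>] (0:ℝ), r ∈ Ioo 0 ε := Ioo_mem_nhdsGT hε
  obtain ⟨r, ⟨hr1, hr2⟩, hr3⟩ := ((hev.and h1).and h2).exists
  refine ⟨r, hr3, ?_⟩
  have hr0 : 0 < r := hr3.1
  set B := closedBall x r with hB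
  have hNi : Integrable N τ := by
    refine Integrable.of_bound hNm.aestronglyMeasurable 1 (ae_of_all _ hN1)
  have hdi : Integrable (fun y => ‖N y - N x‖) τ := (hNi.sub (integrable_const _)).norm
  have hBm : MeasurableSet B := measurableSet_closedBall
  have e1 : ∫ y in B, ‖N y - N x‖ ∂τ ≤ δ / 2 * τ.real B := by
    have := measure_smul_setAverage (fun y => ‖N y - N x‖) (measure_ne_top τ B)
    rw [← this, smul_eq_mul]
    have := measureReal_nonneg (μ := τ) (s := B)
    nlinarith
  have hvN : ∀ y, |⟪nuStar A x, N y⟫| ≤ 1 := fun y => by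
    refine (abs_real_inner_le_norm _ _).trans ?_
    rw [hv, one_mul]; exact hN1 y
  have e2 : ∫ y, ψ (r⁻¹ • (y - x)) * ⟪nuStar A x, N y⟫ ∂τ ≤
      ∫ y, B.indicator (fun y => (1 - δ) + ‖N y - N x‖) y ∂τ := by
    refine integral_mono ?_ ?_ ?_
    · refine Integrable.of_bound (C := 1) ?_ (ae_of_all _ fun y => ?_)
      · exact (Continuous.aestronglyMeasurable (by fun_prop)).mul
          (aestronglyMeasurable_const.inner hNm.aestronglyMeasurable)
      · rw [norm_mul, Real.norm_eq_abs, Real.norm_eq_abs, abs_of_nonneg (hψ0 _)]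
        exact mul_le_one₀ (hψ1 _) (abs_nonneg _) (hvN y)
    · exact ((integrable_const _).add hdi).indicator hBm
    · intro y
      by_cases hy : y ∈ B
      · simp only [indicator_of_mem hy]
        have i1 : ⟪nuStar A x, N y⟫ ≤ (1 - δ) + ‖N y - N x‖ := by
          have : ⟪nuStar A x, N y - N x⟫ ≤ ‖N y - N x‖ := by
            have := real_inner_le_norm (nuStar A x) (N y - N x)
            rwa [hv, one_mul] at this
          rw [inner_sub_right] at this
          linarith
        have i2 : 0 ≤ (1 - δ) + ‖N y - N x‖ := by
          have := norm_nonneg (N y - N x); linarith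
        calc ψ (r⁻¹ • (y - x)) * ⟪nuStar A x, N y⟫
            ≤ ψ (r⁻¹ • (y - x)) * ((1 - δ) + ‖N y - N x‖) :=
              mul_le_mul_of_nonneg_left i1 (hψ0 _)
          _ ≤ 1 * ((1 - δ) + ‖N y - N x‖) := mul_le_mul_of_nonneg_right (hψ1 _) i2
          _ = _ := one_mul _
      · simp only [indicator_of_notMem hy]
        rw [hψs, zero_mul]
        intro hc
        apply hy
        rw [mem_closedBall_zero_iff, norm_smul, norm_inv, Real.norm_of_nonneg hr0.le,
          inv_mul_le_iff₀ hr0, mul_one] at hc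
        rwa [hB, mem_closedBall, dist_eq_norm]
  rw [integral_indicator hBm, integral_add (integrable_const _) hdi.integrableOn,
    setIntegral_const, smul_eq_mul] at e2
  have e3 : (1 - δ / 4) / (1 - δ / 2) * (2 * r) ^ n ≤ τ.real B := by
    rw [div_mul_eq_mul_div, div_le_iff₀ (by linarith), mul_pow]
    nlinarith [hr1, e1, e2]
  have h4 : (0:ℝ) ≤ (1 - δ / 4) / (1 - δ / 2) := div_nonneg (by linarith) (by linarith)
  rw [← ENNReal.ofReal_pow (by positivity), ← ENNReal.ofReal_mul h4]
  refine (ENNReal.ofReal_le_ofReal e3).trans ?_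
  rw [measureReal_def, ENNReal.ofReal_toReal (measure_ne_top _ _)]

lemma ident_normal {n : ℕ} {A : Set (Euc n)} (hA : MeasurableSet A)
    {τ : Measure (Euc n)} [IsFiniteMeasure τ] {N : Euc n → Euc n}
    (hNm : StronglyMeasurable N)
    (hN1 : ∀ x, ‖N x‖ ≤ 1)
    (GG : ∀ X : Euc n → Euc n, ContDiff ℝ (⊤ : ℕ∞) X → HasCompactSupport X →
      (kap n : ℝ) * ∫ x in A, divg X x = ∫ x, ⟪X x, N x⟫ ∂τ)
    (hu : τ univ = μH[(n : ℝ)] (redBdry A)) :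
    ∀ᵐ x ∂τ, x ∈ redBdry A ∧ N x = nuStar A x := by
  have hS := redBdry_meas hA
  have hτ := ident_measure hA hN1 GG hu
  have hNi : Integrable N τ :=
    Integrable.of_bound hNm.aestronglyMeasurable 1 (ae_of_all _ hN1)
  have hleb : ∀ᵐ x ∂τ, Tendsto (fun r : ℝ => ⨍ y in closedBall x r, ‖N y - N x‖ ∂τ)
      (𝓝[>] 0) (𝓝 0) := by
    filter_upwards [(Besicovitch.vitaliFamily τ).ae_tendsto_average_norm_sub
      hNi.locallyIntegrable] with x hx
    exact hx.comp (Besicovitch.tendsto_filterAt τ x)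
  have hSae : ∀ᵐ x ∂τ, x ∈ redBdry A := by
    rw [hτ]; exact ae_restrict_mem hS
  have hm : ∀ m : ℕ, ∀ᵐ x ∂τ, ¬ (x ∈ redBdry A ∧
      Tendsto (fun r : ℝ => ⨍ y in closedBall x r, ‖N y - N x‖ ∂τ) (𝓝[>] 0) (𝓝 0) ∧
      ⟪nuStar A x, N x⟫ ≤ 1 - 1 / ((m : ℝ) + 2)) := by
    intro m
    have hδ : (0:ℝ) < 1 / ((m : ℝ) + 2) := by positivity
    have hδ1 : 1 / ((m : ℝ) + 2) < 1 := by
      rw [div_lt_one (by positivity)]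
      have : (0:ℝ) ≤ m := Nat.cast_nonneg m
      linarith
    generalize 1 / ((m : ℝ) + 2) = δ at hδ hδ1
    rw [ae_iff]
    simp only [not_not]
    set T := {x | x ∈ redBdry A ∧
      Tendsto (fun r : ℝ => ⨍ y in closedBall x r, ‖N y - N x‖ ∂τ) (𝓝[>] 0) (𝓝 0) ∧
      ⟪nuStar A x, N x⟫ ≤ 1 - δ} with hTdef
    have hTS : T ⊆ redBdry A := fun x hx => hx.1
    have h1 := ident_density hA hNm hN1 GG hδ hδ1 hTS (fun x hx => ⟨hx.2.2, hx.2.1⟩)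
    have h2 : τ T = μH[(n : ℝ)] T := by
      rw [hτ, Measure.restrict_apply' hS, inter_eq_left.2 hTS]
    rw [← h2] at h1
    by_contra h0
    have hq : 1 < (1 - δ / 4) / (1 - δ / 2) := by
      rw [lt_div_iff₀ (by linarith)]; linarith
    have hfin := measure_ne_top τ T
    have h3 := ENNReal.toReal_mono hfin h1
    rw [ENNReal.toReal_mul, ENNReal.toReal_ofReal (by linarith)] at h3
    have h4 := ENNReal.toReal_pos h0 hfin
    nlinarith
  filter_upwards [hleb, hSae, ae_all_iff.2 hm] with x hx1 hx2 hx3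
  refine ⟨hx2, ?_⟩
  have hge : 1 ≤ ⟪nuStar A x, N x⟫ := by
    have ht : Tendsto (fun m : ℕ => 1 - 1 / ((m : ℝ) + 2)) atTop (𝓝 (1 - 0)) := by
      refine tendsto_const_nhds.sub ?_
      have := (tendsto_one_div_add_atTop_nhds_zero_nat (𝕜 := ℝ)).comp (tendsto_add_atTop_nat 1)
      refine this.congr fun m => ?_
      simp only [Function.comp]
      push_cast
      ring_nf
    rw [sub_zero] at ht
    refine le_of_tendsto ht (Eventually.of_forall fun m => ?_)
    by_contra hlt
    exact hx3 m ⟨hx2, hx1, (not_le.1 hlt).le⟩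
  have hn1 := (nuStar_spec hx2).1
  have : ‖N x - nuStar A x‖ ^ 2 ≤ 0 := by
    rw [norm_sub_sq_real, hn1, real_inner_comm]
    have := hN1 x
    nlinarith [norm_nonneg (N x)]
  have h0 : ‖N x - nuStar A x‖ = 0 := by
    have := norm_nonneg (N x - nuStar A x)
    nlinarith
  exact sub_eq_zero.1 (norm_eq_zero.1 h0)

lemma vol_conv {n : ℕ} {E : ℕ → Set (Euc n)} {A : Set (Euc n)} (hE : ∀ ℓ, MeasurableSet (E ℓ))
    (hA : MeasurableSet A) (h : Tendsto (fun ℓ => volume (symmDiff (E ℓ) A)) atTop (𝓝 0))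
    {f : Euc n → ℝ} (hf : Integrable f) {K : ℝ} (hK : ∀ x, ‖f x‖ ≤ K) :
    Tendsto (fun ℓ => ∫ x in E ℓ, f x) atTop (𝓝 (∫ x in A, f x)) := by
  rw [tendsto_iff_norm_sub_tendsto_zero]
  have h1 : Tendsto (fun ℓ => K * (volume (symmDiff (E ℓ) A)).toReal) atTop (𝓝 0) := by
    have := ((ENNReal.tendsto_toReal ENNReal.zero_ne_top).comp h).const_mul K
    simpa using this
  have h2 : ∀ᶠ ℓ in atTop, volume (symmDiff (E ℓ) A) < 1 :=
    h.eventually_lt_const (by norm_num)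
  refine squeeze_zero' (Eventually.of_forall fun ℓ => norm_nonneg _) ?_ h1
  filter_upwards [h2] with ℓ hℓ
  have hS : MeasurableSet (symmDiff (E ℓ) A) := (hE ℓ).symmDiff hA
  rw [← integral_indicator (hE ℓ), ← integral_indicator hA,
    ← integral_sub (hf.indicator (hE ℓ)) (hf.indicator hA)]
  have h3 : ‖∫ x, ((E ℓ).indicator f x - A.indicator f x)‖ ≤
      ∫ x, (symmDiff (E ℓ) A).indicator (fun _ => K) x := by
    refine norm_integral_le_of_norm_le ?_ (ae_of_all _ fun x => ?_)
    · rw [integrable_indicator_iff hS]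
      exact integrableOn_const (hℓ.trans ENNReal.one_lt_top).ne
    · have hKx := hK x
      by_cases a : x ∈ E ℓ <;> by_cases b : x ∈ A <;>
        simp [indicator, mem_symmDiff, a, b] <;> simpa using hKx
  refine h3.trans_eq ?_
  rw [integral_indicator hS, setIntegral_const, smul_eq_mul, mul_comm, measureReal_def]

lemma pair_W {n : ℕ} {μ : Measure (Euc n)} [IsFiniteMeasure μ] {ν X : Euc n → Euc n}
    (hν : AEStronglyMeasurable ν μ) (hν1 : ∀ᵐ x ∂μ, ‖ν x‖ = 1) (hX : Continuous X)
    (hXc : HasCompactSupport X) :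
    Integrable (fun x => ‖ν x - X x‖ ^ 2) μ ∧
    ∫ x, ‖ν x - X x‖ ^ 2 ∂μ = μ.real univ - 2 * (∫ x, ⟪X x, ν x⟫ ∂μ) + ∫ x, ‖X x‖ ^ 2 ∂μ := by
  have i1 : Integrable (fun x => ⟪X x, ν x⟫) μ := by
    refine (hX.integrable_of_hasCompactSupport hXc).norm.mono'
      (hX.aestronglyMeasurable.inner hν) ?_
    filter_upwards [hν1] with x hx
    have := norm_inner_le_norm (𝕜 := ℝ) (X x) (ν x)
    rwa [hx, mul_one] at this
  have i2 : Integrable (fun x => ‖X x‖ ^ 2) μ := by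
    refine Continuous.integrable_of_hasCompactSupport (by fun_prop) ?_
    exact hXc.comp_left (g := fun v => ‖v‖ ^ 2) (by simp)
  have e : (fun x => ‖ν x - X x‖ ^ 2) =ᵐ[μ] fun x => (1 - 2 * ⟪X x, ν x⟫) + ‖X x‖ ^ 2 := by
    filter_upwards [hν1] with x hx
    rw [norm_sub_sq_real, hx, real_inner_comm]; ring
  have i3 : Integrable (fun x => (1 - 2 * ⟪X x, ν x⟫)) μ :=
    (integrable_const _).sub (i1.const_mul 2)
  refine ⟨(integrable_congr e).2 (i3.add i2), ?_⟩
  rw [integral_congr_ae e, integral_add i3 i2, integral_sub (integrable_const _) (i1.const_mul 2),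
    integral_const_mul]
  simp

lemma quad_int {n : ℕ} {μ : Measure (Euc n)} [IsFiniteMeasure μ] {ν : Euc n → Euc n}
    (hν : AEStronglyMeasurable ν μ) {C : ℝ} (hν1 : ∀ᵐ x ∂μ, ‖ν x‖ ≤ C)
    {D : Euc n → Euc n →L[ℝ] Euc n} (hD : Continuous D) {K : ℝ} (hK : ∀ x, ‖D x‖ ≤ K) :
    Integrable (fun x => ⟪D x (ν x), ν x⟫) μ := by
  have hm : AEStronglyMeasurable (fun x => D x (ν x)) μ :=
    ContinuousLinearMap.aestronglyMeasurable_comp₂ (ContinuousLinearMap.id ℝ (Euc n →L[ℝ] Euc n))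
      hD.aestronglyMeasurable hν
  refine Integrable.of_bound (hm.inner hν) (K * C * C) ?_
  filter_upwards [hν1] with x hx
  have hC : 0 ≤ C := (norm_nonneg _).trans hx
  have hK0 : 0 ≤ K := (norm_nonneg _).trans (hK x)
  refine (norm_inner_le_norm _ _).trans ?_
  have : ‖D x (ν x)‖ ≤ K * C := ((D x).le_opNorm _).trans
    (mul_le_mul (hK x) hx (norm_nonneg _) hK0)
  exact mul_le_mul this hx (norm_nonneg _) (by positivity)

lemma pair_E {n : ℕ} {μ : Measure (Euc n)} [IsFiniteMeasure μ] {ν X : Euc n → Euc n}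
    (hν : AEStronglyMeasurable ν μ) (hν1 : ∀ᵐ x ∂μ, ‖ν x‖ = 1) (hX : Continuous X)
    (hXc : HasCompactSupport X)
    {D : Euc n → Euc n →L[ℝ] Euc n} (hD : Continuous D) {K : ℝ} (hK : ∀ x, ‖D x‖ ≤ K)
    {η : ℝ} (hη : 0 < η) :
    |(∫ x, ⟪D x (ν x), ν x⟫ ∂μ) - ∫ x, ⟪D x (X x), X x⟫ ∂μ| ≤
      K * ((1 + η⁻¹) * (∫ x, ‖ν x - X x‖ ^ 2 ∂μ) + η * μ.real univ) := by
  obtain ⟨C, hC⟩ := hXc.exists_bound_of_continuous hX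
  obtain ⟨i0, _⟩ := pair_W hν hν1 hX hXc
  have i1 := quad_int hν (hν1.mono fun x hx => hx.le) hD hK
  have i2 := quad_int hX.aestronglyMeasurable (μ := μ) (ae_of_all _ hC) hD hK
  rw [← integral_sub i1 i2, ← Real.norm_eq_abs]
  have hK0 : 0 ≤ K := (norm_nonneg _).trans (hK 0)
  have i3 : Integrable (fun x => K * ((1 + η⁻¹) * ‖ν x - X x‖ ^ 2 + η)) μ :=
    ((i0.const_mul _).add (integrable_const _)).const_mul _
  refine (norm_integral_le_of_norm_le i3 ?_).trans_eq ?_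
  · filter_upwards [hν1] with x hx
    have e : ⟪D x (ν x), ν x⟫ - ⟪D x (X x), X x⟫ =
        ⟪D x (ν x - X x), ν x⟫ + ⟪D x (ν x), ν x - X x⟫ - ⟪D x (ν x - X x), ν x - X x⟫ := by
      simp only [map_sub, inner_sub_left, inner_sub_right]; ring
    have b : ∀ u v : Euc n, |⟪D x u, v⟫| ≤ K * ‖u‖ * ‖v‖ := fun u v => by
      refine (abs_real_inner_le_norm _ _).trans ?_
      refine mul_le_mul_of_nonneg_right ?_ (norm_nonneg _)
      exact ((D x).le_opNorm u).trans (mul_le_mul_of_nonneg_right (hK x) (norm_nonneg _))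
    have b1 := b (ν x - X x) (ν x)
    have b2 := b (ν x) (ν x - X x)
    have b3 := b (ν x - X x) (ν x - X x)
    rw [hx] at b1 b2
    rw [Real.norm_eq_abs, e]
    have b4 : |⟪D x (ν x - X x), ν x⟫ + ⟪D x (ν x), ν x - X x⟫ - ⟪D x (ν x - X x), ν x - X x⟫|
      ≤ |⟪D x (ν x - X x), ν x⟫| + |⟪D x (ν x), ν x - X x⟫| + |⟪D x (ν x - X x), ν x - X x⟫| :=
      (abs_sub _ _).trans (add_le_add_left (abs_add_le _ _) _)
    refine b4.trans ?_
    generalize ‖ν x - X x‖ = s at *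
    have y : 2 * s ≤ η⁻¹ * s ^ 2 + η := by
      have : 0 ≤ η⁻¹ * (s - η) ^ 2 := by positivity
      have e2 : η⁻¹ * (s - η) ^ 2 = η⁻¹ * s ^ 2 - 2 * s + η := by field_simp; ring
      linarith
    have y2 := mul_le_mul_of_nonneg_left y hK0
    nlinarith
  · rw [integral_const_mul, integral_add (i0.const_mul _) (integrable_const _), integral_const_mul]
    simp [mul_comm]

lemma approx_L2 {n : ℕ} {τ : Measure (Euc n)} [IsFiniteMeasure τ] {N : Euc n → Euc n}
    (hN : MemLp N 2 τ) {ε : ℝ} (hε : 0 < ε) :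
    ∃ X : Euc n → Euc n, ContDiff ℝ (⊤ : ℕ∞) X ∧ HasCompactSupport X ∧
      ∫ x, ‖N x - X x‖ ^ 2 ∂τ ≤ ε := by
  obtain ⟨X, hXc, hX, hle⟩ := hN.exist_eLpNorm_sub_le (by norm_num) (by norm_num)
    (ε := Real.sqrt ε) (Real.sqrt_pos.2 hε)
  refine ⟨X, hX, hXc, ?_⟩
  have hm : MemLp (N - X) 2 τ := hN.sub (hX.continuous.memLp_of_hasCompactSupport hXc)
  rw [hm.eLpNorm_eq_integral_rpow_norm (by norm_num) (by norm_num)] at hle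
  have h1 := (ENNReal.ofReal_le_ofReal_iff (Real.sqrt_nonneg _)).1 hle
  have e : ∫ x, ‖(N - X) x‖ ^ (2 : ℝ≥0∞).toReal ∂τ = ∫ x, ‖N x - X x‖ ^ 2 ∂τ := by
    simp
  rw [e, ENNReal.toReal_ofNat, ← one_div, ← Real.sqrt_eq_rpow] at h1
  exact (Real.sqrt_le_sqrt_iff hε.le).1 h1

theorem reshetnyak {n : ℕ} {F : Filter ℕ} {σ : ℕ → Measure (Euc n)} [∀ ℓ, IsFiniteMeasure (σ ℓ)]
    {ν : ℕ → Euc n → Euc n} (hν : ∀ ℓ, AEStronglyMeasurable (ν ℓ) (σ ℓ))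
    (hν1 : ∀ ℓ, ∀ᵐ x ∂(σ ℓ), ‖ν ℓ x‖ = 1)
    {τ : Measure (Euc n)} [IsFiniteMeasure τ] {N : Euc n → Euc n}
    (hN : AEStronglyMeasurable N τ) (hN1 : ∀ᵐ x ∂τ, ‖N x‖ = 1)
    (hw : ∀ g : Euc n → ℝ, Continuous g → (∃ K, ∀ x, |g x| ≤ K) →
      Tendsto (fun ℓ => ∫ x, g x ∂σ ℓ) F (𝓝 (∫ x, g x ∂τ)))
    (hv : ∀ X : Euc n → Euc n, ContDiff ℝ (⊤ : ℕ∞) X → HasCompactSupport X →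
      Tendsto (fun ℓ => ∫ x, ⟪X x, ν ℓ x⟫ ∂σ ℓ) F (𝓝 (∫ x, ⟪X x, N x⟫ ∂τ)))
    {D : Euc n → Euc n →L[ℝ] Euc n} (hD : Continuous D) {K : ℝ} (hK : ∀ x, ‖D x‖ ≤ K) :
    Tendsto (fun ℓ => ∫ x, ⟪D x (ν ℓ x), ν ℓ x⟫ ∂σ ℓ) F (𝓝 (∫ x, ⟪D x (N x), N x⟫ ∂τ)) := by
  rw [Metric.tendsto_nhds]
  intro ε hε
  have hK0 : 0 ≤ K := (norm_nonneg _).trans (hK 0)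
  have hm0 : 0 ≤ τ.real univ := measureReal_nonneg
  obtain ⟨η, hη, hη2⟩ : ∃ η : ℝ, 0 < η ∧ K * (η * τ.real univ) < ε / 8 := by
    refine ⟨ε / (8 * (K * τ.real univ + 1)), by positivity, ?_⟩
    have hp : 0 < K * τ.real univ + 1 := by positivity
    have : K * (ε / (8 * (K * τ.real univ + 1)) * τ.real univ) =
      (ε / 8) * (K * τ.real univ / (K * τ.real univ + 1)) := by field_simp
    rw [this]
    have : K * τ.real univ / (K * τ.real univ + 1) < 1 := by
      rw [div_lt_one hp]; linarith
    nlinarith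
  have hL : MemLp N 2 τ := MemLp.of_bound hN 1 (hN1.mono fun x hx => hx.le)
  obtain ⟨X, hX, hXc, hW0⟩ := approx_L2 hL (ε := ε / (8 * (K + 1) * (1 + η⁻¹))) (by positivity)
  have hXC := hX.continuous
  obtain ⟨C, hC⟩ := hXc.exists_bound_of_continuous hXC
  have hC0 : 0 ≤ C := (norm_nonneg _).trans (hC 0)
  obtain ⟨_, eW⟩ := pair_W hN hN1 hXC hXc
  have hE0 := pair_E hN hN1 hXC hXc hD hK hη
  set W0 := ∫ x, ‖N x - X x‖ ^ 2 ∂τ with hW0d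
  have hb0 : K * ((1 + η⁻¹) * W0 + η * τ.real univ) < ε / 4 := by
    have h1 : K * ((1 + η⁻¹) * W0) ≤ ε / 8 := by
      have h2 : K * ((1 + η⁻¹) * W0) ≤ (K + 1) * ((1 + η⁻¹) * (ε / (8 * (K + 1) * (1 + η⁻¹)))) := by
        have : 0 ≤ W0 := integral_nonneg fun x => by positivity
        gcongr
        linarith
      refine h2.trans_eq ?_
      field_simp
    rw [mul_add]; linarith
  have t1 : Tendsto (fun ℓ => (σ ℓ).real univ) F (𝓝 (τ.real univ)) := by
    have := hw (fun _ => 1) continuous_const ⟨1, by simp⟩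
    simpa using this
  have t2 : Tendsto (fun ℓ => ∫ x, ‖X x‖ ^ 2 ∂σ ℓ) F (𝓝 (∫ x, ‖X x‖ ^ 2 ∂τ)) := by
    refine hw _ (by fun_prop) ⟨C ^ 2, fun x => ?_⟩
    rw [abs_of_nonneg (by positivity)]
    exact pow_le_pow_left₀ (norm_nonneg _) (hC x) 2
  have t3 : Tendsto (fun ℓ => ∫ x, ‖ν ℓ x - X x‖ ^ 2 ∂σ ℓ) F (𝓝 W0) := by
    rw [eW]
    refine ((t1.sub ((hv X hX hXc).const_mul 2)).add t2).congr fun ℓ => ?_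
    exact (pair_W (hν ℓ) (hν1 ℓ) hXC hXc).2.symm
  have t4 : Tendsto (fun ℓ => ∫ x, ⟪D x (X x), X x⟫ ∂σ ℓ) F (𝓝 (∫ x, ⟪D x (X x), X x⟫ ∂τ)) := by
    refine hw _ (by fun_prop) ⟨K * C * C, fun x => ?_⟩
    refine (abs_real_inner_le_norm _ _).trans ?_
    have : ‖D x (X x)‖ ≤ K * C := ((D x).le_opNorm _).trans
      (mul_le_mul (hK x) (hC x) (norm_nonneg _) hK0)
    exact mul_le_mul this (hC x) (norm_nonneg _) (by positivity)
  have t5 : Tendsto (fun ℓ => K * ((1 + η⁻¹) * (∫ x, ‖ν ℓ x - X x‖ ^ 2 ∂σ ℓ) + η * (σ ℓ).real univ)) F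
      (𝓝 (K * ((1 + η⁻¹) * W0 + η * τ.real univ))) :=
    ((t3.const_mul _).add (t1.const_mul _)).const_mul _
  filter_upwards [t5.eventually_lt_const hb0, (Metric.tendsto_nhds.1 t4) (ε / 4) (by linarith)]
    with ℓ h5 h4
  have hEl := pair_E (hν ℓ) (hν1 ℓ) hXC hXc hD hK hη
  rw [Real.dist_eq] at h4 ⊢
  rw [abs_lt] at *
  rw [abs_le] at hEl hE0
  constructor <;> linarith [hEl.1, hEl.2, hE0.1, hE0.2, h4.1, h4.2]

namespace C2Domain
variable {n : ℕ} (D : C2Domain n)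

/-- The part of the boundary where the mean curvature is at least `M`. -/
def hiSet (M : ℝ) : Set (Euc n) := {x ∈ frontier D.carrier | M ≤ D.H 1 x}

lemma hiSet_meas (M : ℝ) : MeasurableSet (D.hiSet M) :=
  (D.H_cont.preimage_isClosed_of_isClosed isClosed_frontier (isClosed_Ici (a := M))).measurableSet

lemma negp_int : Integrable (fun x => negp (D.H 1 x)) D.sg := by
  refine D.H_int.mono ?_ (ae_of_all _ fun x => ?_)
  · exact (D.H_meas.inf aestronglyMeasurable_const).neg
  · simp only [negp, Real.norm_eq_abs]
    rcases le_total (D.H 1 x) 0 with h | h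
    · rw [min_eq_left h, abs_neg]
    · rw [min_eq_right h]; simp

lemma H_bound {M : ℝ} (hM : 0 ≤ M) {g : Euc n → Euc n} (hg : Continuous g)
    (hgc : HasCompactSupport g) {K : ℝ} (hK : ∀ x, ‖g x‖ ≤ K) :
    |∫ x, D.H 1 x * ⟪g x, D.nu x⟫ ∂D.sg| ≤ M * (∫ x, ‖g x‖ ∂D.sg) +
      K * ((∫ x in D.hiSet M, |D.H 1 x| ∂D.sg) + ∫ x, negp (D.H 1 x) ∂D.sg) := by
  have hm := D.hiSet_meas M
  have i1 : Integrable (fun x => ‖g x‖) D.sg := (hg.integrable_of_hasCompactSupport hgc).norm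
  have i2 : Integrable (fun x => (D.hiSet M).indicator (fun x => |D.H 1 x|) x) D.sg :=
    D.H_int.abs.indicator hm
  have i3 := D.negp_int
  have hK0 : 0 ≤ K := (norm_nonneg _).trans (hK 0)
  rw [← Real.norm_eq_abs]
  refine (norm_integral_le_of_norm_le
    ((i1.const_mul M).add ((i2.add i3).const_mul K)) ?_).trans_eq ?_
  · filter_upwards [D.ae_frontier] with x hx
    simp only [Pi.add_apply]
    have h1 : ‖D.H 1 x * ⟪g x, D.nu x⟫‖ ≤ |D.H 1 x| * ‖g x‖ := by
      rw [norm_mul, Real.norm_eq_abs]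
      refine mul_le_mul_of_nonneg_left ?_ (abs_nonneg _)
      have := norm_inner_le_norm (𝕜 := ℝ) (g x) (D.nu x)
      rwa [D.nu_norm hx, mul_one] at this
    refine h1.trans ?_
    have hneg : 0 ≤ negp (D.H 1 x) := by
      simp [negp]
    have hind : 0 ≤ (D.hiSet M).indicator (fun x => |D.H 1 x|) x :=
      indicator_nonneg (fun _ _ => abs_nonneg _) x
    have h2 : |D.H 1 x| ≤ M + ((D.hiSet M).indicator (fun x => |D.H 1 x|) x + negp (D.H 1 x)) := by
      by_cases h : M ≤ D.H 1 x
      · have : x ∈ D.hiSet M := ⟨hx, h⟩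
        rw [indicator_of_mem this]; linarith
      · rcases le_total (D.H 1 x) 0 with h0 | h0
        · have : negp (D.H 1 x) = |D.H 1 x| := by
            rw [negp, min_eq_left h0, abs_of_nonpos h0]
          linarith
        · rw [abs_of_nonneg h0]
          push Not at h
          linarith
    have h3 := mul_le_mul_of_nonneg_right h2 (norm_nonneg (g x))
    have h4 := mul_le_mul_of_nonneg_left (hK x) (add_nonneg hind hneg)
    linarith
  · rw [integral_add' (i1.const_mul M) ((i2.add i3).const_mul K), integral_const_mul,
      integral_const_mul]
    congr 2
    rw [← integral_indicator hm]
    exact integral_add i2 i3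

end C2Domain

lemma hi_tendsto {n : ℕ} (hn : 2 ≤ n) (Ω : ℕ → C2Domain n) {c : ℝ≥0∞} (hct : c < ⊤)
    (hc : ∀ ℓ, (∫⁻ x in frontier (Ω ℓ).carrier, ENNReal.ofReal ((Ω ℓ).A x ^ n) ∂μH[(n : ℝ)]) ≤ c)
    {M : ℝ} (hsmall : Tendsto (fun ℓ : ℕ =>
        μH[(n : ℝ)] {x ∈ frontier (Ω ℓ).carrier | M ≤ (Ω ℓ).H 1 x}) atTop (𝓝 0)) :
    Tendsto (fun ℓ => ∫ x in (Ω ℓ).hiSet M, |(Ω ℓ).H 1 x| ∂(Ω ℓ).sg) atTop (𝓝 0) := by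
  have hs : Tendsto (fun ℓ => (Ω ℓ).sg.real ((Ω ℓ).hiSet M)) atTop (𝓝 0) := by
    have := (ENNReal.tendsto_toReal ENNReal.zero_ne_top).comp hsmall
    rw [ENNReal.toReal_zero] at this
    refine this.congr fun ℓ => ?_
    simp only [Function.comp, measureReal_def, C2Domain.sg]
    rw [Measure.restrict_eq_self]
    · rfl
    · exact fun x hx => hx.1
  rw [Metric.tendsto_nhds]
  intro ε hε
  have hc0 : 0 ≤ c.toReal := ENNReal.toReal_nonneg
  obtain ⟨t, ht1, ht⟩ : ∃ t : ℝ, 1 ≤ t ∧ n * t⁻¹ * c.toReal < ε / 2 := by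
    have h1 : Tendsto (fun t : ℝ => n * t⁻¹ * c.toReal) atTop (𝓝 (n * 0 * c.toReal)) :=
      (tendsto_inv_atTop_zero.const_mul _).mul_const _
    rw [mul_zero, zero_mul] at h1
    obtain ⟨t, h2, h3⟩ := ((eventually_ge_atTop 1).and
      (h1.eventually_lt_const (show 0 < ε / 2 by linarith))).exists
    exact ⟨t, h2, h3⟩
  have ht0 : 0 < t := by linarith
  have hi : n * (t ^ (n - 1))⁻¹ * c.toReal ≤ n * t⁻¹ * c.toReal := by
    have : t ≤ t ^ (n - 1) := le_self_pow₀ ht1 (by omega)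
    gcongr
  have h2 : Tendsto (fun ℓ => n * t * (Ω ℓ).sg.real ((Ω ℓ).hiSet M)) atTop (𝓝 0) := by
    simpa using hs.const_mul (n * t)
  filter_upwards [h2.eventually_lt_const (show 0 < ε / 2 by linarith)] with ℓ hℓ
  have h3 := (Ω ℓ).H_bint (by omega) hct (hc ℓ) ht0 ((Ω ℓ).hiSet M)
  rw [Real.dist_eq, sub_zero, abs_of_nonneg (integral_nonneg fun x => abs_nonneg _)]
  linarith

lemma neg_tendsto {n : ℕ} (Ω : ℕ → C2Domain n) (h : Tendsto (fun ℓ : ℕ =>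
        ∫⁻ x in frontier (Ω ℓ).carrier, ENNReal.ofReal (negp ((Ω ℓ).H 1 x)) ∂μH[(n : ℝ)])
      atTop (𝓝 0)) :
    Tendsto (fun ℓ => ∫ x, negp ((Ω ℓ).H 1 x) ∂(Ω ℓ).sg) atTop (𝓝 0) := by
  have := (ENNReal.tendsto_toReal ENNReal.zero_ne_top).comp h
  rw [ENNReal.toReal_zero] at this
  refine this.congr fun ℓ => ?_
  rw [integral_eq_lintegral_of_nonneg_ae (ae_of_all _ fun x => by simp [negp])
    (Ω ℓ).negp_int.aestronglyMeasurable]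
  rfl

lemma divg_smul_real {n : ℕ} {X : Euc n → Euc n} (hX : Differentiable ℝ X) (a : ℝ) (x : Euc n) :
    divg (a • X) x = a * divg X x := by
  unfold divg
  rw [fderiv_const_smul (hX x), Finset.mul_sum]
  refine Finset.sum_congr rfl fun i _ => ?_
  simp only [ContinuousLinearMap.smul_apply, real_inner_smul_left]

/-- The Gauss-Green functional. -/
def ggL {n : ℕ} (A : Set (Euc n)) : TF n →ₗ[ℝ] ℝ where
  toFun X := (kap n : ℝ) * ∫ x in A, divg X.1 x
  map_add' X Y := by
    have dX : Differentiable ℝ X.1 := X.2.1.differentiable (by simp)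
    have dY : Differentiable ℝ Y.1 := Y.2.1.differentiable (by simp)
    have iX : Integrable (divg X.1) := (divg_continuous (X.2.1.of_le (by norm_cast))).integrable_of_hasCompactSupport (divg_compact X.2.2)
    have iY : Integrable (divg Y.1) := (divg_continuous (Y.2.1.of_le (by norm_cast))).integrable_of_hasCompactSupport (divg_compact Y.2.2)
    rw [← mul_add, ← integral_add iX.integrableOn iY.integrableOn]
    congr 1
    refine integral_congr_ae (ae_of_all _ fun x => ?_)
    exact divg_add (dX x) (dY x)
  map_smul' a X := by
    have dX : Differentiable ℝ X.1 := X.2.1.differentiable (by simp)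
    have : ∀ x, divg (a • X : TF n).1 x = a * divg X.1 x := fun x => divg_smul_real dX a x
    simp only [this, integral_const_mul, RingHom.id_apply, smul_eq_mul]
    ring

/-- The first variation functional with respect to a unit field. -/
def fvL {n : ℕ} (τ : Measure (Euc n)) [IsFiniteMeasure τ] (N : Euc n → Euc n)
    (hN : StronglyMeasurable N) (hN1 : ∀ x, ‖N x‖ ≤ 1) : TF n →ₗ[ℝ] ℝ where
  toFun X := ∫ x, (divg X.1 x - ⟪fderiv ℝ X.1 x (N x), N x⟫) ∂τ
  map_add' X Y := by
    have dX : Differentiable ℝ X.1 := X.2.1.differentiable (by simp)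
    have dY : Differentiable ℝ Y.1 := Y.2.1.differentiable (by simp)
    have hi : ∀ X : TF n, Integrable (fun x => divg X.1 x - ⟪fderiv ℝ X.1 x (N x), N x⟫) τ := by
      intro X
      have h1 : ContDiff ℝ 1 X.1 := X.2.1.of_le (by norm_cast)
      have hc := h1.continuous_fderiv (by norm_num)
      obtain ⟨K, hK⟩ := (X.2.2.fderiv (𝕜 := ℝ)).exists_bound_of_continuous hc
      exact ((divg_continuous h1).integrable_of_hasCompactSupport (divg_compact X.2.2)).sub
        (quad_int hN.aestronglyMeasurable (ae_of_all _ hN1) hc hK)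
    rw [← integral_add (hi X) (hi Y)]
    refine integral_congr_ae (ae_of_all _ fun x => ?_)
    have e1 : divg (X + Y : TF n).1 x = divg X.1 x + divg Y.1 x := divg_add (dX x) (dY x)
    have e2 : fderiv ℝ (X + Y : TF n).1 x = fderiv ℝ X.1 x + fderiv ℝ Y.1 x :=
      fderiv_add (dX x) (dY x)
    simp only [e1, e2, ContinuousLinearMap.add_apply, inner_add_left]
    ring
  map_smul' a X := by
    have dX : Differentiable ℝ X.1 := X.2.1.differentiable (by simp)
    rw [RingHom.id_apply, smul_eq_mul, ← integral_const_mul]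
    refine integral_congr_ae (ae_of_all _ fun x => ?_)
    have e1 : divg (a • X : TF n).1 x = a * divg X.1 x := divg_smul_real dX a x
    have e2 : fderiv ℝ (a • X : TF n).1 x = a • fderiv ℝ X.1 x := fderiv_const_smul (dX x) a
    simp only [e1, e2, ContinuousLinearMap.smul_apply, real_inner_smul_left]
    ring

theorem main_aux {n : ℕ} (hn : 2 ≤ n)
    (k : ℕ) (hk2 : 2 ≤ k)
    (Ω : ℕ → C2Domain n) (Om : Set (Euc n)) (hOm : MeasurableSet Om)
    (hcs : CompactlySupportedSeq Ω)
    (hconvex : AsympMeanConvex Ω (k - 1))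
    (hftc : FiniteTotalCurvature Ω)
    (hvol : ConvInVolume Ω Om) (hper : ConvInPerimeter Ω Om)
    (M : ℝ) (hM : 0 < M)
    (hsmall : Tendsto (fun ℓ : ℕ =>
        μH[(n : ℝ)] {x ∈ frontier (Ω ℓ).carrier | M ≤ (Ω ℓ).H 1 x}) atTop (nhds 0)) :
    (∀ g : Euc n → Euc n, ContDiff ℝ (⊤ : ℕ∞) g → HasCompactSupport g →
      |firstVar Om g| ≤ M * ∫ x in redBdry Om, ‖g x‖ ∂μH[(n : ℝ)]) ∧
    ∃ h : Euc n → Euc n,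
      (∀ᵐ x ∂(μH[(n : ℝ)].restrict (redBdry Om)), ‖h x‖ ≤ M) ∧
      ∀ X : Euc n → Euc n, ContDiff ℝ (⊤ : ℕ∞) X → HasCompactSupport X →
        firstVar Om X = ∫ x in redBdry Om, ⟪h x, X x⟫ ∂μH[(n : ℝ)] := by
  obtain ⟨R', hR'⟩ := hcs
  obtain ⟨c, hct, hc⟩ := hftc
  obtain ⟨R, hR0, hR⟩ : ∃ R : ℝ, 0 < R ∧ ∀ ℓ, (Ω ℓ).carrier ⊆ ball (0 : Euc n) R :=
    ⟨max R' 1, by positivity, fun ℓ => (hR' ℓ).trans (ball_subset_ball (le_max_left _ _))⟩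
  have hmass : ∀ ℓ, (Ω ℓ).sg.real univ ≤ (2 * R) ^ n * c.toReal := fun ℓ =>
    (Ω ℓ).mass_bound (by omega) hct (hc ℓ) hR0 (hR ℓ)
  have hsupp : ∀ ℓ, (Ω ℓ).sg (closedBall (0 : Euc n) R)ᶜ = 0 := by
    intro ℓ
    rw [C2Domain.sg, Measure.restrict_apply measurableSet_closedBall.compl]
    convert measure_empty (μ := μH[(n : ℝ)]) (α := Euc n)
    ext x
    simp only [mem_inter_iff, mem_compl_iff, mem_empty_iff_false, iff_false, not_and, not_not]
    intro h1 h2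
    exact h1 (closure_ball_subset_closedBall (closure_mono (hR ℓ) (frontier_subset_closure h2)))
  let F : Ultrafilter ℕ := Ultrafilter.of atTop
  have hF : (F : Filter ℕ) ≤ atTop := Ultrafilter.of_le _
  obtain ⟨τ, hτfin, hw⟩ := weak_limit F (fun ℓ => (Ω ℓ).sg) hmass hsupp
  -- total mass
  have huniv : ∀ ℓ, (Ω ℓ).sg univ = μH[(n : ℝ)] (frontier (Ω ℓ).carrier) := fun ℓ => by
    rw [C2Domain.sg, Measure.restrict_apply_univ]
  have hfin : μH[(n : ℝ)] (redBdry Om) ≠ ⊤ := by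
    have : μH[(n : ℝ)] (redBdry Om) ≤ ENNReal.ofReal ((2 * R) ^ n * c.toReal) := by
      refine le_of_tendsto hper (Eventually.of_forall fun ℓ => ?_)
      rw [← huniv, ← ofReal_measureReal]
      exact ENNReal.ofReal_le_ofReal (hmass ℓ)
    exact (this.trans_lt ENNReal.ofReal_lt_top).ne
  have hu : τ univ = μH[(n : ℝ)] (redBdry Om) := by
    have h1 := hw (fun _ => 1) continuous_const ⟨1, by simp⟩
    have h2 : Tendsto (fun ℓ => (Ω ℓ).sg.real univ) F (𝓝 (μH[(n : ℝ)] (redBdry Om)).toReal) := by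
      refine (((ENNReal.tendsto_toReal hfin).comp hper).mono_left hF).congr fun ℓ => ?_
      simp only [Function.comp, measureReal_def, huniv]
    have h3 : Tendsto (fun ℓ => (Ω ℓ).sg.real univ) F (𝓝 (τ.real univ)) := by
      simpa using h1
    have h4 := tendsto_nhds_unique h3 h2
    exact (ENNReal.toReal_eq_toReal_iff' (measure_ne_top _ _) hfin).1 h4
  -- Gauss-Green in the limit
  have hgl : ∀ X : Euc n → Euc n, ContDiff ℝ (⊤ : ℕ∞) X → HasCompactSupport X →
      Tendsto (fun ℓ => ∫ x, ⟪X x, (Ω ℓ).nu x⟫ ∂(Ω ℓ).sg) F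
        (𝓝 ((kap n : ℝ) * ∫ x in Om, divg X x)) := by
    intro X hX hXc
    have h1 : ContDiff ℝ 1 X := hX.of_le (by norm_cast)
    have hdc := divg_continuous h1
    obtain ⟨K, hK⟩ := (divg_compact hXc).exists_bound_of_continuous hdc
    have h2 := (vol_conv (fun ℓ => (Ω ℓ).isOpen.measurableSet) hOm hvol
      (hdc.integrable_of_hasCompactSupport (divg_compact hXc)) hK).const_mul (kap n : ℝ)
    refine (h2.mono_left hF).congr fun ℓ => ?_
    exact (Ω ℓ).GG h1 hXc
  have hnorm : ∀ X : Euc n → Euc n, Continuous X → HasCompactSupport X →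
      Tendsto (fun ℓ => ∫ x, ‖X x‖ ∂(Ω ℓ).sg) F (𝓝 (∫ x, ‖X x‖ ∂τ)) := by
    intro X hX hXc
    obtain ⟨K, hK⟩ := hXc.exists_bound_of_continuous hX
    exact hw _ hX.norm ⟨K, fun x => by rw [abs_norm]; exact hK x⟩
  obtain ⟨N, hNm, hN1, hN⟩ := riesz_bdd τ zero_le_one (ggL Om) (by
    intro X
    rw [one_mul]
    refine le_of_tendsto_of_tendsto (hgl X.1 X.2.1 X.2.2).abs
      (hnorm X.1 X.2.1.continuous X.2.2) (Eventually.of_forall fun ℓ => ?_)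
    have i1 : Integrable (fun x => ‖X.1 x‖) (Ω ℓ).sg :=
      (X.2.1.continuous.integrable_of_hasCompactSupport X.2.2).norm
    beta_reduce
    rw [← Real.norm_eq_abs]
    refine norm_integral_le_of_norm_le i1 ?_
    filter_upwards [(Ω ℓ).ae_frontier] with x hx
    have := norm_inner_le_norm (𝕜 := ℝ) (X.1 x) ((Ω ℓ).nu x)
    rwa [(Ω ℓ).nu_norm hx, mul_one] at this)
  have GG : ∀ X : Euc n → Euc n, ContDiff ℝ (⊤ : ℕ∞) X → HasCompactSupport X →
      (kap n : ℝ) * ∫ x in Om, divg X x = ∫ x, ⟪X x, N x⟫ ∂τ := by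
    intro X hX hXc
    have h1 : (kap n : ℝ) * ∫ x in Om, divg X x = ∫ x, ⟪N x, X x⟫ ∂τ := hN ⟨X, hX, hXc⟩
    rw [h1]
    exact integral_congr_ae (ae_of_all _ fun x => real_inner_comm _ _)
  have hτ := ident_measure hOm hN1 GG hu
  have hid := ident_normal hOm hNm hN1 GG hu
  have hNu : ∀ᵐ x ∂τ, ‖N x‖ = 1 := by
    filter_upwards [hid] with x hx
    rw [hx.2]; exact (nuStar_spec hx.1).1
  have hfv : ∀ g : Euc n → Euc n, firstVar Om g =
      ∫ x, (divg g x - ⟪fderiv ℝ g x (N x), N x⟫) ∂τ := by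
    intro g
    rw [firstVar, ← hτ]
    refine integral_congr_ae ?_
    filter_upwards [hid] with x hx
    rw [hx.2]
  have hbound : ∀ g : Euc n → Euc n, ContDiff ℝ (⊤ : ℕ∞) g → HasCompactSupport g →
      |firstVar Om g| ≤ M * ∫ x, ‖g x‖ ∂τ := by
    intro g hg hgc
    have h1 : ContDiff ℝ 1 g := hg.of_le (by norm_cast)
    have hdc := divg_continuous h1
    have hfc := h1.continuous_fderiv (by norm_num)
    obtain ⟨K1, hK1⟩ := (divg_compact hgc).exists_bound_of_continuous hdc
    obtain ⟨K2, hK2⟩ := (hgc.fderiv (𝕜 := ℝ)).exists_bound_of_continuous hfc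
    obtain ⟨K, hK⟩ := hgc.exists_bound_of_continuous hg.continuous
    have t1 := hw _ hdc ⟨K1, hK1⟩
    have t2 := reshetnyak (F := (F : Filter ℕ)) (σ := fun ℓ => (Ω ℓ).sg) (ν := fun ℓ => (Ω ℓ).nu)
      (fun ℓ => (Ω ℓ).nu_meas)
      (fun ℓ => (Ω ℓ).ae_frontier.mono fun x hx => (Ω ℓ).nu_norm hx)
      hNm.aestronglyMeasurable hNu hw
      (fun X hX hXc => by rw [← GG X hX hXc]; exact hgl X hX hXc) hfc hK2
    have t3 : Tendsto (fun ℓ => ∫ x, (Ω ℓ).H 1 x * ⟪g x, (Ω ℓ).nu x⟫ ∂(Ω ℓ).sg) F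
        (𝓝 (firstVar Om g)) := by
      rw [hfv g, integral_sub (hdc.integrable_of_hasCompactSupport (divg_compact hgc))
        (quad_int hNm.aestronglyMeasurable (ae_of_all _ hN1) hfc hK2)]
      refine (t1.sub t2).congr fun ℓ => ?_
      rw [← (Ω ℓ).fv h1 hgc, integral_sub (hdc.integrable_of_hasCompactSupport (divg_compact hgc))]
      exact quad_int (Ω ℓ).nu_meas
        ((Ω ℓ).ae_frontier.mono fun x hx => ((Ω ℓ).nu_norm hx).le) hfc hK2
    have t4 := hi_tendsto hn Ω hct hc hsmall
    have t5 := neg_tendsto Ω (hconvex 1 (Finset.mem_Icc.2 ⟨le_rfl, by omega⟩))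
    have t6 : Tendsto (fun ℓ => M * (∫ x, ‖g x‖ ∂(Ω ℓ).sg) +
        K * ((∫ x in (Ω ℓ).hiSet M, |(Ω ℓ).H 1 x| ∂(Ω ℓ).sg) +
          ∫ x, negp ((Ω ℓ).H 1 x) ∂(Ω ℓ).sg)) F (𝓝 (M * ∫ x, ‖g x‖ ∂τ)) := by
      have := ((hnorm g hg.continuous hgc).const_mul M).add
        (((t4.mono_left hF).add (t5.mono_left hF)).const_mul K)
      simpa using this
    exact le_of_tendsto_of_tendsto t3.abs t6 (Eventually.of_forall fun ℓ =>
      (Ω ℓ).H_bound hM.le hg.continuous hgc hK)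
  refine ⟨fun g hg hgc => ?_, ?_⟩
  · rw [← hτ]; exact hbound g hg hgc
  · obtain ⟨h, _, hh1, hh2⟩ := riesz_bdd τ hM.le (fvL τ N hNm hN1) (by
      intro X
      have := hbound X.1 X.2.1 X.2.2
      rw [hfv] at this
      exact this)
    refine ⟨h, ae_of_all _ hh1, fun X hX hXc => ?_⟩
    rw [hfv, ← hτ]
    exact hh2 ⟨X, hX, hXc⟩

/-- **The limit varifold has bounded mean curvature** (first part of the proof of the
main theorem). In the setting of the main theorem (without the assumption on the `k`-th
mean curvatures), the varifold `V_Ω` associated with the reduced boundary of the limit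
set `Ω` satisfies `|δV_Ω(g)| ≤ M ∫_{∂*Ω} |g| dH^n` for every smooth compactly supported
vector field `g`; hence it has bounded mean curvature `h = h(V_Ω,·)` with `|h| ≤ M`
`H^n`-a.e. on `∂*Ω`. -/
theorem limit_varifold_bounded_mean_curvature {n : ℕ} (hn : 2 ≤ n)
    (k : ℕ) (hk2 : 2 ≤ k) (hkn : k ≤ n)
    (Ω : ℕ → C2Domain n) (Om : Set (Euc n)) (hOm : MeasurableSet Om)
    (hpos : 0 < volume Om)
    (hcs : CompactlySupportedSeq Ω)
    (hconvex : AsympMeanConvex Ω (k - 1))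
    (hftc : FiniteTotalCurvature Ω)
    (hvol : ConvInVolume Ω Om) (hper : ConvInPerimeter Ω Om)
    (M : ℝ) (hM : 0 < M)
    (hsmall : Tendsto (fun ℓ : ℕ =>
        μH[(n : ℝ)] {x ∈ frontier (Ω ℓ).carrier | M ≤ (Ω ℓ).H 1 x}) atTop (nhds 0)) :
    (∀ g : Euc n → Euc n, ContDiff ℝ (⊤ : ℕ∞) g → HasCompactSupport g →
      |firstVar Om g| ≤ M * ∫ x in redBdry Om, ‖g x‖ ∂μH[(n : ℝ)]) ∧
    ∃ h : Euc n → Euc n,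
      (∀ᵐ x ∂(μH[(n : ℝ)].restrict (redBdry Om)), ‖h x‖ ≤ M) ∧
      ∀ X : Euc n → Euc n, ContDiff ℝ (⊤ : ℕ∞) X → HasCompactSupport X →
        firstVar Om X = ∫ x in redBdry Om, ⟪h x, X x⟫ ∂μH[(n : ℝ)] := by
  exact main_aux hn k hk2 Ω Om hOm hcs hconvex hftc hvol hper M hM hsmall

end
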